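/- arXiv:1912.00322 — 3 statements merged into one kernel-verified Lean document; each statement's English description precedes it below -/
import Mathlib

section
/- Let G be a connected r-regular graph that is not a complete graph of odd order. Then G has an IPD. -/
open SimpleGraph

variable {V : Type*} [Fintype V]

/-- P is a set of vertices inducing a path on n vertices in G. -/
def IsInducedPathOn (G : SimpleGraph V) (P : Set V) (n : ℕ) : Prop :=
  Nonempty (G.induce P ≃g pathGraph n)

/-- G has an induced path decomposition into induced paths each of order ≥ 2. -/
def HasIPD (G : SimpleGraph V) : Prop :=
  ∃ D : Set (Set V), Setoid.IsPartition D ∧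
    ∀ P ∈ D, ∃ n, 2 ≤ n ∧ IsInducedPathOn G P n

/-!
Choose a set `S` and a family `F` of disjoint odd sets separated by `S` with `|F| - |S|` maximal
and then `|S|` maximal. By Tutte's theorem each member of `F` is factor-critical, and together
with `S` the members cover the graph. A factor-critical set has a perfect matching after adding a
vertex adjacent to it, so it suffices to match `S` into `F` in such a way that every unmatched
member of `F` splits on its own into induced paths on two or three vertices.

If a factor-critical set `C` does not split in this way, then `G` is diamond-free on `C`, and
every matching of `C` missing one vertex matches all but at most one vertex of each maximal clique
of `C` inside that clique. As `C` contains no clique on `r + 1` vertices, it spans at most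
`r (|C| - 1) / 2` edges, so it sends at least `r` edges to `S`. Each vertex of `S` receives at
most `r` edges, which gives Hall's condition for these members; the maximality of `|F| - |S|`
gives Hall's condition for `S`.
-/

section ShortIPD

variable {α : Type*} {G : SimpleGraph α} {X : Finset α} {x y z : α}

theorem isInducedPathOn_pair (hxy : G.Adj x y) : IsInducedPathOn G {x, y} 2 := by
  have hinj : Function.Injective ![x, y] := by
    simpa [Function.Injective, Fin.forall_fin_two, hxy.ne] using hxy.ne'
  let e : pathGraph 2 ↪g G := ⟨⟨![x, y], hinj⟩, by
    simp [Fin.forall_fin_two, pathGraph_adj, hxy, hxy.symm]⟩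
  have hrange : Set.range e = {x, y} := Matrix.range_cons_cons_empty x y ![]
  exact hrange ▸ ⟨e.isoInduceRange.symm⟩

theorem isInducedPathOn_triple (hxy : G.Adj x y) (hyz : G.Adj y z) (hxz : ¬G.Adj x z)
    (hne : x ≠ z) : IsInducedPathOn G {x, y, z} 3 := by
  have hinj : Function.Injective ![x, y, z] := by
    simp [Function.Injective, Fin.forall_fin_succ, hxy.ne, hxy.ne', hyz.ne, hyz.ne', hne, hne.symm]
  let e : pathGraph 3 ↪g G := ⟨⟨![x, y, z], hinj⟩, by
    simp [Fin.forall_fin_succ, pathGraph_adj, hxy, hxy.symm, hyz, hyz.symm, hxz,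
      G.adj_comm z x]⟩
  have hrange : Set.range e = {x, y, z} := by
    rw [show ⇑e = ![x, y, z] from rfl, Matrix.range_cons, Matrix.range_cons_cons_empty,
      Set.singleton_union]
  exact hrange ▸ ⟨e.isoInduceRange.symm⟩

variable [DecidableEq α]

/-- `X` can be partitioned into sets inducing paths on two or three vertices of `G`. Every induced
path of order at least two splits into such paths, so nothing is lost by restricting to them. -/
def HasShortIPD (G : SimpleGraph α) (X : Finset α) : Prop :=
  ∃ P : Finpartition X, ∀ p ∈ P.parts, IsInducedPathOn G p 2 ∨ IsInducedPathOn G p 3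

namespace HasShortIPD

theorem hasIPD [Fintype α] (h : HasShortIPD G Finset.univ) : HasIPD G := by
  obtain ⟨P, hP⟩ := h
  refine ⟨(↑) '' (P.parts : Set (Finset α)), ⟨?_, fun a ↦ ?_⟩, ?_⟩
  · rintro ⟨p, hp, hpe⟩
    exact P.empty_notMem_parts (Finset.coe_eq_empty.mp hpe ▸ hp)
  · obtain ⟨p, ⟨hp, hap⟩, huniq⟩ := P.existsUnique_mem (Finset.mem_univ a)
    refine ⟨p, ⟨Set.mem_image_of_mem _ hp, hap⟩, ?_⟩
    rintro _ ⟨⟨q, hq, rfl⟩, haq⟩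
    rw [huniq q ⟨hq, haq⟩]
  · rintro _ ⟨p, hp, rfl⟩
    rcases hP p hp with h2 | h3
    exacts [⟨2, le_rfl, h2⟩, ⟨3, by norm_num, h3⟩]

protected theorem empty : HasShortIPD G ∅ :=
  ⟨Finpartition.empty _, by simp⟩

theorem disjUnion_path {p : Finset α} (h : HasShortIPD G X) (hp : p.Nonempty)
    (hd : Disjoint X p) (hpath : IsInducedPathOn G p 2 ∨ IsInducedPathOn G p 3) :
    HasShortIPD G (X ∪ p) := by
  obtain ⟨P, hP⟩ := h
  refine ⟨P.extend hp.ne_empty hd rfl, fun q hq ↦ ?_⟩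
  obtain rfl | hq := Finset.mem_insert.mp hq
  exacts [hpath, hP q hq]

theorem insert_pair (h : HasShortIPD G (X \ {x, y})) (hx : x ∈ X) (hy : y ∈ X)
    (hxy : G.Adj x y) : HasShortIPD G X := by
  rw [← Finset.sdiff_union_of_subset (show {x, y} ⊆ X by grind)]
  exact h.disjUnion_path (by simp) Finset.sdiff_disjoint
    (.inl (by simpa using isInducedPathOn_pair hxy))

theorem insert_triple (h : HasShortIPD G (X \ {x, y, z})) (hx : x ∈ X) (hy : y ∈ X) (hz : z ∈ X)
    (hxy : G.Adj x y) (hyz : G.Adj y z) (hxz : ¬G.Adj x z) (hne : x ≠ z) : HasShortIPD G X := by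
  rw [← Finset.sdiff_union_of_subset (show {x, y, z} ⊆ X by grind)]
  exact h.disjUnion_path (by simp) Finset.sdiff_disjoint
    (.inr (by simpa using isInducedPathOn_triple hxy hyz hxz hne))

protected theorem biUnion {ι : Type*} {I : Finset ι} {X : ι → Finset α}
    (hd : (I : Set ι).PairwiseDisjoint X) (h : ∀ i ∈ I, HasShortIPD G (X i)) :
    HasShortIPD G (I.biUnion X) := by
  choose P hP using fun i : I ↦ h i i.2
  have hind : Finset.univ.SupIndep fun i : I ↦ X i :=
    Finset.supIndep_iff_pairwiseDisjoint.mpr fun i _ j _ hij ↦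
      hd i.2 j.2 (Subtype.coe_ne_coe.mpr hij)
  refine ⟨(Finpartition.combine P hind).copy ?_, fun p hp ↦ ?_⟩
  · ext; simp [Finset.mem_sup]
  · obtain ⟨i, -, hi⟩ := Finset.mem_biUnion.mp hp
    exact hP i p hi

end HasShortIPD

end ShortIPD

section Matching

variable {α : Type*} {G : SimpleGraph α} {X C : Finset α} {μ : α → α} {b x : α}

/-- `μ` swaps the ends of the edges of a perfect matching of `G` on `X`; its values outside `X` are
irrelevant. -/
def IsPerfectMatchingOn (G : SimpleGraph α) (X : Finset α) (μ : α → α) : Prop :=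
  ∀ x ∈ X, μ x ∈ X ∧ μ (μ x) = x ∧ G.Adj x (μ x)

namespace IsPerfectMatchingOn

theorem even_card (h : IsPerfectMatchingOn G X μ) : Even X.card := by
  rw [← ZMod.natCast_eq_zero_iff_even, Finset.card_eq_sum_ones, Nat.cast_sum]
  exact Finset.sum_involution (fun x _ ↦ μ x) (fun _ _ ↦ by decide)
    (fun x hx _ ↦ (h x hx).2.2.ne') (fun x hx ↦ (h x hx).1) fun x hx ↦ (h x hx).2.1

theorem mono_of_mapsTo {Y : Finset α} (h : IsPerfectMatchingOn G X μ) (hYX : Y ⊆ X)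
    (hY : ∀ x ∈ Y, μ x ∈ Y) : IsPerfectMatchingOn G Y μ :=
  fun x hx ↦ ⟨hY x hx, (h x (hYX hx)).2⟩

variable [DecidableEq α] in
theorem hasShortIPD (h : IsPerfectMatchingOn G X μ) : HasShortIPD G X := by
  induction X using Finset.strongInduction with
  | H X ih =>
    obtain rfl | ⟨x, hx⟩ := X.eq_empty_or_nonempty
    · exact .empty
    have hrest : IsPerfectMatchingOn G (X \ {x, μ x}) μ :=
      h.mono_of_mapsTo Finset.sdiff_subset fun y hy ↦ by
        have := h x hx
        have := h y
        grind
    exact (ih _ (by grind) hrest).insert_pair hx (h x hx).1 (h x hx).2.2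

end IsPerfectMatchingOn

variable [DecidableEq α]

/-- Deleting any single vertex of `C` leaves a set on which `G` has a perfect matching. -/
def IsFactorCritical (G : SimpleGraph α) (C : Finset α) : Prop :=
  ∀ b ∈ C, ∃ μ, IsPerfectMatchingOn G (C.erase b) μ

namespace IsFactorCritical

theorem eq_of_adj_closed {R : Finset α} (hC : IsFactorCritical G C) (hRC : R ⊆ C)
    (hR : R.Nonempty) (hcl : ∀ u ∈ R, ∀ w ∈ C, G.Adj u w → w ∈ R) : R = C := by
  by_contra hne
  obtain ⟨c, hcC, hcR⟩ := Finset.exists_of_ssubset (hRC.ssubset_of_ne hne)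
  obtain ⟨a, ha⟩ := hR
  obtain ⟨μ, hμ⟩ := hC c hcC
  obtain ⟨ν, hν⟩ := hC a (hRC ha)
  have hμR : IsPerfectMatchingOn G R μ := hμ.mono_of_mapsTo (by grind) fun x hx ↦
    hcl x hx _ (by grind [hμ x (by grind)]) (hμ x (by grind)).2.2
  have hνR : IsPerfectMatchingOn G (R.erase a) ν := hν.mono_of_mapsTo (by grind) fun x hx ↦
    Finset.mem_erase.mpr ⟨Finset.ne_of_mem_erase (hν x (by grind)).1,
      hcl x (by grind) _ (by grind [hν x (by grind)]) (hν x (by grind)).2.2⟩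
  have := hμR.even_card
  have := hνR.even_card
  have := Finset.card_erase_add_one ha
  grind

theorem hasShortIPD_insert {s : α} (hC : IsFactorCritical G C) (hx : x ∈ C) (hs : s ∉ C)
    (hsx : G.Adj s x) : HasShortIPD G (insert s C) := by
  obtain ⟨μ, hμ⟩ := hC x hx
  refine .insert_pair (x := s) (y := x) ?_ (by simp) (by simp [hx]) hsx
  rw [show insert s C \ {s, x} = C.erase x by grind]
  exact hμ.hasShortIPD

end IsFactorCritical

end Matching

section NotDecomposable

variable {α : Type*} [DecidableEq α] {G : SimpleGraph α} {C : Finset α} {μ : α → α} {b x y z : α}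

/-- Gives the mate of `x` to `b`: when `μ` leaves exactly `b` unmatched, the new matching leaves
exactly `x` unmatched. -/
def rematch (μ : α → α) (b x : α) (v : α) : α :=
  if v = b then μ x else if v = μ x then b else μ v

theorem IsPerfectMatchingOn.adj_mate (hμ : IsPerfectMatchingOn G (C.erase b) μ)
    (hC : ¬HasShortIPD G C) (hb : b ∈ C) (hx : x ∈ C) (hbx : G.Adj b x) : G.Adj b (μ x) := by
  by_contra hbμ
  obtain ⟨hμx, hμμ, hadj⟩ := hμ x (Finset.mem_erase.mpr ⟨hbx.ne', hx⟩)
  obtain ⟨hne, hμC⟩ := Finset.mem_erase.mp hμx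
  have hrest : IsPerfectMatchingOn G (C \ {b, x, μ x}) μ := hμ.mono_of_mapsTo (by grind)
    fun v hv ↦ by grind [hμ v (by grind)]
  exact hC (hrest.hasShortIPD.insert_triple hb hx hμC hbx hadj hbμ hne.symm)

theorem IsPerfectMatchingOn.rematch_of_adj (hμ : IsPerfectMatchingOn G (C.erase b) μ)
    (hC : ¬HasShortIPD G C) (hb : b ∈ C) (hx : x ∈ C) (hbx : G.Adj b x) :
    IsPerfectMatchingOn G (C.erase x) (rematch μ b x) := by
  intro v hv
  have hbμ : G.Adj b (μ x) := hμ.adj_mate hC hb hx hbx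
  have := hbμ.symm
  have hμx := hμ x (Finset.mem_erase.mpr ⟨hbx.ne', hx⟩)
  have := hμx.2.2.ne
  have := hμ v
  grind [rematch]

theorem IsPerfectMatchingOn.exists_mate_eq (hμ : IsPerfectMatchingOn G (C.erase b) μ)
    (hC : ¬HasShortIPD G C) (hb : b ∈ C) (hy : y ∈ C) (hz : z ∈ C)
    (hby : G.Adj b y) (hbz : G.Adj b z) (hyz : G.Adj y z) :
    ∃ ν, IsPerfectMatchingOn G (C.erase b) ν ∧ ν y = z := by
  by_cases hμy : μ y = z
  · exact ⟨μ, hμ, hμy⟩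
  have hye : y ∈ C.erase b := Finset.mem_erase.mpr ⟨hby.ne', hy⟩
  have hze : z ∈ C.erase b := Finset.mem_erase.mpr ⟨hbz.ne', hz⟩
  obtain ⟨-, hyy, hyy'⟩ := hμ y hye
  obtain ⟨hz', hzz, -⟩ := hμ z hze
  have hbz' : G.Adj b (μ z) := hμ.adj_mate hC hb hz hbz
  -- The unmatched vertex travels along the closed walk `b, y, μ z, b`.
  have hμ₁ := hμ.rematch_of_adj hC hb hy hby
  have hmate₁ : rematch μ b y z = μ z := by grind [rematch]
  have hyz' : G.Adj y (μ z) := hmate₁ ▸ hμ₁.adj_mate hC hy hz hyz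
  have hμ₂ := hμ₁.rematch_of_adj hC hy (Finset.mem_of_mem_erase hz') hyz'
  have hμ₃ := hμ₂.rematch_of_adj hC (Finset.mem_of_mem_erase hz') hb hbz'.symm
  exact ⟨_, hμ₃, by grind [rematch, hyz.ne, hyy'.ne]⟩

/-- The subgraph of `G` induced on `C` contains no induced diamond, that is, `K₄` minus an edge. -/
def IsDiamondFreeOn (G : SimpleGraph α) (C : Finset α) : Prop :=
  ∀ b ∈ C, ∀ x ∈ C, ∀ y ∈ C, ∀ z ∈ C,
    G.Adj b y → G.Adj b x → G.Adj y x → G.Adj b z → G.Adj y z → x ≠ z → G.Adj x z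

theorem IsFactorCritical.isDiamondFreeOn (hfc : IsFactorCritical G C) (hC : ¬HasShortIPD G C) :
    IsDiamondFreeOn G C := by
  intro b hb x hx y hy z hz hby hbx hyx hbz hyz hne
  obtain ⟨μ, hμ⟩ := hfc b hb
  obtain ⟨ν, hν, rfl⟩ := hμ.exists_mate_eq hC hb hy hz hby hbz hyz
  have hν' := hν.rematch_of_adj hC hb hx hbx
  have hmate : rematch ν b x y = ν y := by
    grind [rematch, hby.ne, hν x (by grind [hbx.ne])]
  exact hmate ▸ hν'.adj_mate hC hx hy hyx.symm

end NotDecomposable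

section EdgeClique

variable {α : Type*} {G : SimpleGraph α} {C : Finset α} {μ : α → α}
  {b c u w x z : α}

variable [DecidableRel G.Adj]

theorem card_interedges_univ [Fintype α] :
    (G.interedges C Finset.univ).card = ∑ v ∈ C, G.degree v := by
  simp_rw [← G.card_neighborFinset_eq_degree, ← Finset.card_sigma]
  refine Finset.card_bij' (fun e _ ↦ ⟨e.1, e.2⟩) (fun p _ ↦ (p.1, p.2)) ?_ ?_ ?_ ?_ <;>
    simp [G.mem_interedges_iff]

variable [DecidableEq α]

variable (G C) in
/-- The vertices of `C` equal or adjacent to both `u` and `w`. When `G` is diamond-free on `C` and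
`uw` is an edge, this is the unique maximal clique of `C` containing that edge. -/
def edgeClique (u w : α) : Finset α :=
  {z ∈ C | (z = u ∨ G.Adj u z) ∧ (z = w ∨ G.Adj w z)}

theorem mem_edgeClique :
    z ∈ edgeClique G C u w ↔ z ∈ C ∧ (z = u ∨ G.Adj u z) ∧ (z = w ∨ G.Adj w z) :=
  Finset.mem_filter

theorem edgeClique_comm : edgeClique G C u w = edgeClique G C w u := by
  ext; simp only [mem_edgeClique, and_comm]

theorem edgeClique_subset : edgeClique G C u w ⊆ C :=
  Finset.filter_subset _ _

theorem left_mem_edgeClique (hu : u ∈ C) (huw : G.Adj u w) : u ∈ edgeClique G C u w :=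
  mem_edgeClique.mpr ⟨hu, .inl rfl, .inr huw.symm⟩

theorem right_mem_edgeClique (hw : w ∈ C) (huw : G.Adj u w) : w ∈ edgeClique G C u w :=
  edgeClique_comm (G := G) ▸ left_mem_edgeClique hw huw.symm

namespace IsDiamondFreeOn

theorem isClique_edgeClique (hC : IsDiamondFreeOn G C) (hu : u ∈ C) (hw : w ∈ C)
    (huw : G.Adj u w) : G.IsClique (edgeClique G C u w) := by
  intro x hx z hz hxz
  obtain ⟨hxC, hux, hwx⟩ := mem_edgeClique.mp hx
  obtain ⟨hzC, huz, hwz⟩ := mem_edgeClique.mp hz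
  have := hC u hu x hxC w hw z hzC huw
  grind [G.adj_comm]

theorem edgeClique_subset_edgeClique (hC : IsDiamondFreeOn G C) (hu : u ∈ C) (hw : w ∈ C)
    (huw : G.Adj u w) (hx : x ∈ edgeClique G C u w) (hz : z ∈ edgeClique G C u w) :
    edgeClique G C u w ⊆ edgeClique G C x z := fun t ht ↦ by
  have hclique := hC.isClique_edgeClique hu hw huw
  have hxt := hclique hx ht
  have hzt := hclique hz ht
  exact mem_edgeClique.mpr ⟨edgeClique_subset ht, by tauto, by tauto⟩

theorem edgeClique_eq_edgeClique (hC : IsDiamondFreeOn G C) (hu : u ∈ C) (hw : w ∈ C)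
    (huw : G.Adj u w) (hx : x ∈ edgeClique G C u w) (hz : z ∈ edgeClique G C u w) (hxz : x ≠ z) :
    edgeClique G C x z = edgeClique G C u w := by
  have hsub := hC.edgeClique_subset_edgeClique hu hw huw hx hz
  refine Finset.Subset.antisymm ?_ hsub
  exact hC.edgeClique_subset_edgeClique (edgeClique_subset hx) (edgeClique_subset hz)
    (hC.isClique_edgeClique hu hw huw hx hz hxz) (hsub (left_mem_edgeClique hu huw))
    (hsub (right_mem_edgeClique hw huw))

end IsDiamondFreeOn

variable (G C) in
/-- The vertices of `C` other than `b` whose matching edge under `μ` spans the clique `Q`. -/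
def matchedWithin (μ : α → α) (b : α) (Q : Finset α) : Finset α :=
  {v ∈ C.erase b | edgeClique G C v (μ v) = Q}

variable {Q : Finset α}

theorem mem_matchedWithin {v : α} :
    v ∈ matchedWithin G C μ b Q ↔ v ∈ C.erase b ∧ edgeClique G C v (μ v) = Q :=
  Finset.mem_filter

theorem card_matchedWithin_rematch (hμ : IsPerfectMatchingOn G (C.erase b) μ)
    (hC : IsDiamondFreeOn G C) (hns : ¬HasShortIPD G C) (hb : b ∈ C) (hx : x ∈ C)
    (hbx : G.Adj b x) :
    (matchedWithin G C (rematch μ b x) x Q).card = (matchedWithin G C μ b Q).card := by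
  obtain ⟨hμx, hμμ, hadj⟩ := hμ x (Finset.mem_erase.mpr ⟨hbx.ne', hx⟩)
  have hμxC := Finset.mem_of_mem_erase hμx
  have hbμ : G.Adj b (μ x) := hμ.adj_mate hns hb hx hbx
  -- The triangle `b, x, μ x` lies in a single clique.
  have hQ : edgeClique G C b (μ x) = edgeClique G C x (μ x) :=
    hC.edgeClique_eq_edgeClique hx hμxC hadj
      (mem_edgeClique.mpr ⟨hb, .inr hbx.symm, .inr hbμ.symm⟩) (right_mem_edgeClique hμxC hadj)
      hbμ.ne
  have hQ' : edgeClique G C (μ x) b = edgeClique G C (μ x) x := by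
    rw [edgeClique_comm, hQ, edgeClique_comm]
  refine Finset.card_equiv (Equiv.swap b x) fun v ↦ ?_
  simp only [mem_matchedWithin, rematch, Equiv.swap_apply_def]
  grind [hbx.ne, hadj.ne]

theorem exists_card_matchedWithin_eq (hfc : IsFactorCritical G C) (hns : ¬HasShortIPD G C)
    (hb : b ∈ C) (hμ : IsPerfectMatchingOn G (C.erase b) μ) (hc : c ∈ C) :
    ∃ ν, IsPerfectMatchingOn G (C.erase c) ν ∧
      ∀ Q, (matchedWithin G C ν c Q).card = (matchedWithin G C μ b Q).card := by
  classical
  let R : Finset α := {a ∈ C | ∃ ν, IsPerfectMatchingOn G (C.erase a) ν ∧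
    ∀ Q, (matchedWithin G C ν a Q).card = (matchedWithin G C μ b Q).card}
  have hRC : R = C := by
    refine hfc.eq_of_adj_closed (Finset.filter_subset _ _)
      ⟨b, Finset.mem_filter.mpr ⟨hb, μ, hμ, fun _ ↦ rfl⟩⟩ fun u hu w hw huw ↦ ?_
    obtain ⟨huC, ν, hν, hcard⟩ := Finset.mem_filter.mp hu
    exact Finset.mem_filter.mpr ⟨hw, rematch ν u w, hν.rematch_of_adj hns huC hw huw, fun Q ↦
      (card_matchedWithin_rematch hν (hfc.isDiamondFreeOn hns) hns huC hw huw).trans (hcard Q)⟩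
  exact (Finset.mem_filter.mp (hRC.symm ▸ hc : c ∈ R)).2

theorem card_edgeClique_le_card_matchedWithin_add_one (hfc : IsFactorCritical G C)
    (hns : ¬HasShortIPD G C) (hb : b ∈ C) (hμ : IsPerfectMatchingOn G (C.erase b) μ)
    (hu : u ∈ C) (hw : w ∈ C) (huw : G.Adj u w) :
    (edgeClique G C u w).card ≤ (matchedWithin G C μ b (edgeClique G C u w)).card + 1 := by
  have hC := hfc.isDiamondFreeOn hns
  have huQ := left_mem_edgeClique hu huw
  obtain ⟨ν, hν, hcard⟩ := exists_card_matchedWithin_eq hfc hns hb hμ hu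
  rw [← hcard, ← Finset.card_erase_add_one huQ, Nat.add_le_add_iff_right]
  refine Finset.card_le_card fun v hv ↦ ?_
  obtain ⟨hvu, hvQ⟩ := Finset.mem_erase.mp hv
  have hvC : v ∈ C.erase u := Finset.mem_erase.mpr ⟨hvu, edgeClique_subset hvQ⟩
  have huv : G.Adj u v := hC.isClique_edgeClique hu hw huw huQ hvQ hvu.symm
  obtain ⟨hνv, -, hadj⟩ := hν v hvC
  have huνv : G.Adj u (ν v) := hν.adj_mate hns hu (edgeClique_subset hvQ) huv
  have huQ' : u ∈ edgeClique G C v (ν v) :=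
    mem_edgeClique.mpr ⟨hu, .inr huv.symm, .inr huνv.symm⟩
  refine mem_matchedWithin.mpr ⟨hvC, ?_⟩
  calc edgeClique G C v (ν v)
      = edgeClique G C u v := (hC.edgeClique_eq_edgeClique (edgeClique_subset hvQ)
        (Finset.mem_of_mem_erase hνv) hadj huQ'
        (left_mem_edgeClique (edgeClique_subset hvQ) hadj) hvu.symm).symm
    _ = edgeClique G C u w := hC.edgeClique_eq_edgeClique hu hw huw huQ hvQ hvu.symm

variable (G C Q) in
theorem filter_edgeClique_eq_subset_offDiag :
    {e ∈ G.interedges C C | edgeClique G C e.1 e.2 = Q} ⊆ Q.offDiag := by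
  rintro ⟨u, w⟩ he
  obtain ⟨huw, rfl⟩ := Finset.mem_filter.mp he
  obtain ⟨hu, hw, huw⟩ := G.mem_interedges_iff.mp huw
  exact Finset.mem_offDiag.mpr ⟨left_mem_edgeClique hu huw, right_mem_edgeClique hw huw, huw.ne⟩

theorem card_filter_edgeClique_eq_le {r : ℕ} (hfc : IsFactorCritical G C)
    (hns : ¬HasShortIPD G C) (hb : b ∈ C) (hμ : IsPerfectMatchingOn G (C.erase b) μ)
    (hclique : G.CliqueFreeOn C (r + 1)) (hu : u ∈ C) (hw : w ∈ C) (huw : G.Adj u w) :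
    {e ∈ G.interedges C C | edgeClique G C e.1 e.2 = edgeClique G C u w}.card ≤
      r * (matchedWithin G C μ b (edgeClique G C u w)).card := by
  set Q := edgeClique G C u w
  have hQr : Q.card ≤ r := by
    by_contra! hr
    exact hclique.mono G hr (Finset.coe_subset.mpr edgeClique_subset)
      ⟨(hfc.isDiamondFreeOn hns).isClique_edgeClique hu hw huw, rfl⟩
  calc {e ∈ G.interedges C C | edgeClique G C e.1 e.2 = Q}.card
      ≤ Q.offDiag.card := Finset.card_le_card (filter_edgeClique_eq_subset_offDiag G C Q)
    _ = Q.card * (Q.card - 1) := by rw [Finset.offDiag_card, Nat.mul_sub_one]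
    _ ≤ r * (matchedWithin G C μ b Q).card := by
      gcongr
      exact Nat.sub_le_of_le_add
        (card_edgeClique_le_card_matchedWithin_add_one hfc hns hb hμ hu hw huw)

theorem IsFactorCritical.card_interedges_self_le {r : ℕ} (hfc : IsFactorCritical G C)
    (hns : ¬HasShortIPD G C) (hC : C.Nonempty) (hclique : G.CliqueFreeOn C (r + 1)) :
    (G.interedges C C).card ≤ r * (C.card - 1) := by
  obtain ⟨b, hb⟩ := hC
  obtain ⟨μ, hμ⟩ := hfc b hb
  let 𝒬 : Finset (Finset α) := (G.interedges C C).image fun e ↦ edgeClique G C e.1 e.2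
  have hfiber : ∀ Q ∈ 𝒬, {e ∈ G.interedges C C | edgeClique G C e.1 e.2 = Q}.card ≤
      r * (matchedWithin G C μ b Q).card := by
    intro Q hQ
    obtain ⟨⟨u, w⟩, huw, rfl⟩ := Finset.mem_image.mp hQ
    obtain ⟨hu, hw, huw⟩ := G.mem_interedges_iff.mp huw
    exact card_filter_edgeClique_eq_le hfc hns hb hμ hclique hu hw huw
  calc (G.interedges C C).card
      = ∑ Q ∈ 𝒬, {e ∈ G.interedges C C | edgeClique G C e.1 e.2 = Q}.card :=
        Finset.card_eq_sum_card_image _ _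
    _ ≤ ∑ Q ∈ 𝒬, r * (matchedWithin G C μ b Q).card := Finset.sum_le_sum hfiber
    _ = r * (𝒬.biUnion (matchedWithin G C μ b)).card := by
        rw [← Finset.mul_sum, Finset.card_biUnion]
        intro Q _ Q' _ hQQ'
        refine Finset.disjoint_left.mpr fun v hv hv' ↦ hQQ' ?_
        rw [← (mem_matchedWithin.mp hv).2, (mem_matchedWithin.mp hv').2]
    _ ≤ r * (C.erase b).card := by
        gcongr
        exact Finset.biUnion_subset.mpr fun _ _ ↦ Finset.filter_subset _ _
    _ = r * (C.card - 1) := by rw [Finset.card_erase_of_mem hb]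

theorem IsFactorCritical.le_card_interedges_compl [Fintype α] {r : ℕ} (hfc : IsFactorCritical G C)
    (hns : ¬HasShortIPD G C) (hC : C.Nonempty) (hclique : G.CliqueFreeOn C (r + 1))
    (hdeg : ∀ v, r ≤ G.degree v) : r ≤ (G.interedges C Cᶜ).card := by
  have hsplit : (G.interedges C Finset.univ).card =
      (G.interedges C C).card + (G.interedges C Cᶜ).card := by
    rw [← Finset.card_union_of_disjoint (G.interedges_disjoint_right C disjoint_compl_right)]
    congr 1
    ext e
    simp only [G.mem_interedges_iff, Finset.mem_union, Finset.mem_compl, Finset.mem_univ]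
    tauto
  have hsum : C.card * r ≤ ∑ v ∈ C, G.degree v := Finset.card_nsmul_le_sum C _ r fun v _ ↦ hdeg v
  have hself := hfc.card_interedges_self_le hns hC hclique
  rw [← card_interedges_univ, hsplit] at hsum
  obtain ⟨n, hn⟩ := Nat.exists_eq_add_one.mpr hC.card_pos
  rw [hn, Nat.add_sub_cancel] at hself
  rw [hn] at hsum
  linarith

end EdgeClique

section OddFamily

variable {α : Type*} {G : SimpleGraph α} {S T : Finset α} {F F' F₁ F₂ : Finset (Finset α)}

/-- `F` is a family of disjoint sets of odd order, each a union of components of `G - S`. -/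
structure IsOddFamily (G : SimpleGraph α) (S : Finset α) (F : Finset (Finset α)) : Prop where
  pairwiseDisjoint : (F : Set (Finset α)).PairwiseDisjoint id
  odd_card : ∀ C ∈ F, Odd C.card
  disjoint : ∀ C ∈ F, Disjoint C S
  mem_or_mem_of_adj : ∀ C ∈ F, ∀ x ∈ C, ∀ y, G.Adj x y → y ∈ C ∨ y ∈ S

namespace IsOddFamily

theorem nonempty (hF : IsOddFamily G S F) {C : Finset α} (hC : C ∈ F) : C.Nonempty :=
  Finset.card_pos.mp (hF.odd_card C hC).pos

theorem mono (hF : IsOddFamily G S F) (hF' : F' ⊆ F) (hST : S ⊆ T)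
    (hT : ∀ C ∈ F', Disjoint C T) : IsOddFamily G T F' where
  pairwiseDisjoint := hF.pairwiseDisjoint.subset (Finset.coe_subset.mpr hF')
  odd_card C hC := hF.odd_card C (hF' hC)
  disjoint := hT
  mem_or_mem_of_adj C hC x hx y hxy :=
    (hF.mem_or_mem_of_adj C (hF' hC) x hx y hxy).imp_right (@hST y)

theorem restrict (hF : IsOddFamily G S F) (hF' : F' ⊆ F) (hTS : T ⊆ S)
    (hT : ∀ C ∈ F', ∀ x ∈ C, ∀ y ∈ S, G.Adj x y → y ∈ T) : IsOddFamily G T F' where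
  pairwiseDisjoint := hF.pairwiseDisjoint.subset (Finset.coe_subset.mpr hF')
  odd_card C hC := hF.odd_card C (hF' hC)
  disjoint C hC := (hF.disjoint C (hF' hC)).mono_right hTS
  mem_or_mem_of_adj C hC x hx y hxy :=
    (hF.mem_or_mem_of_adj C (hF' hC) x hx y hxy).imp_right fun hy ↦ hT C hC x hx y hy hxy

theorem singleton {C : Finset α} (hodd : Odd C.card) (hd : Disjoint C S)
    (hadj : ∀ x ∈ C, ∀ y, G.Adj x y → y ∈ C ∨ y ∈ S) : IsOddFamily G S {C} where
  pairwiseDisjoint := by simp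
  odd_card := by simpa
  disjoint := by simpa
  mem_or_mem_of_adj := by simpa

variable [DecidableEq α]

theorem union (h₁ : IsOddFamily G S F₁) (h₂ : IsOddFamily G S F₂)
    (hd : ∀ C ∈ F₁, ∀ D ∈ F₂, Disjoint C D) : IsOddFamily G S (F₁ ∪ F₂) where
  pairwiseDisjoint := by
    rw [Finset.coe_union, Set.pairwiseDisjoint_union]
    exact ⟨h₁.pairwiseDisjoint, h₂.pairwiseDisjoint, fun C hC D hD _ ↦ hd C hC D hD⟩
  odd_card := by grind [h₁.odd_card, h₂.odd_card]
  disjoint := by grind [h₁.disjoint, h₂.disjoint]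
  mem_or_mem_of_adj := by grind [h₁.mem_or_mem_of_adj, h₂.mem_or_mem_of_adj]

theorem card_union (h₁ : IsOddFamily G S F₁) (hd : ∀ C ∈ F₁, ∀ D ∈ F₂, Disjoint C D) :
    (F₁ ∪ F₂).card = F₁.card + F₂.card := by
  refine Finset.card_union_of_disjoint (Finset.disjoint_left.mpr fun C hC hC' ↦ ?_)
  exact (h₁.nonempty hC).ne_empty (Finset.disjoint_self_iff_empty C |>.mp (hd C hC C hC'))

end IsOddFamily

/-- A barrier in the sense of the Tutte–Berge formula: an odd family `F` of `G - S` with `|F| - |S|`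
as large as possible and, subject to this, `|S|` as large as possible. The inequalities are stated
without subtraction. -/
structure IsMaximalBarrier (G : SimpleGraph α) (S : Finset α) (F : Finset (Finset α)) : Prop where
  isOddFamily : IsOddFamily G S F
  card_add_card_le : ∀ T F', IsOddFamily G T F' → F'.card + S.card ≤ F.card + T.card
  card_le_card : ∀ T F', IsOddFamily G T F' → F'.card + S.card = F.card + T.card →
    T.card ≤ S.card

theorem exists_isMaximalBarrier [Finite α] (G : SimpleGraph α) :
    ∃ S F, IsMaximalBarrier G S F := by
  classical
  have := Fintype.ofFinite α
  let pairs : Finset (Finset α × Finset (Finset α)) := {p | IsOddFamily G p.1 p.2}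
  have hne : pairs.Nonempty := ⟨(∅, ∅), Finset.mem_filter.mpr
    ⟨Finset.mem_univ _, by simp, by simp, by simp, by simp⟩⟩
  obtain ⟨⟨S, F⟩, hSF, hmax⟩ := pairs.exists_max_image
    (fun p ↦ toLex ((p.2.card : ℤ) - p.1.card, p.1.card)) hne
  have hmax' : ∀ T F', IsOddFamily G T F' → (F'.card : ℤ) - T.card < F.card - S.card ∨
      (F'.card : ℤ) - T.card = F.card - S.card ∧ T.card ≤ S.card := fun T F' h ↦ by
    simpa [Prod.Lex.toLex_le_toLex] using hmax (T, F') (by simpa [pairs] using h)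
  refine ⟨S, F, by simpa [pairs] using hSF, fun T F' h ↦ ?_, fun T F' h _ ↦ ?_⟩ <;>
    grind [hmax' T F' h]

namespace IsMaximalBarrier

theorem card_add_card_le_card_filter [DecidableRel G.Adj] {Y : Finset (Finset α)}
    (hF : IsMaximalBarrier G S F) (hY : Y ⊆ F) :
    Y.card + S.card ≤ (S.filter fun s ↦ ∃ C ∈ Y, ∃ x ∈ C, G.Adj x s).card + F.card := by
  rw [add_comm _ F.card]
  exact hF.card_add_card_le _ _ (hF.isOddFamily.restrict hY (Finset.filter_subset _ _)
    fun C hC x hx s hs hxs ↦ Finset.mem_filter.mpr ⟨hs, C, hC, x, hx, hxs⟩)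

variable [DecidableEq α] in
theorem card_add_card_le_of_replace (hF : IsMaximalBarrier G S F) (hF₁ : F₁ ⊆ F)
    (hT : Disjoint S T) (hF₁T : ∀ C ∈ F₁, Disjoint C T) (hF₂ : IsOddFamily G (S ∪ T) F₂)
    (hd : ∀ C ∈ F₁, ∀ D ∈ F₂, Disjoint C D) :
    F₁.card + F₂.card ≤ F.card + T.card ∧
      (T.Nonempty → F₁.card + F₂.card < F.card + T.card) := by
  have h₁ : IsOddFamily G (S ∪ T) F₁ := hF.isOddFamily.mono hF₁ Finset.subset_union_left
    fun C hC ↦ Finset.disjoint_union_right.mpr ⟨hF.isOddFamily.disjoint C (hF₁ hC), hF₁T C hC⟩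
  have hle := hF.card_add_card_le _ _ (h₁.union hF₂ hd)
  have heq := hF.card_le_card _ _ (h₁.union hF₂ hd)
  rw [h₁.card_union hd, Finset.card_union_of_disjoint hT] at hle heq
  grind

theorem mem_or_exists_mem [Finite α] (hF : IsMaximalBarrier G S F) (v : α) :
    v ∈ S ∨ ∃ C ∈ F, v ∈ C := by
  classical
  by_contra! hv
  obtain ⟨R, hR⟩ : ∃ R : Finset α, ∀ x, x ∈ R ↔ x ∉ S ∧ ∀ C ∈ F, x ∉ C :=
    ⟨(Set.toFinite {x | x ∉ S ∧ ∀ C ∈ F, x ∉ C}).toFinset, by simp⟩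
  have hvR : v ∈ R := (hR v).mpr hv
  have hFR : ∀ C ∈ F, Disjoint C R := fun C hC ↦ Finset.disjoint_left.mpr (by grind)
  have hRS : Disjoint R S := Finset.disjoint_left.mpr (by grind)
  have hRadj : ∀ x ∈ R, ∀ y, G.Adj x y → y ∈ R ∨ y ∈ S := by
    intro x hx y hxy
    by_contra! hy
    have := hF.isOddFamily.mem_or_mem_of_adj
    grind [G.adj_comm]
  rcases Nat.even_or_odd R.card with heven | hodd
  · have hodd : Odd (R.erase v).card := by
      have := Finset.card_erase_add_one hvR
      grind
    have hd : Disjoint (R.erase v) (S ∪ {v}) := Finset.disjoint_left.mpr (by grind)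
    have hfam : IsOddFamily G (S ∪ {v}) {R.erase v} := .singleton hodd hd (by grind)
    have hlt := (hF.card_add_card_le_of_replace subset_rfl (by simpa using hv.1)
      (by simpa using hv.2) hfam fun C hC D hD ↦ by
        rw [Finset.mem_singleton.mp hD]
        exact (hFR C hC).mono_right (R.erase_subset v)).2
    simp at hlt
  · have hfam : IsOddFamily G (S ∪ ∅) {R} := .singleton hodd (by simpa) (by simpa)
    have hle := (hF.card_add_card_le_of_replace subset_rfl (by simp) (by simp) hfam
      (by simpa)).1
    simp at hle

end IsMaximalBarrier

end OddFamily

section FactorCritical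

variable {α : Type*} {G : SimpleGraph α}

theorem exists_isOddFamily_card_eq_ncard_oddComponents {β : Type*} [Finite β]
    {K : SimpleGraph β} {T : Finset α} (e : K ↪g G) (hT : ∀ y, y ∈ T ↔ y ∉ Set.range e) :
    ∃ F, IsOddFamily G T F ∧ F.card = K.oddComponents.ncard := by
  classical
  have := Fintype.ofFinite β
  let image (c : K.ConnectedComponent) : Finset α := c.supp.toFinset.map e.toEmbedding
  have mem_image : ∀ c y, y ∈ image c ↔ ∃ x ∈ c.supp, e x = y := by simp [image]
  have image_injective : image.Injective := fun c d h ↦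
    ConnectedComponent.supp_injective (by simpa [image] using h)
  refine ⟨K.oddComponents.toFinset.image image, ⟨?_, ?_, ?_, ?_⟩, ?_⟩
  · rw [Finset.coe_image, image_injective.injOn.pairwiseDisjoint_image]
    intro c _ d _ hcd
    simpa [image, Function.onFun] using K.pairwise_disjoint_supp_connectedComponent hcd
  · simp [image, Set.ncard_eq_toFinset_card']
  · simp only [Finset.forall_mem_image, Finset.disjoint_left, mem_image, hT]
    grind
  · simp only [Finset.forall_mem_image, mem_image]
    rintro c - _ ⟨x, hx, rfl⟩ y hxy
    by_cases hy : y ∈ T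
    · exact .inr hy
    obtain ⟨z, rfl⟩ := not_not.mp ((hT y).not.mp hy)
    exact .inl ⟨z, c.mem_supp_of_adj_mem_supp hx (e.map_adj_iff.mp hxy), rfl⟩
  · rw [Finset.card_image_of_injective _ image_injective, Set.ncard_eq_toFinset_card']

theorem exists_isPerfectMatchingOn_of_isPerfectMatching {X : Finset α}
    {M : (G.induce (X : Set α)).Subgraph} (hM : M.IsPerfectMatching) :
    ∃ μ, IsPerfectMatchingOn G X μ := by
  classical
  choose ν hν hνuniq using Subgraph.isPerfectMatching_iff.mp hM
  refine ⟨fun x ↦ if hx : x ∈ X then ν ⟨x, hx⟩ else x, fun x hx ↦ ?_⟩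
  have hνν : ν (ν ⟨x, hx⟩) = ⟨x, hx⟩ := (hνuniq _ _ (hν ⟨x, hx⟩).symm).symm
  have hmem : (ν ⟨x, hx⟩ : α) ∈ X := (ν ⟨x, hx⟩).2
  simpa [hx, hmem, hνν] using (hν ⟨x, hx⟩).adj_sub

variable [DecidableEq α]

theorem exists_isOddFamily_of_forall_not_isPerfectMatchingOn [Fintype α] {X : Finset α}
    (hX : Even X.card) (h : ∀ μ, ¬IsPerfectMatchingOn G X μ) :
    ∃ U ⊆ X, ∃ F, IsOddFamily G (U ∪ Xᶜ) F ∧ U.card + 2 ≤ F.card := by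
  obtain ⟨u, hu⟩ : ∃ u, (G.induce (X : Set α)).IsTutteViolator u := by
    by_contra! hno
    obtain ⟨M, hM⟩ := tutte.mpr hno
    obtain ⟨μ, hμ⟩ := exists_isPerfectMatchingOn_of_isPerfectMatching hM
    exact h μ hμ
  let H := (⊤ : (G.induce (X : Set α)).Subgraph).deleteVerts u
  let e : H.coe ↪g G := ⟨⟨fun x ↦ x.1.1, Subtype.val_injective.comp Subtype.val_injective⟩, by
    intro x y
    have hx := x.2.2
    have hy := y.2.2
    simp [H, hx, hy]⟩
  obtain ⟨U, hU, hUu⟩ : ∃ U : Finset α, (∀ x, x ∈ U ↔ ∃ hx : x ∈ X, ⟨x, hx⟩ ∈ u) ∧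
      U.card = u.ncard := by
    classical
    exact ⟨u.toFinset.map (.subtype _), by simp, by simp [Set.ncard_eq_toFinset_card']⟩
  have hUX : U ⊆ X := fun x hx ↦ ((hU x).mp hx).1
  obtain ⟨F, hF, hcard⟩ := exists_isOddFamily_card_eq_ncard_oddComponents (T := U ∪ Xᶜ) e
    fun y ↦ by by_cases hy : y ∈ X <;> simp [e, H, hU, hy]
  have hparity : Odd F.card ↔ Odd (X.card - U.card) := by
    rw [hcard, odd_ncard_oddComponents, Nat.card_coe_set_eq, Subgraph.deleteVerts_verts,
      Set.ncard_sdiff (by simp), hUu]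
    simp
  have hlt : U.card < F.card := by
    rw [hUu, hcard]
    exact hu
  have := Finset.card_le_card hUX
  exact ⟨U, hUX, F, hF, by grind⟩

theorem IsMaximalBarrier.isFactorCritical [Finite α] {S C : Finset α} {F : Finset (Finset α)}
    (hF : IsMaximalBarrier G S F) (hC : C ∈ F) : IsFactorCritical G C := by
  have := Fintype.ofFinite α
  intro v hv
  by_contra! hno
  have heven : Even (C.erase v).card := by
    have := Finset.card_erase_add_one hv
    have := hF.isOddFamily.odd_card C hC
    grind
  obtain ⟨U, hUC, F₂, hF₂, hcard⟩ := exists_isOddFamily_of_forall_not_isPerfectMatchingOn heven hno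
  have hF₂C : ∀ D ∈ F₂, D ⊆ C.erase v := fun D hD x hx ↦ by
    have := Finset.disjoint_left.mp (hF₂.disjoint D hD) hx
    grind [Finset.mem_compl]
  have hCS := hF.isOddFamily.disjoint C hC
  have hd : ∀ B ∈ F.erase C, Disjoint B C := fun B hB ↦
    hF.isOddFamily.pairwiseDisjoint (Finset.mem_of_mem_erase hB) hC (Finset.ne_of_mem_erase hB)
  have hvUC : insert v U ⊆ C := by grind
  have hF₂' : IsOddFamily G (S ∪ insert v U) F₂ := by
    refine hF₂.restrict subset_rfl ?_ fun D hD x hx y hy hxy ↦ ?_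
    · have := Finset.disjoint_left.mp hCS
      grind [Finset.mem_compl]
    · have := hF.isOddFamily.mem_or_mem_of_adj C hC x (by grind) y hxy
      grind [Finset.mem_compl]
  have hle := (hF.card_add_card_le_of_replace (Finset.erase_subset C F) (hCS.symm.mono_right hvUC)
    (fun B hB ↦ (hd B hB).mono_right hvUC) hF₂' fun B hB D hD ↦
      (hd B hB).mono_right ((hF₂C D hD).trans (C.erase_subset v))).2 (Finset.insert_nonempty v U)
  have := Finset.card_erase_add_one hC
  have := Finset.card_insert_le v U
  lia

end FactorCritical

section CliqueFree

variable {α : Type*} [Fintype α] {G : SimpleGraph α} [DecidableRel G.Adj] {C Q : Finset α}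
  {u w : α} {r : ℕ}

theorem mem_of_adj_of_isNClique (hQ : G.IsNClique (r + 1) Q) (hdeg : G.degree u ≤ r)
    (hu : u ∈ Q) (huw : G.Adj u w) : w ∈ Q := by
  classical
  have hsub : Q.erase u ⊆ G.neighborFinset u := fun v hv ↦ (G.mem_neighborFinset u v).mpr
    (hQ.isClique hu (Finset.mem_of_mem_erase hv) (Finset.ne_of_mem_erase hv).symm)
  have hcard : (G.neighborFinset u).card ≤ (Q.erase u).card := by
    rwa [Finset.card_erase_of_mem hu, hQ.card_eq, G.card_neighborFinset_eq_degree]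
  have hw : w ∈ G.neighborFinset u := (G.mem_neighborFinset u w).mpr huw
  rw [← Finset.eq_of_subset_of_card_le hsub hcard] at hw
  exact Finset.mem_of_mem_erase hw

theorem cliqueFree_of_connected (hconn : G.Connected) (hdeg : ∀ v, G.degree v ≤ r)
    (hnc : ¬ (G = ⊤ ∧ Odd (Fintype.card α))) (hr : Even r) : G.CliqueFree (r + 1) := by
  intro Q hQ
  have hQuniv : Q = Finset.univ := by
    by_contra hne
    obtain ⟨v, hv⟩ : ∃ v, v ∉ Q := by simpa [Finset.eq_univ_iff_forall] using hne
    obtain ⟨u, hu⟩ : Q.Nonempty := Finset.card_pos.mp (by simp [hQ.card_eq])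
    obtain ⟨p⟩ := hconn.preconnected u v
    obtain ⟨d, -, hd, hd'⟩ := p.exists_boundary_dart Q hu hv
    exact hd' (mem_of_adj_of_isNClique hQ (hdeg _) hd d.adj)
  subst hQuniv
  refine hnc ⟨?_, ?_⟩
  · simpa using hQ.isClique
  · rw [← Finset.card_univ, hQ.card_eq]
    exact hr.add_one

variable [DecidableEq α] in
theorem IsFactorCritical.cliqueFreeOn (hfc : IsFactorCritical G C) (hodd : Odd C.card)
    (hdeg : ∀ v, G.degree v ≤ r) (hclique : Even r → G.CliqueFree (r + 1)) :
    G.CliqueFreeOn C (r + 1) := by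
  intro Q hQC hQ
  have hQC : Q = C := hfc.eq_of_adj_closed (Finset.coe_subset.mp hQC)
    (Finset.card_pos.mp (by simp [hQ.card_eq]))
    fun u hu w _ huw ↦ mem_of_adj_of_isNClique hQ (hdeg u) hu huw
  rw [← hQC, hQ.card_eq] at hodd
  exact hclique (by grind) Q hQ

end CliqueFree

section Hall

variable {ι β : Type*} {A : Finset ι} {B : Finset β} {R : ι → β → Prop}
  [∀ b, DecidablePred (R · b)]

open Classical in
theorem exists_injective_mem_disjSum {k : ℕ} (p : ι → Prop)
    (hall : ∀ Y ⊆ A, Y.card ≤ (B.filter fun b ↦ ∃ a ∈ Y, R a b).card + k)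
    (hall' : ∀ Y ⊆ A, (∀ a ∈ Y, ¬p a) → Y.card ≤ (B.filter fun b ↦ ∃ a ∈ Y, R a b).card) :
    ∃ f : A → β ⊕ Fin k, f.Injective ∧
      ∀ a : A, f a ∈ (B.filter (R a)).disjSum {_d | p a} := by
  let N (a : ι) : Finset (β ⊕ Fin k) := (B.filter (R a)).disjSum {_d | p a}
  refine (Finset.all_card_le_biUnion_card_iff_exists_injective fun a : A ↦ N a).mp fun Y ↦ ?_
  have hN : Y.biUnion (fun a ↦ N a) =
      (B.filter fun b ↦ ∃ a ∈ Y.map (.subtype _), R a b).disjSum {_d | ∃ a ∈ Y, p a} := by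
    ext (b | d)
    · simp only [N, Finset.mem_biUnion, Finset.inl_mem_disjSum, Finset.mem_filter,
        Finset.mem_map, Function.Embedding.subtype_apply]
      grind
    · simp only [N, Finset.mem_biUnion, Finset.inr_mem_disjSum, Finset.mem_filter_univ]
  have hYA : Y.map (.subtype _) ⊆ A := fun a ha ↦ Finset.property_of_mem_map_subtype Y ha
  rw [hN, Finset.card_disjSum, ← Y.card_map (.subtype _)]
  by_cases hp : ∃ a ∈ Y, p a
  · simpa only [hp, Finset.filter_true, Finset.card_univ, Fintype.card_fin] using hall _ hYA
  · exact (hall' _ hYA (by simpa using hp)).trans (Nat.le_add_right _ _)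

theorem exists_injective_of_card_le_card_filter (p : ι → Prop)
    (hall : ∀ Y ⊆ A, Y.card + B.card ≤ (B.filter fun b ↦ ∃ a ∈ Y, R a b).card + A.card)
    (hall' : ∀ Y ⊆ A, (∀ a ∈ Y, ¬p a) → Y.card ≤ (B.filter fun b ↦ ∃ a ∈ Y, R a b).card) :
    ∃ g : B → ι, g.Injective ∧ (∀ b, g b ∈ A ∧ R (g b) b) ∧
      ∀ a ∈ A, ¬p a → a ∈ Set.range g := by
  classical
  have hBA : B.card ≤ A.card := by simpa using hall ∅ (by simp)
  -- The `|A| - |B|` dummies, available exactly to the `a` with `p a`, make `f` hit all of `B`.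
  obtain ⟨f, hf, hfN⟩ := exists_injective_mem_disjSum (k := A.card - B.card) p
    (fun Y hY ↦ by grind [hall Y hY]) hall'
  have himage : Finset.univ.image f = B.disjSum Finset.univ := by
    refine Finset.eq_of_subset_of_card_le (Finset.image_subset_iff.mpr fun a _ ↦ ?_) ?_
    · exact Finset.disjSum_mono (Finset.filter_subset _ _) (Finset.subset_univ _) (hfN a)
    · simp [Finset.card_image_of_injective _ hf, hBA]
  have hsurj : ∀ b : B, ∃ a, f a = .inl b.1 := fun b ↦ by
    have hb : Sum.inl b.1 ∈ Finset.univ.image f :=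
      himage ▸ Finset.inl_mem_disjSum.mpr b.2
    simpa using hb
  choose g hg using hsurj
  refine ⟨fun b ↦ g b, fun b c hbc ↦ ?_, fun b ↦ ⟨(g b).2, ?_⟩, fun a ha hpa ↦ ?_⟩
  · have h := hg b
    rw [Subtype.val_injective hbc, hg c] at h
    exact (Subtype.val_injective (Sum.inl_injective h)).symm
  · have := hfN (g b)
    rw [hg, Finset.inl_mem_disjSum] at this
    exact (Finset.mem_filter.mp this).2
  · have hfa := hfN ⟨a, ha⟩
    obtain ⟨b, hb, hfb⟩ | ⟨d, hd, -⟩ := Finset.mem_disjSum.mp hfa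
    · have hga : g ⟨b, (Finset.mem_filter.mp hb).1⟩ = ⟨a, ha⟩ := hf (by rw [hg, hfb])
      exact ⟨_, congrArg Subtype.val hga⟩
    · exact absurd (Finset.mem_filter.mp hd).2 hpa

end Hall

section Assembly

variable {α : Type*} [Fintype α] [DecidableEq α] {G : SimpleGraph α} {S : Finset α}
  {F Y : Finset (Finset α)} {r : ℕ}

theorem IsMaximalBarrier.hasShortIPD_univ_of_injective (hF : IsMaximalBarrier G S F)
    (g : S → Finset α) (hg : g.Injective) (hgF : ∀ s, g s ∈ F ∧ ∃ x ∈ g s, G.Adj x s)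
    (hF' : ∀ C ∈ F, ¬HasShortIPD G C → C ∈ Set.range g) : HasShortIPD G Finset.univ := by
  obtain ⟨piece, mem_piece⟩ : ∃ piece : Finset α → Finset α,
      ∀ C x, x ∈ piece C ↔ x ∈ C ∨ ∃ hx : x ∈ S, g ⟨x, hx⟩ = C :=
    ⟨fun C ↦ C ∪ (Finset.univ.filter (g · = C)).map (.subtype _), by simp⟩
  have hFS := hF.isOddFamily.disjoint
  have hcover : F.biUnion piece = Finset.univ := by
    ext v
    simp only [Finset.mem_biUnion, mem_piece, Finset.mem_univ, iff_true]
    obtain hv | ⟨C, hC, hv⟩ := hF.mem_or_exists_mem v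
    · exact ⟨_, (hgF ⟨v, hv⟩).1, .inr ⟨hv, rfl⟩⟩
    · exact ⟨C, hC, .inl hv⟩
  rw [← hcover]
  refine .biUnion (fun C hC D hD hCD ↦ Finset.disjoint_left.mpr fun v hvC hvD ↦ ?_) fun C hC ↦ ?_
  · have hvCS := Finset.disjoint_left.mp (hFS C hC)
    have hvDS := Finset.disjoint_left.mp (hFS D hD)
    obtain hvC | ⟨hv, rfl⟩ := (mem_piece C v).mp hvC <;>
      obtain hvD | ⟨hv', hgv⟩ := (mem_piece _ v).mp hvD
    · exact Finset.disjoint_left.mp (hF.isOddFamily.pairwiseDisjoint hC hD hCD) hvC hvD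
    · exact hvCS hvC hv'
    · exact hvDS hvD hv
    · exact hCD hgv
  by_cases hCg : C ∈ Set.range g
  · obtain ⟨s, rfl⟩ := hCg
    obtain ⟨x, hx, hxs⟩ := (hgF s).2
    have hpiece : piece (g s) = insert s.1 (g s) := by
      ext v
      rw [mem_piece, Finset.mem_insert]
      grind [hg.eq_iff]
    rw [hpiece]
    exact (hF.isFactorCritical hC).hasShortIPD_insert hx
      (Finset.disjoint_right.mp (hFS _ hC) s.2) hxs.symm
  · have hpiece : piece C = C := by
      ext v
      rw [mem_piece]
      grind
    rw [hpiece]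
    exact not_not.mp (mt (hF' C hC) hCg)

variable [DecidableRel G.Adj]

theorem IsOddFamily.card_le_card_filter (hY : IsOddFamily G S Y) (hr : 0 < r)
    (hdeg : ∀ s ∈ S, G.degree s ≤ r) (hout : ∀ C ∈ Y, r ≤ (G.interedges C Cᶜ).card) :
    Y.card ≤ (S.filter fun s ↦ ∃ C ∈ Y, ∃ x ∈ C, G.Adj x s).card := by
  set T := S.filter fun s ↦ ∃ C ∈ Y, ∃ x ∈ C, G.Adj x s
  have hsub : ∀ C ∈ Y, G.interedges C Cᶜ ⊆ G.interedges C T := by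
    simp only [Finset.subset_iff, Prod.forall, G.mk_mem_interedges_iff, Finset.mem_compl]
    grind [hY.mem_or_mem_of_adj]
  refine Nat.le_of_mul_le_mul_right (c := r) ?_ hr
  calc Y.card * r
    _ ≤ ∑ C ∈ Y, (G.interedges C T).card :=
      Finset.card_nsmul_le_sum Y _ r fun C hC ↦ (hout C hC).trans (Finset.card_le_card (hsub C hC))
    _ = (G.interedges (Y.biUnion id) T).card := by
      rw [G.interedges_biUnion_left, Finset.card_biUnion fun C hC D hD hCD ↦
        G.interedges_disjoint_left (hY.pairwiseDisjoint hC hD hCD) T]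
      rfl
    _ = (G.interedges T (Y.biUnion id)).card :=
      have : Std.Symm G.Adj := G.symm
      Rel.card_interedges_comm _ _
    _ ≤ (G.interedges T Finset.univ).card :=
      Finset.card_le_card (G.interedges_mono subset_rfl (Finset.subset_univ _))
    _ = ∑ s ∈ T, G.degree s := card_interedges_univ
    _ ≤ T.card * r := Finset.sum_le_card_nsmul T _ r fun s hs ↦ hdeg s (Finset.mem_filter.mp hs).1

theorem IsMaximalBarrier.hasShortIPD_univ (hF : IsMaximalBarrier G S F) (hr : 0 < r)
    (hreg : G.IsRegularOfDegree r) (hclique : ∀ C ∈ F, G.CliqueFreeOn C (r + 1)) :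
    HasShortIPD G Finset.univ := by
  obtain ⟨g, hg, hgF, hF'⟩ := exists_injective_of_card_le_card_filter (HasShortIPD G)
    (fun Y hY ↦ hF.card_add_card_le_card_filter hY) fun Y hY hns ↦
      (hF.isOddFamily.mono hY subset_rfl fun C hC ↦
        hF.isOddFamily.disjoint C (hY hC)).card_le_card_filter hr (fun s _ ↦ (hreg s).le)
        fun C hC ↦ (hF.isFactorCritical (hY hC)).le_card_interedges_compl (hns C hC)
          (hF.isOddFamily.nonempty (hY hC)) (hclique C (hY hC)) fun v ↦ (hreg v).ge
  exact hF.hasShortIPD_univ_of_injective g hg hgF hF'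

end Assembly

theorem regular_connected_not_odd_complete_IPD_general [DecidableEq V] (G : SimpleGraph V)
    [DecidableRel G.Adj] {r : ℕ} (hreg : G.IsRegularOfDegree r)
    (hclique : Even r → G.CliqueFree (r + 1)) : HasShortIPD G Finset.univ := by
  rcases r.eq_zero_or_pos with rfl | hr
  · have : IsEmpty V := cliqueFree_one.mp (hclique (by simp))
    exact Finset.univ_eq_empty (α := V) ▸ .empty
  obtain ⟨S, F, hF⟩ := exists_isMaximalBarrier G
  exact hF.hasShortIPD_univ hr hreg fun C hC ↦ (hF.isFactorCritical hC).cliqueFreeOn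
    (hF.isOddFamily.odd_card C hC) (fun v ↦ (hreg v).le) hclique

/-- every connected r-regular graph that is not a complete graph of odd
order has an IPD. -/
theorem regular_connected_not_odd_complete_IPD (G : SimpleGraph V) [DecidableRel G.Adj]
    (r : ℕ) (hreg : G.IsRegularOfDegree r) (hconn : G.Connected)
    (hnc : ¬ (G = ⊤ ∧ Odd (Fintype.card V))) :
    HasIPD G := by
  classical
  exact (regular_connected_not_odd_complete_IPD_general G hreg <|
    cliqueFree_of_connected hconn (fun v ↦ (hreg v).le) hnc).hasIPD
end

section
/- Let G be a connected claw-free graph. Then G has an IPD if and only if G has at least one block that is not a complete graph of odd order. -/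
open SimpleGraph

variable {V : Type*} [Fintype V]

/-- The induced subgraph on B is connected (or a single vertex / empty ok? require Connected)
and has no cut vertex. -/
def NoCutVertexSet (G : SimpleGraph V) (B : Set V) : Prop :=
  (G.induce B).Connected ∧ ∀ v ∈ B, (G.induce (B \ {v})).Preconnected

/-- B is a block (maximal 2-connected piece, in the sense of no cut vertex) of the subgraph
of G induced on H. -/
def IsBlockWithin (G : SimpleGraph V) (H B : Set V) : Prop :=
  B ⊆ H ∧ NoCutVertexSet G B ∧
    ∀ B', B ⊆ B' → B' ⊆ H → NoCutVertexSet G B' → B' = B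

/-- B is a block of G. -/
def IsBlock (G : SimpleGraph V) (B : Set V) : Prop :=
  IsBlockWithin G Set.univ B

/-- The set B induces a complete graph of odd order. -/
def IsOddComplete (G : SimpleGraph V) (B : Set V) : Prop :=
  Odd B.ncard ∧ ∀ u ∈ B, ∀ v ∈ B, u ≠ v → G.Adj u v

/-- v is a cut vertex of the subgraph of G induced on H. -/
def IsCutVertexWithin (G : SimpleGraph V) (H : Set V) (v : V) : Prop :=
  v ∈ H ∧ ∃ x y : V, ∃ hx : x ∈ H \ {v}, ∃ hy : y ∈ H \ {v},
    (G.induce H).Reachable ⟨x, hx.1⟩ ⟨y, hy.1⟩ ∧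
      ¬ (G.induce (H \ {v})).Reachable ⟨x, hx⟩ ⟨y, hy⟩

/-- B is a leaf block of the subgraph of G induced on H: a block containing at most one
cut vertex. -/
def IsLeafBlockWithin (G : SimpleGraph V) (H B : Set V) : Prop :=
  IsBlockWithin G H B ∧ {v ∈ B | IsCutVertexWithin G H v}.Subsingleton

/-- C is a connected component of G - S. -/
def IsComponentAvoiding (G : SimpleGraph V) (S C : Set V) : Prop :=
  C.Nonempty ∧ Disjoint C S ∧ (G.induce C).Connected ∧
    ∀ x ∈ C, ∀ y, y ∉ S → G.Adj x y → y ∈ C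

/-- G is claw-free. -/
def ClawFree (G : SimpleGraph V) : Prop :=
  IsEmpty (completeBipartiteGraph (Fin 1) (Fin 3) ↪g G)

/-!
Let `G` be connected. If every block is a complete graph of odd order, then within a block `B` the
vertices joined inside `B` to their own part of an IPD form a proper subset, because parts meet a
clique in at most two vertices and so pair these vertices up. There are then at most
`∑ (|B| - 1) < |V|` vertices joined to their own part, whereas an IPD joins all of them.

For the converse, a connected claw-free graph with at least two vertices contains an edge `xy`,
the first edge of a longest path, whose removal leaves it connected. By induction the remaining
graph `H` has an IPD, in which case `xy` extends it, or all blocks of `H` are complete of odd order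
and `H - K` has a perfect matching for every odd clique `K`. In the second case these matchings
give an IPD of `G`, unless `x` and `y` have the same neighbourhood `N` in `H` and `N` is a single
vertex or a block; then `N ∪ {x, y}` is a block of `G`, and the second alternative persists.
-/

section Connectivity

variable {α : Type*} {G : SimpleGraph α}

lemma preconnected_induce_iff_exists_adj {T : Set α} :
    (G.induce T).Preconnected ↔
      ∀ A ⊆ T, A.Nonempty → (T \ A).Nonempty → ∃ a ∈ A, ∃ b ∈ T \ A, G.Adj a b := by
  constructor
  · rintro h A hA ⟨u, hu⟩ ⟨v, hv⟩
    obtain ⟨p⟩ := h ⟨u, hA hu⟩ ⟨v, hv.1⟩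
    obtain ⟨d, -, hfst, hsnd⟩ := p.exists_boundary_dart (Subtype.val ⁻¹' A) hu hv.2
    exact ⟨d.fst, hfst, d.snd, ⟨d.snd.2, hsnd⟩, d.adj⟩
  · intro h u v
    by_contra huv
    obtain ⟨a, ⟨a', ha', rfl⟩, b, ⟨hbT, hb⟩, hab⟩ :=
      h (Subtype.val '' {w | (G.induce T).Reachable u w}) (by simp) ⟨u, u, Reachable.rfl, rfl⟩
        ⟨v, v.2, by simpa using huv⟩
    have hadj : (G.induce T).Adj a' ⟨b, hbT⟩ := hab
    exact hb ⟨⟨b, hbT⟩, ha'.trans hadj.reachable, rfl⟩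

lemma exists_adj_of_preconnected_induce {T : Set α} (h : (G.induce T).Preconnected)
    (hT : T.Nontrivial) {v : α} (hv : v ∈ T) : ∃ w ∈ T, G.Adj v w := by
  obtain ⟨u, hu, huv⟩ := hT.exists_ne v
  obtain ⟨_, rfl, w, hw, hvw⟩ := preconnected_induce_iff_exists_adj.1 h {v}
    (by simpa using hv) ⟨v, rfl⟩ ⟨u, hu, huv⟩
  exact ⟨w, hw.1, hvw⟩

lemma exists_walk_of_preconnected_induce {T : Set α} (h : (G.induce T).Preconnected) {u v : α}
    (hu : u ∈ T) (hv : v ∈ T) : ∃ p : G.Walk u v, ∀ w ∈ p.support, w ∈ T := by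
  obtain ⟨p⟩ := h ⟨u, hu⟩ ⟨v, hv⟩
  refine ⟨p.map (Embedding.induce T).toHom, fun w hw => ?_⟩
  obtain ⟨a, -, rfl⟩ := List.mem_map.1 (Walk.support_map _ p ▸ hw)
  exact a.2

lemma preconnected_induce_union {S T : Set α} (hS : (G.induce S).Preconnected)
    (hT : (G.induce T).Preconnected) (hST : (S ∩ T).Nonempty) :
    (G.induce (S ∪ T)).Preconnected :=
  (induce_union_connected hS hT hST).preconnected

lemma preconnected_induce_of_isClique {T : Set α} (hT : G.IsClique T) :
    (G.induce T).Preconnected := by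
  refine preconnected_induce_iff_exists_adj.2 ?_
  rintro A hA ⟨a, ha⟩ ⟨b, hb⟩
  exact ⟨a, ha, b, hb, hT (hA ha) hb.1 (ne_of_mem_of_not_mem ha hb.2)⟩

lemma preconnected_induce_sdiff_singleton {T : Set α} (hT : (G.induce T).Preconnected) {x : α}
    (hx : G.IsClique (T ∩ G.neighborSet x)) : (G.induce (T \ {x})).Preconnected := by
  by_cases hxT : x ∈ T
  swap
  · rwa [Set.sdiff_singleton_eq_self hxT]
  rw [preconnected_induce_iff_exists_adj] at hT ⊢
  rintro A hA hne ⟨c, hc, hcA⟩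
  have hxA : x ∉ A := fun h => (hA h).2 rfl
  obtain ⟨a, ha, b, hb, hab⟩ := hT A (hA.trans Set.sdiff_subset) hne ⟨c, hc.1, hcA⟩
  obtain rfl | hbx := eq_or_ne b x
  swap
  · exact ⟨a, ha, b, ⟨⟨hb.1, hbx⟩, hb.2⟩, hab⟩
  obtain ⟨a', ha', c', ⟨hc', hc'A⟩, hac'⟩ := hT (insert b A)
    (Set.insert_subset hxT (hA.trans Set.sdiff_subset)) ⟨b, by simp⟩
    ⟨c, hc.1, by simpa [hcA] using hc.2⟩
  simp only [Set.mem_insert_iff, not_or] at hc'A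
  obtain rfl | ha' := ha'
  · exact ⟨a, ha, c', ⟨⟨hc', hc'A.1⟩, hc'A.2⟩, hx ⟨(hA ha).1, hab.symm⟩ ⟨hc', hac'⟩
      (ne_of_mem_of_not_mem ha hc'A.2)⟩
  · exact ⟨a', ha', c', ⟨⟨hc', hc'A.1⟩, hc'A.2⟩, hac'⟩

end Connectivity

section Blocks

variable {α : Type*} {G : SimpleGraph α} {B C S T : Set α}

lemma isOddComplete_iff : IsOddComplete G B ↔ Odd B.ncard ∧ G.IsClique B :=
  Iff.rfl

lemma IsOddComplete.finite (hB : IsOddComplete G B) : B.Finite :=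
  Set.finite_of_ncard_ne_zero hB.1.pos.ne'

namespace NoCutVertexSet

lemma of_isClique (hT : G.IsClique T) (hne : T.Nonempty) : NoCutVertexSet G T :=
  ⟨connected_iff _ |>.2 ⟨preconnected_induce_of_isClique hT, hne.to_subtype⟩,
    fun _ _ => preconnected_induce_of_isClique (hT.subset Set.sdiff_subset)⟩

lemma nonempty (hT : NoCutVertexSet G T) : T.Nonempty :=
  Set.nonempty_coe_sort.1 hT.1.nonempty

lemma preconnected_sdiff (hT : NoCutVertexSet G T) (v : α) :
    (G.induce (T \ {v})).Preconnected := by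
  by_cases hv : v ∈ T
  · exact hT.2 v hv
  · rw [Set.sdiff_singleton_eq_self hv]
    exact hT.1.preconnected

lemma union (hS : NoCutVertexSet G S) (hT : NoCutVertexSet G T) (hST : (S ∩ T).Nontrivial) :
    NoCutVertexSet G (S ∪ T) := by
  refine ⟨induce_union_connected hS.1.preconnected hT.1.preconnected hST.nonempty, fun v _ => ?_⟩
  obtain ⟨w, hw, hwv⟩ := hST.exists_ne v
  rw [Set.union_sdiff_distrib]
  exact preconnected_induce_union (hS.preconnected_sdiff v) (hT.preconnected_sdiff v)
    ⟨w, ⟨hw.1, hwv⟩, ⟨hw.2, hwv⟩⟩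

lemma sdiff_singleton (hT : NoCutVertexSet G T) {x : α}
    (hx : G.IsClique (T ∩ G.neighborSet x)) (hne : (T \ {x}).Nonempty) :
    NoCutVertexSet G (T \ {x}) := by
  refine ⟨connected_iff _ |>.2 ⟨hT.preconnected_sdiff x, hne.to_subtype⟩, fun v _ => ?_⟩
  rw [sdiff_right_comm]
  exact preconnected_induce_sdiff_singleton (hT.preconnected_sdiff v)
    (hx.subset (Set.inter_subset_inter_left _ Set.sdiff_subset))

lemma exists_isBlockWithin [Finite α] (hT : NoCutVertexSet G T) (hTS : T ⊆ S) :
    ∃ B, IsBlockWithin G S B ∧ T ⊆ B := by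
  obtain ⟨B, hTB, hB⟩ := Finite.exists_le_maximal
    (p := fun B => B ⊆ S ∧ NoCutVertexSet G B) ⟨hTS, hT⟩
  exact ⟨B, ⟨hB.prop.1, hB.prop.2, fun B' hBB' hB'S hB' =>
    (hB.eq_of_le ⟨hB'S, hB'⟩ hBB').symm⟩, hTB⟩

end NoCutVertexSet

namespace IsBlockWithin

lemma subset_of_nontrivial_inter (hB : IsBlockWithin G S B) (hT : NoCutVertexSet G T)
    (hTS : T ⊆ S) (hBT : (B ∩ T).Nontrivial) : T ⊆ B :=
  Set.union_eq_left.1 <| hB.2.2 (B ∪ T) Set.subset_union_left (Set.union_subset hB.1 hTS)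
    (hB.2.1.union hT hBT)

lemma eq_of_nontrivial_inter (hB : IsBlockWithin G S B) (hC : IsBlockWithin G S C)
    (hBC : (B ∩ C).Nontrivial) : B = C :=
  (hC.subset_of_nontrivial_inter hB.2.1 hB.1 (Set.inter_comm B C ▸ hBC)).antisymm
    (hB.subset_of_nontrivial_inter hC.2.1 hC.1 hBC)

end IsBlockWithin

lemma preconnected_induce_support_sdiff_start {u v : α} {p : G.Walk u v} (hp : p.IsPath) :
    (G.induce ({w | w ∈ p.support} \ {u})).Preconnected := by
  cases p with
  | nil => exact preconnected_induce_of_isClique (by simp [isClique_iff, Set.Pairwise])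
  | cons h q =>
    have hu := ((Walk.cons_isPath_iff h q).1 hp).2
    have hset : {w | w ∈ (Walk.cons h q).support} \ {u} = {w | w ∈ q.support} := by
      ext w
      simp only [Walk.support_cons, List.mem_cons, Set.mem_sdiff, Set.mem_ofPred_eq,
        Set.mem_singleton_iff]
      grind
    rw [hset]
    exact q.connected_induce_support.preconnected

lemma NoCutVertexSet.support_of_isCycle {v : α} {p : G.Walk v v}
    (hp : p.IsCycle) : NoCutVertexSet G {u | u ∈ p.support} := by
  classical
  refine ⟨p.connected_induce_support, fun u hu => ?_⟩
  have hsupp : {w | w ∈ p.support} = {w | w ∈ (p.rotate u hu).support} := by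
    simp only [Walk.mem_support_rotate_iff]
  rw [hsupp]
  have hq : (p.rotate u hu).IsCycle := hp.rotate hu
  generalize p.rotate u hu = q at hq
  cases q with
  | nil => exact absurd hq Walk.not_isCycle_nil
  | cons h r =>
    have hr : r.reverse.IsPath := ((Walk.cons_isCycle_iff r h).1 hq).1.reverse
    have hset : {w | w ∈ (Walk.cons h r).support} \ {u} = {w | w ∈ r.reverse.support} \ {u} := by
      ext w
      simp +contextual
    rw [hset]
    exact preconnected_induce_support_sdiff_start hr

lemma NoCutVertexSet.exists_of_walk {v a b : α} (hva : G.Adj v a) (hvb : G.Adj v b)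
    (hab : a ≠ b) (p : G.Walk a b) (hp : v ∉ p.support) :
    ∃ T, NoCutVertexSet G T ∧ v ∈ T ∧ a ∈ T ∧ b ∈ T := by
  classical
  have hv : v ∉ p.bypass.support := fun h => hp (p.support_bypass_subset_support h)
  have hpath : (p.bypass.concat hvb.symm).IsPath := p.bypass_isPath.concat hv _
  have hva' : s(v, a) ∉ (p.bypass.concat hvb.symm).edges := by
    rw [Walk.edges_concat, List.concat_eq_append, List.mem_append, List.mem_singleton]
    rintro (h | h)
    · exact hv (Walk.fst_mem_support_of_mem_edges _ h)
    · grind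
  have hcycle : (Walk.cons hva (p.bypass.concat hvb.symm)).IsCycle :=
    (Walk.cons_isCycle_iff _ _).2 ⟨hpath, hva'⟩
  exact ⟨_, .support_of_isCycle hcycle, by simp, by simp [Walk.support_concat],
    by simp [Walk.support_concat]⟩

end Blocks

section BlockSizes

variable {α : Type*} {G : SimpleGraph α} {B C : Set α}

lemma exists_walk_notMem_support_of_dist_le (hG : G.Connected) {g r v : α} (hgv : g ≠ v)
    (hdist : G.dist g r ≤ G.dist v r) : ∃ p : G.Walk g r, v ∉ p.support := by
  classical
  obtain ⟨p, hp⟩ := hG.exists_walk_length_eq_dist g r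
  refine ⟨p, fun hv => ?_⟩
  have hlen : (p.takeUntil v hv).length + (p.dropUntil v hv).length = p.length := by
    rw [← Walk.length_append, Walk.take_spec]
  have htake : (p.takeUntil v hv).length ≠ 0 := fun h => hgv (Walk.eq_of_length_eq_zero h)
  have hdrop : G.dist v r ≤ (p.dropUntil v hv).length := dist_le _
  omega

namespace IsBlock

lemma nonempty (hB : IsBlock G B) : B.Nonempty :=
  NoCutVertexSet.nonempty hB.2.1

lemma exists_walk_of_mem (hB : IsBlock G B) {v b : α} (hv : v ∈ B) (hb : b ∈ B) (hbv : b ≠ v) :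
    ∃ a ∈ B, G.Adj v a ∧ ∃ p : G.Walk a b, v ∉ p.support := by
  obtain ⟨a, ha, hva⟩ := exists_adj_of_preconnected_induce hB.2.1.1.preconnected
    ⟨v, hv, b, hb, hbv.symm⟩ hv
  obtain ⟨p, hp⟩ := exists_walk_of_preconnected_induce (hB.2.1.2 v hv) ⟨ha, hva.ne'⟩ ⟨hb, hbv⟩
  exact ⟨a, ha, hva, p, fun h => (hp v h).2 rfl⟩

lemma eq_of_walk (hB : IsBlock G B) (hC : IsBlock G C) {v b c : α} (hvB : v ∈ B) (hvC : v ∈ C)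
    (hb : b ∈ B) (hc : c ∈ C) (p : G.Walk b c) (hp : v ∉ p.support) : B = C := by
  have hbv : b ≠ v := ne_of_mem_of_not_mem p.start_mem_support hp
  have hcv : c ≠ v := ne_of_mem_of_not_mem p.end_mem_support hp
  obtain ⟨b', hb', hvb', q, hq⟩ := hB.exists_walk_of_mem hvB hb hbv
  obtain ⟨c', hc', hvc', s, hs⟩ := hC.exists_walk_of_mem hvC hc hcv
  obtain rfl | hne := eq_or_ne b' c'
  · exact hB.eq_of_nontrivial_inter hC ⟨v, ⟨hvB, hvC⟩, b', ⟨hb', hc'⟩, hvb'.ne⟩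
  obtain ⟨T, hT, hvT, hbT, hcT⟩ := NoCutVertexSet.exists_of_walk hvb' hvc' hne
    ((q.append p).append s.reverse) (by simp [Walk.mem_support_append_iff, hp, hq, hs])
  have hTB : T ⊆ B :=
    hB.subset_of_nontrivial_inter hT T.subset_univ ⟨v, ⟨hvB, hvT⟩, b', ⟨hb', hbT⟩, hvb'.ne⟩
  exact hB.eq_of_nontrivial_inter hC ⟨v, ⟨hvB, hvC⟩, c', ⟨hTB hcT, hc'⟩, hvc'.ne⟩

lemma eq_of_dist_le (hG : G.Connected) (hB : IsBlock G B) (hC : IsBlock G C) {r v b c : α}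
    (hvB : v ∈ B) (hvC : v ∈ C) (hb : b ∈ B) (hbv : b ≠ v) (hbr : G.dist b r ≤ G.dist v r)
    (hc : c ∈ C) (hcv : c ≠ v) (hcr : G.dist c r ≤ G.dist v r) : B = C := by
  obtain ⟨p, hp⟩ := exists_walk_notMem_support_of_dist_le hG hbv hbr
  obtain ⟨q, hq⟩ := exists_walk_notMem_support_of_dist_le hG hcv hcr
  exact hB.eq_of_walk hC hvB hvC hb hc (p.append q.reverse)
    (by simp [Walk.mem_support_append_iff, hp, hq])

lemma sum_ncard_sub_one_lt [Finite α] (hG : G.Connected) (𝓑 : Finset (Set α))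
    (h𝓑 : ∀ B ∈ 𝓑, IsBlock G B) : ∑ B ∈ 𝓑, (B.ncard - 1) < Nat.card α := by
  classical
  have := Fintype.ofFinite α
  have : Nonempty α := hG.nonempty
  let r := Classical.arbitrary α
  have hgate : ∀ B ∈ 𝓑, ∃ g ∈ B, ∀ b ∈ B, G.dist g r ≤ G.dist b r := fun B hB =>
    Set.exists_min_image B (G.dist · r) B.toFinite (h𝓑 B hB).nonempty
  choose! gate hgate_mem hgate_le using hgate
  have hdisj : (𝓑 : Set (Set α)).PairwiseDisjoint fun B => (B \ {gate B}).toFinset := by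
    intro B hB C hC hne
    refine Set.disjoint_toFinset.2 (Set.disjoint_left.2 fun v hvB hvC => hne ?_)
    exact eq_of_dist_le hG (h𝓑 B hB) (h𝓑 C hC) hvB.1 hvC.1
      (hgate_mem B hB) (Ne.symm hvB.2) (hgate_le B hB v hvB.1)
      (hgate_mem C hC) (Ne.symm hvC.2) (hgate_le C hC v hvC.1)
  have hr : r ∉ 𝓑.biUnion fun B => (B \ {gate B}).toFinset := by
    simp only [Finset.mem_biUnion, Set.mem_toFinset, not_exists, not_and]
    intro B hB hrB
    have hdist : G.dist (gate B) r = 0 := by simpa using hgate_le B hB r hrB.1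
    exact hrB.2 (hG.dist_eq_zero_iff.1 hdist).symm
  calc
    ∑ B ∈ 𝓑, (B.ncard - 1) = ∑ B ∈ 𝓑, (B \ {gate B}).toFinset.card :=
      Finset.sum_congr rfl fun B hB => by
        rw [← Set.ncard_eq_toFinset_card', Set.ncard_sdiff_singleton_of_mem (hgate_mem B hB)]
    _ = (𝓑.biUnion fun B => (B \ {gate B}).toFinset).card := (Finset.card_biUnion hdisj).symm
    _ < Nat.card α := by
      rw [Nat.card_eq_fintype_card]
      exact Finset.card_lt_univ_of_notMem hr

end IsBlock

end BlockSizes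

section PartGraph

variable {α : Type*} {G : SimpleGraph α} {D : Set (Set α)} {K P : Set α} {n : ℕ}

lemma IsInducedPathOn.not_adj_of_adj_of_adj (hP : IsInducedPathOn G P n) {a b c : α}
    (ha : a ∈ P) (hb : b ∈ P) (hc : c ∈ P) (hab : G.Adj a b) (hac : G.Adj a c) : ¬ G.Adj b c := by
  obtain ⟨e⟩ := hP
  have hval {u v : α} (hu : u ∈ P) (hv : v ∈ P) (huv : G.Adj u v) :
      (e ⟨u, hu⟩).val + 1 = (e ⟨v, hv⟩).val ∨ (e ⟨v, hv⟩).val + 1 = (e ⟨u, hu⟩).val :=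
    pathGraph_adj.1 (e.map_rel_iff.2 huv)
  intro hbc
  have := hval ha hb hab
  have := hval ha hc hac
  have := hval hb hc hbc
  omega

lemma IsInducedPathOn.exists_adj (hP : IsInducedPathOn G P n) (hn : 2 ≤ n) {v : α}
    (hv : v ∈ P) : ∃ w ∈ P, G.Adj v w := by
  obtain ⟨e⟩ := hP
  refine exists_adj_of_preconnected_induce (e.preconnected_iff.2 (pathGraph_preconnected n)) ?_ hv
  have : Nontrivial (Fin n) := Fin.nontrivial_iff_two_le.2 hn
  exact Set.nontrivial_coe_sort.1 e.toEquiv.nontrivial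

/-- The spanning subgraph of `G` whose edges are those joining two vertices of a common part of
the family `D`. For a decomposition into induced paths it is the disjoint union of the paths. -/
def partGraph (G : SimpleGraph α) (D : Set (Set α)) : SimpleGraph α where
  Adj v w := G.Adj v w ∧ ∃ P ∈ D, v ∈ P ∧ w ∈ P
  symm := ⟨fun _ _ ⟨hvw, P, hP, hv, hw⟩ => ⟨hvw.symm, P, hP, hw, hv⟩⟩
  loopless := ⟨fun _ h => h.1.ne rfl⟩

lemma even_ncard_support [Finite α] (h : ∀ u v w, G.Adj u v → G.Adj u w → v = w) :
    Even G.support.ncard := by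
  classical
  have := Fintype.ofFinite α
  let M : G.Subgraph :=
    { verts := G.support
      Adj := G.Adj
      adj_sub := id
      edge_vert := fun h => ⟨_, h⟩
      symm := G.symm }
  have hM : M.IsMatching := fun v ⟨w, hvw⟩ => ⟨w, hvw, fun w' hvw' => h v w' w hvw' hvw⟩
  rw [Set.ncard_eq_toFinset_card']
  exact hM.even_card

/-- Two edges `uv`, `uw` of a part inside the clique `K` would close up to a triangle in an
induced path, so the edges of the parts inside `K` form a matching. -/
lemma even_ncard_support_induce_partGraph [Finite α] (hD : D.PairwiseDisjoint id)
    (hpath : ∀ P ∈ D, ∃ n, IsInducedPathOn G P n) (hK : G.IsClique K) :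
    Even ((partGraph G D).induce K).support.ncard := by
  refine even_ncard_support ?_
  rintro u v w ⟨huv, P, hP, huP, hvP⟩ ⟨huw, Q, hQ, huQ, hwQ⟩
  obtain rfl : P = Q := hD.elim_set hP hQ u huP huQ
  obtain ⟨n, hn⟩ := hpath P hP
  by_contra hvw
  exact hn.not_adj_of_adj_of_adj huP hvP hwQ huv huw (hK v.2 w.2 (Subtype.coe_ne_coe.2 hvw))

lemma IsOddComplete.ncard_support_induce_partGraph_le [Finite α] (hK : IsOddComplete G K)
    (hD : D.PairwiseDisjoint id) (hpath : ∀ P ∈ D, ∃ n, IsInducedPathOn G P n) :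
    ((partGraph G D).induce K).support.ncard ≤ K.ncard - 1 := by
  have heven := even_ncard_support_induce_partGraph hD hpath hK.2
  have hle : ((partGraph G D).induce K).support.ncard ≤ K.ncard := by
    simpa using Set.ncard_le_card ((partGraph G D).induce K).support
  have hne : ((partGraph G D).induce K).support.ncard ≠ K.ncard := fun h =>
    Nat.not_even_iff_odd.2 hK.1 (h ▸ heven)
  omega

lemma exists_isBlock_mem_support_induce_partGraph [Finite α] (hD : Setoid.IsPartition D)
    (hpath : ∀ P ∈ D, ∃ n, 2 ≤ n ∧ IsInducedPathOn G P n) (v : α) :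
    ∃ B, IsBlock G B ∧ v ∈ Subtype.val '' ((partGraph G D).induce B).support := by
  obtain ⟨P, ⟨hP, hvP⟩, -⟩ := hD.2 v
  obtain ⟨n, hn, hPn⟩ := hpath P hP
  obtain ⟨w, hwP, hvw⟩ := hPn.exists_adj hn hvP
  have hclique : G.IsClique {v, w} := by simp [isClique_iff, hvw]
  obtain ⟨B, hB, hvwB⟩ :=
    (NoCutVertexSet.of_isClique hclique ⟨v, by simp⟩).exists_isBlockWithin (Set.subset_univ _)
  exact ⟨B, hB, ⟨v, hvwB (by simp)⟩, ⟨⟨w, hvwB (by simp)⟩, hvw, P, hP, hvP, hwP⟩, rfl⟩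

theorem not_hasIPD_of_forall_isBlock_isOddComplete [Finite α] (hG : G.Connected)
    (hodd : ∀ B, IsBlock G B → IsOddComplete G B) : ¬ HasIPD G := by
  classical
  have := Fintype.ofFinite α
  rintro ⟨D, hD, hpath⟩
  set 𝓑 : Finset (Set α) := {B | IsBlock G B}
  let M (B : Set α) : Set α := Subtype.val '' ((partGraph G D).induce B).support
  have hMle : ∀ B ∈ 𝓑, (M B).ncard ≤ B.ncard - 1 := by
    intro B hB
    rw [Set.ncard_image_of_injective _ Subtype.val_injective]
    exact (hodd B (by simpa [𝓑] using hB)).ncard_support_induce_partGraph_le hD.pairwiseDisjoint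
      fun P hP => (hpath P hP).imp fun _ h => h.2
  have hcover : (Finset.univ : Finset α) ⊆ 𝓑.biUnion fun B => (M B).toFinset := by
    intro v _
    obtain ⟨B, hB, hv⟩ := exists_isBlock_mem_support_induce_partGraph hD hpath v
    exact Finset.mem_biUnion.2 ⟨B, by simpa [𝓑] using hB, Set.mem_toFinset.2 hv⟩
  refine lt_irrefl (Nat.card α) ?_
  calc
    Nat.card α = (Finset.univ : Finset α).card := Nat.card_eq_fintype_card
    _ ≤ (𝓑.biUnion fun B => (M B).toFinset).card := Finset.card_le_card hcover
    _ ≤ ∑ B ∈ 𝓑, (M B).toFinset.card := Finset.card_biUnion_le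
    _ = ∑ B ∈ 𝓑, (M B).ncard := by simp only [Set.ncard_eq_toFinset_card']
    _ ≤ ∑ B ∈ 𝓑, (B.ncard - 1) := Finset.sum_le_sum hMle
    _ < Nat.card α := IsBlock.sum_ncard_sub_one_lt hG 𝓑 fun B hB => by simpa [𝓑] using hB

end PartGraph

section Partitions

variable {α : Type*} {Q R : Set α → Prop} {S P : Set α}

/-- `S` is the disjoint union of a family of sets satisfying `Q`. Unlike in
`Setoid.IsPartition`, the empty set may belong to the family. -/
def IsPartitionable (Q : Set α → Prop) (S : Set α) : Prop :=
  ∃ D : Set (Set α), D.PairwiseDisjoint id ∧ ⋃₀ D = S ∧ ∀ P ∈ D, Q P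

namespace IsPartitionable

lemma empty : IsPartitionable Q ∅ :=
  ⟨∅, Set.pairwiseDisjoint_empty, Set.sUnion_empty, by simp⟩

lemma mono (hQR : ∀ P, Q P → R P) (hS : IsPartitionable Q S) : IsPartitionable R S :=
  hS.imp fun _ ⟨hD, hS, hQ⟩ => ⟨hD, hS, fun P hP => hQR P (hQ P hP)⟩

lemma of_sdiff (hPS : P ⊆ S) (hP : Q P) (h : IsPartitionable Q (S \ P)) :
    IsPartitionable Q S := by
  obtain ⟨D, hD, hDS, hQ⟩ := h
  refine ⟨insert P D, hD.insert fun R hR _ => ?_, ?_, Set.forall_mem_insert.2 ⟨hP, hQ⟩⟩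
  · exact Set.disjoint_sdiff_right.mono_right ((Set.subset_sUnion_of_mem hR).trans hDS.subset)
  · rw [Set.sUnion_insert, hDS, Set.union_sdiff_cancel hPS]

lemma exists_mem (h : IsPartitionable Q S) {a : α} (ha : a ∈ S) :
    ∃ P ⊆ S, a ∈ P ∧ Q P ∧ IsPartitionable Q (S \ P) := by
  obtain ⟨D, hD, rfl, hQ⟩ := h
  obtain ⟨P, hP, haP⟩ := ha
  refine ⟨P, Set.subset_sUnion_of_mem hP, haP, hQ P hP, D \ {P}, hD.subset Set.sdiff_subset, ?_,
    fun R hR => hQ R hR.1⟩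
  ext b
  constructor
  · rintro ⟨R, ⟨hR, hRP⟩, hb⟩
    exact ⟨⟨R, hR, hb⟩, fun hbP => hRP (hD.elim_set hR hP b hb hbP)⟩
  · rintro ⟨⟨R, hR, hb⟩, hbP⟩
    exact ⟨R, ⟨hR, fun h => hbP (h ▸ hb)⟩, hb⟩

end IsPartitionable

end Partitions

section PathPartitions

variable {α : Type*} {G : SimpleGraph α} {S : Set α} {a b c : α}

lemma isInducedPathOn_range {n : ℕ} {f : Fin n → α} (hf : Function.Injective f)
    (hadj : ∀ i j, G.Adj (f i) (f j) ↔ (pathGraph n).Adj i j) :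
    IsInducedPathOn G (Set.range f) n :=
  ⟨Iso.symm ⟨Equiv.ofInjective f hf, hadj _ _⟩⟩

lemma isInducedPathOn_pair_s9 (hab : G.Adj a b) : IsInducedPathOn G {a, b} 2 := by
  have hba := hab.symm
  have hne := hab.ne
  rw [← Matrix.range_cons_cons_empty a b ![]]
  refine isInducedPathOn_range (fun i j hij => ?_) fun i j => ?_
  · fin_cases i <;> fin_cases j <;> simp_all
  · rw [pathGraph_adj]
    fin_cases i <;> fin_cases j <;> simp_all

lemma isInducedPathOn_triple_s9 (hab : G.Adj a b) (hbc : G.Adj b c) (hac : a ≠ c)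
    (hac' : ¬ G.Adj a c) : IsInducedPathOn G {a, b, c} 3 := by
  have hba := hab.symm
  have hcb := hbc.symm
  have hca' : ¬ G.Adj c a := fun h => hac' h.symm
  have hrange : Set.range ![a, b, c] = {a, b, c} := by
    rw [Matrix.range_cons, Matrix.range_cons_cons_empty, Set.singleton_union]
  rw [← hrange]
  refine isInducedPathOn_range (fun i j hij => ?_) fun i j => ?_
  · fin_cases i <;> fin_cases j <;> simp_all
  · rw [pathGraph_adj]
    fin_cases i <;> fin_cases j <;> simp_all

/-- `S` is the vertex set of a matching of `G`. -/
def IsMatchable (G : SimpleGraph α) (S : Set α) : Prop :=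
  IsPartitionable (fun P => ∃ a b, G.Adj a b ∧ P = {a, b}) S

/-- `S` can be partitioned into induced paths of `G` of order at least two; for `S = V(G)` this
is an IPD of `G`. -/
def IsPathPartitionable (G : SimpleGraph α) (S : Set α) : Prop :=
  IsPartitionable (fun P => ∃ n, 2 ≤ n ∧ IsInducedPathOn G P n) S

namespace IsMatchable

lemma of_sdiff_pair (ha : a ∈ S) (hb : b ∈ S) (hab : G.Adj a b)
    (h : IsMatchable G (S \ {a, b})) : IsMatchable G S :=
  IsPartitionable.of_sdiff (Set.pair_subset ha hb) ⟨a, b, hab, rfl⟩ h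

lemma exists_adj (h : IsMatchable G S) (ha : a ∈ S) :
    ∃ b ∈ S, G.Adj a b ∧ IsMatchable G (S \ {a, b}) := by
  obtain ⟨_, hPS, haP, ⟨u, v, huv, rfl⟩, hS⟩ := h.exists_mem ha
  rw [Set.pair_subset_iff] at hPS
  obtain rfl | rfl := haP
  · exact ⟨v, hPS.2, huv, hS⟩
  · exact ⟨u, hPS.1, huv.symm, Set.pair_comm u a ▸ hS⟩

lemma isPathPartitionable (h : IsMatchable G S) : IsPathPartitionable G S :=
  h.mono fun _ ⟨_, _, hab, hP⟩ => ⟨2, le_rfl, hP ▸ isInducedPathOn_pair_s9 hab⟩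

end IsMatchable

namespace IsPathPartitionable

lemma of_sdiff_pair (ha : a ∈ S) (hb : b ∈ S) (hab : G.Adj a b)
    (h : IsPathPartitionable G (S \ {a, b})) : IsPathPartitionable G S :=
  IsPartitionable.of_sdiff (Set.pair_subset ha hb) ⟨2, le_rfl, isInducedPathOn_pair_s9 hab⟩ h

lemma of_sdiff_triple (ha : a ∈ S) (hb : b ∈ S) (hc : c ∈ S) (hab : G.Adj a b)
    (hbc : G.Adj b c) (hac : a ≠ c) (hac' : ¬ G.Adj a c)
    (h : IsPathPartitionable G (S \ {a, b, c})) : IsPathPartitionable G S :=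
  IsPartitionable.of_sdiff (Set.insert_subset ha (Set.pair_subset hb hc))
    ⟨3, by norm_num, isInducedPathOn_triple_s9 hab hbc hac hac'⟩ h

lemma hasIPD (h : IsPathPartitionable G Set.univ) : HasIPD G := by
  obtain ⟨D, hD, hDuniv, hpath⟩ := h
  refine ⟨D, hD.isPartition_of_exists_of_ne_empty ?_ ?_, hpath⟩
  · exact fun a => Set.mem_sUnion.1 (hDuniv ▸ Set.mem_univ a)
  · intro hempty
    obtain ⟨n, hn, ⟨e⟩⟩ := hpath ∅ hempty
    exact (e.symm ⟨0, by omega⟩).2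

end IsPathPartitionable

end PathPartitions

section ClawFree

variable {α : Type*} {G : SimpleGraph α}

namespace ClawFree

lemma exists_adj (hG : ClawFree G) {c : α} {f : Fin 3 → α} (hf : Function.Injective f)
    (hc : ∀ i, G.Adj c (f i)) : ∃ i j, G.Adj (f i) (f j) := by
  by_contra! hnot
  have hinj : Function.Injective (Sum.elim (fun _ : Fin 1 => c) f) :=
    Function.Injective.sumElim (Function.injective_of_subsingleton _) hf fun _ i => (hc i).ne
  refine hG.elim ⟨⟨_, hinj⟩, ?_⟩
  rintro (i | i) (j | j) <;> simp [hc, hnot, (hc _).symm]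

lemma adj_or_adj_or_adj (hG : ClawFree G) {c u v w : α} (hu : G.Adj c u) (hv : G.Adj c v)
    (hw : G.Adj c w) (huv : u ≠ v) (huw : u ≠ w) (hvw : v ≠ w) :
    G.Adj u v ∨ G.Adj u w ∨ G.Adj v w := by
  obtain ⟨i, j, hij⟩ := hG.exists_adj (c := c) (f := ![u, v, w])
    (fun i j hij => by fin_cases i <;> fin_cases j <;> simp_all)
    (fun i => by fin_cases i <;> assumption)
  fin_cases i <;> fin_cases j <;> simp_all [adj_comm]

lemma induce (hG : ClawFree G) (S : Set α) : ClawFree (G.induce S) :=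
  ⟨fun f => hG.elim ((Embedding.induce S).comp f)⟩

end ClawFree

end ClawFree

section TwinExtensions

variable {α : Type*} {G : SimpleGraph α} {B K N S T : Set α} {x y : α}

lemma isOddComplete_singleton (v : α) : IsOddComplete G {v} :=
  isOddComplete_iff.2 ⟨by simp, by simp⟩

lemma IsBlockWithin.of_subset (hB : IsBlockWithin G S B) (hBT : B ⊆ T) (hTS : T ⊆ S) :
    IsBlockWithin G T B :=
  ⟨hBT, hB.2.1, fun C hBC hCT => hB.2.2 C hBC (hCT.trans hTS)⟩

/-- Every block of `G[S]` is a complete graph of odd order. -/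
def HasOddCompleteBlocks (G : SimpleGraph α) (S : Set α) : Prop :=
  ∀ B, IsBlockWithin G S B → IsOddComplete G B

/-- Removing from `G[S]` a complete subgraph of odd order leaves a graph with a perfect matching. -/
def HasOddCliqueMatchings (G : SimpleGraph α) (S : Set α) : Prop :=
  ∀ K ⊆ S, IsOddComplete G K → IsMatchable G (S \ K)

/-- `x` and `y` are adjacent vertices outside `S` with the same neighbourhood `N` in `S`, and `N`
is a nonempty clique that contains every vertex of `S` adjacent to two of its elements. When the
blocks of `G[S]` are complete, such an `N` is a single vertex or a block, so that adding `x` and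
`y` either creates the triangle block `N ∪ {x, y}` or enlarges the block `N` by two vertices. -/
structure IsTwinExtension (G : SimpleGraph α) (S N : Set α) (x y : α) : Prop where
  left_notMem : x ∉ S
  right_notMem : y ∉ S
  adj : G.Adj x y
  subset : N ⊆ S
  nonempty : N.Nonempty
  isClique : G.IsClique N
  adj_left_iff : ∀ n ∈ S, G.Adj x n ↔ n ∈ N
  adj_right_iff : ∀ n ∈ S, G.Adj y n ↔ n ∈ N
  mem_of_adj_of_adj : ∀ u ∈ N, ∀ v ∈ N, u ≠ v → ∀ w ∈ S, G.Adj w u → G.Adj w v → w ∈ N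

namespace HasOddCompleteBlocks

lemma isClique [Finite α] (hS : HasOddCompleteBlocks G S) (hT : NoCutVertexSet G T)
    (hTS : T ⊆ S) : G.IsClique T := by
  obtain ⟨B, hB, hTB⟩ := hT.exists_isBlockWithin hTS
  exact (isOddComplete_iff.1 (hS B hB)).2.subset hTB

lemma singleton (v : α) : HasOddCompleteBlocks G {v} := by
  intro B hB
  obtain rfl | rfl := Set.subset_singleton_iff_eq.1 hB.1
  · exact absurd hB.2.1.nonempty Set.not_nonempty_empty
  · exact isOddComplete_singleton v

end HasOddCompleteBlocks

namespace IsTwinExtension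

lemma symm (h : IsTwinExtension G S N x y) : IsTwinExtension G S N y x :=
  { h with
    left_notMem := h.right_notMem
    right_notMem := h.left_notMem
    adj := h.adj.symm
    adj_left_iff := h.adj_right_iff
    adj_right_iff := h.adj_left_iff }

lemma isClique_union (h : IsTwinExtension G S N x y) : G.IsClique (N ∪ {x, y}) := by
  have hx : ∀ n ∈ N, G.Adj x n := fun n hn => (h.adj_left_iff n (h.subset hn)).2 hn
  have hy : ∀ n ∈ N, G.Adj y n := fun n hn => (h.adj_right_iff n (h.subset hn)).2 hn
  rw [Set.union_comm, Set.insert_union, Set.singleton_union]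
  refine (h.isClique.insert fun n hn _ => hy n hn).insert fun n hn _ => ?_
  obtain rfl | hn := hn
  · exact h.adj
  · exact hx n hn

lemma isOddComplete [Finite α] (h : IsTwinExtension G S N x y)
    (hS : HasOddCompleteBlocks G S) : IsOddComplete G N := by
  obtain hN | hN := N.subsingleton_or_nontrivial
  · obtain ⟨n, rfl⟩ := (Set.exists_eq_singleton_iff_nonempty_subsingleton).2 ⟨h.nonempty, hN⟩
    exact isOddComplete_singleton n
  obtain ⟨B, hB, hNB⟩ := (NoCutVertexSet.of_isClique h.isClique h.nonempty).exists_isBlockWithin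
    h.subset
  suffices hBN : B ⊆ N by rw [hNB.antisymm hBN]; exact hS B hB
  intro w hw
  by_contra hwN
  obtain ⟨u, hu, v, hv, huv⟩ := hN
  have hadj : ∀ n ∈ N, G.Adj w n := fun n hn =>
    (isOddComplete_iff.1 (hS B hB)).2 hw (hNB hn) (ne_of_mem_of_not_mem hn hwN).symm
  exact hwN (h.mem_of_adj_of_adj u hu v hv huv w (hB.1 hw) (hadj u hu) (hadj v hv))

lemma inter_nonempty_of_preconnected (h : IsTwinExtension G S N x y)
    (hT : (G.induce T).Preconnected) (hTS : T ⊆ S ∪ {x, y}) (hxT : x ∈ T)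
    (hne : (T ∩ S).Nonempty) : (T ∩ N).Nonempty := by
  obtain ⟨z, hzT, hzS⟩ := hne
  have hzx : z ≠ x := ne_of_mem_of_not_mem hzS h.left_notMem
  have hzy : z ≠ y := ne_of_mem_of_not_mem hzS h.right_notMem
  obtain ⟨a, ⟨-, ha⟩, n, ⟨hn, hnxy⟩, han⟩ := preconnected_induce_iff_exists_adj.1 hT
    (T ∩ {x, y}) Set.inter_subset_left ⟨x, hxT, by simp⟩ ⟨z, hzT, by simp [hzx, hzy]⟩
  have hnS : n ∈ S := (hTS hn).resolve_right fun h => hnxy ⟨hn, h⟩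
  obtain rfl | rfl := ha
  · exact ⟨n, hn, (h.adj_left_iff n hnS).1 han⟩
  · exact ⟨n, hn, (h.adj_right_iff n hnS).1 han⟩

/-- Otherwise the attachment of `{x, y}` to the rest of `B` would be a cut vertex. -/
lemma nontrivial_inter_of_noCutVertexSet (h : IsTwinExtension G S N x y)
    (hB : NoCutVertexSet G B) (hBS : B ⊆ S ∪ {x, y}) (hxB : x ∈ B) {z : α} (hzB : z ∈ B)
    (hzS : z ∈ S) (hzN : z ∉ N) : (B ∩ N).Nontrivial := by
  obtain ⟨n, hnB, hnN⟩ :=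
    h.inter_nonempty_of_preconnected hB.1.preconnected hBS hxB ⟨z, hzB, hzS⟩
  have hxn : x ≠ n := (ne_of_mem_of_not_mem (h.subset hnN) h.left_notMem).symm
  have hzn : z ≠ n := (ne_of_mem_of_not_mem hnN hzN).symm
  obtain ⟨m, hmB, hmN⟩ := h.inter_nonempty_of_preconnected (hB.2 n hnB)
    (Set.sdiff_subset.trans hBS) ⟨hxB, hxn⟩ ⟨z, ⟨hzB, hzn⟩, hzS⟩
  exact ⟨m, ⟨hmB.1, hmN⟩, n, ⟨hnB, hnN⟩, hmB.2⟩

lemma noCutVertexSet_sdiff_pair (h : IsTwinExtension G S N x y) (hB : NoCutVertexSet G B)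
    (hBS : B ⊆ S ∪ {x, y}) (hne : (B ∩ S).Nonempty) : NoCutVertexSet G (B \ {x, y}) := by
  obtain ⟨z, hzB, hzS⟩ := hne
  have hzx : z ≠ x := ne_of_mem_of_not_mem hzS h.left_notMem
  have hzy : z ≠ y := ne_of_mem_of_not_mem hzS h.right_notMem
  have hx : G.IsClique (B ∩ G.neighborSet x) := h.isClique_union.subset fun n ⟨hn, hxn⟩ =>
    (hBS hn).imp_left fun hnS => (h.adj_left_iff n hnS).1 hxn
  have hy : G.IsClique (B ∩ G.neighborSet y) := h.isClique_union.subset fun n ⟨hn, hyn⟩ =>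
    (hBS hn).imp_left fun hnS => (h.adj_right_iff n hnS).1 hyn
  have hsdiff : B \ {x, y} = (B \ {x}) \ {y} := by
    ext
    simp [and_assoc]
  rw [hsdiff]
  exact (hB.sdiff_singleton hx ⟨z, hzB, hzx⟩).sdiff_singleton
    (hy.subset (Set.inter_subset_inter_left _ Set.sdiff_subset)) ⟨z, ⟨hzB, hzx⟩, hzy⟩

lemma block_eq_of_left_mem [Finite α] (h : IsTwinExtension G S N x y)
    (hS : HasOddCompleteBlocks G S) (hB : IsBlockWithin G (S ∪ {x, y}) B) (hxB : x ∈ B) :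
    B = N ∪ {x, y} := by
  have hNxy : NoCutVertexSet G (N ∪ {x, y}) := .of_isClique h.isClique_union ⟨x, by simp⟩
  suffices hBN : B ⊆ N ∪ {x, y} from
    (hB.2.2 _ hBN (Set.union_subset_union_left _ h.subset) hNxy).symm
  intro z hzB
  by_contra hz
  have hzN : z ∉ N := fun h => hz (Or.inl h)
  have hzS : z ∈ S := (hB.1 hzB).resolve_right fun h => hz (Or.inr h)
  have hclique : G.IsClique (B \ {x, y}) :=
    hS.isClique (h.noCutVertexSet_sdiff_pair hB.2.1 hB.1 ⟨z, hzB, hzS⟩)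
      (Set.sdiff_subset_iff.2 (Set.union_comm S _ ▸ hB.1))
  have hadj : ∀ n ∈ B ∩ N, G.Adj z n := fun n ⟨hnB, hnN⟩ =>
    hclique ⟨hzB, fun h => hz (Or.inr h)⟩ ⟨hnB, by
      rintro (rfl | rfl)
      exacts [h.left_notMem (h.subset hnN), h.right_notMem (h.subset hnN)]⟩
      (ne_of_mem_of_not_mem hnN hzN).symm
  obtain ⟨m, hm, n, hn, hmn⟩ :=
    h.nontrivial_inter_of_noCutVertexSet hB.2.1 hB.1 hxB hzB hzS hzN
  exact hzN (h.mem_of_adj_of_adj m hm.2 n hn.2 hmn z hzS (hadj m hm) (hadj n hn))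

lemma isOddComplete_union [Finite α] (h : IsTwinExtension G S N x y)
    (hS : HasOddCompleteBlocks G S) : IsOddComplete G (N ∪ {x, y}) := by
  refine isOddComplete_iff.2 ⟨?_, h.isClique_union⟩
  have hdisj : Disjoint N {x, y} := by
    simp [mt (@h.subset _) h.left_notMem, mt (@h.subset _) h.right_notMem]
  rw [Set.ncard_union_eq hdisj, Set.ncard_pair h.adj.ne]
  exact (h.isOddComplete hS).1.add_even even_two

lemma hasOddCompleteBlocks [Finite α] (h : IsTwinExtension G S N x y)
    (hS : HasOddCompleteBlocks G S) : HasOddCompleteBlocks G (S ∪ {x, y}) := by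
  intro B hB
  by_cases hxB : x ∈ B
  · exact h.block_eq_of_left_mem hS hB hxB ▸ h.isOddComplete_union hS
  by_cases hyB : y ∈ B
  · rw [Set.pair_comm] at hB
    exact h.symm.block_eq_of_left_mem hS hB hyB ▸ h.symm.isOddComplete_union hS
  refine hS B (hB.of_subset (fun b hb => (hB.1 hb).resolve_right ?_) Set.subset_union_left)
  rintro (rfl | rfl) <;> contradiction

lemma isMatchable_sdiff_of_left_mem (h : IsTwinExtension G S N x y)
    (hN : Odd N.ncard) (hS : HasOddCliqueMatchings G S) (hK : IsOddComplete G K)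
    (hKS : K ⊆ S ∪ {x, y}) (hxK : x ∈ K) (hyK : y ∉ K) :
    IsMatchable G ((S ∪ {x, y}) \ K) := by
  have hKN : K \ {x} ⊆ N := by
    rintro v ⟨hv, hvx⟩
    have hvy : v ≠ y := ne_of_mem_of_not_mem hv hyK
    have hvS : v ∈ S := (hKS hv).resolve_right (by simp_all)
    exact (h.adj_left_iff v hvS).1 (hK.2 x hxK v hv (Ne.symm hvx))
  have hcard : (K \ {x}).ncard + 1 = K.ncard := Set.ncard_sdiff_singleton_add_one hxK hK.finite
  obtain ⟨w, hwN, hwK⟩ : ∃ w ∈ N, w ∉ K \ {x} := by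
    by_contra! hNK
    rw [hKN.antisymm hNK] at hcard
    have := hK.1
    grind
  have hK' : IsOddComplete G (insert w (K \ {x})) :=
    isOddComplete_iff.2 ⟨by rw [Set.ncard_insert_of_notMem hwK hK.finite.sdiff, hcard]; exact hK.1,
      h.isClique.subset (Set.insert_subset hwN hKN)⟩
  have hwS := h.subset hwN
  have hK'S : insert w (K \ {x}) ⊆ S := Set.insert_subset hwS (hKN.trans h.subset)
  have hwx : w ≠ x := ne_of_mem_of_not_mem hwS h.left_notMem
  refine .of_sdiff_pair (a := w) (b := y) ⟨Or.inl hwS, fun hw => hwK ⟨hw, hwx⟩⟩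
    ⟨by simp, hyK⟩ ((h.adj_right_iff w hwS).2 hwN).symm ?_
  convert hS _ hK'S hK' using 1
  have := h.left_notMem
  have := h.right_notMem
  grind

lemma hasOddCliqueMatchings (h : IsTwinExtension G S N x y)
    (hN : Odd N.ncard) (hS : HasOddCliqueMatchings G S) :
    HasOddCliqueMatchings G (S ∪ {x, y}) := by
  intro K hKS hK
  have hx := h.left_notMem
  have hy := h.right_notMem
  by_cases hxK : x ∈ K <;> by_cases hyK : y ∈ K
  · have hcard : (K \ {x, y}).ncard + 2 = K.ncard := by
      rw [← Set.ncard_pair h.adj.ne]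
      exact Set.ncard_sdiff_add_ncard_of_subset (Set.pair_subset hxK hyK) hK.finite
    have hK' : IsOddComplete G (K \ {x, y}) := isOddComplete_iff.2
      ⟨by have := hK.1; grind, (isOddComplete_iff.1 hK).2.subset Set.sdiff_subset⟩
    convert hS _ (Set.sdiff_subset_iff.2 (Set.union_comm S _ ▸ hKS)) hK' using 1
    grind
  · exact h.isMatchable_sdiff_of_left_mem hN hS hK hKS hxK hyK
  · rw [Set.pair_comm] at hKS ⊢
    exact h.symm.isMatchable_sdiff_of_left_mem hN hS hK hKS hyK hxK
  · refine .of_sdiff_pair (a := x) (b := y) ⟨by simp, hxK⟩ ⟨by simp, hyK⟩ h.adj ?_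
    convert hS K (fun v hv => (hKS hv).resolve_right ?_) hK using 1
    · grind
    · rintro (rfl | rfl) <;> contradiction

end IsTwinExtension

lemma HasOddCliqueMatchings.singleton (v : α) : HasOddCliqueMatchings G {v} := by
  intro K hKv hK
  obtain rfl | rfl := Set.subset_singleton_iff_eq.1 hKv
  · simp [isOddComplete_iff] at hK
  · rw [sdiff_self]
    exact .empty

end TwinExtensions

section TwinExtensionDichotomy

variable {α : Type*} {G : SimpleGraph α} {S : Set α} {x y : α}

namespace HasOddCliqueMatchings

lemma isMatchable_sdiff_singleton (hS : HasOddCliqueMatchings G S) {v : α} (hv : v ∈ S) :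
    IsMatchable G (S \ {v}) :=
  hS {v} (Set.singleton_subset_iff.2 hv) (isOddComplete_singleton v)

lemma isPathPartitionable_of_adj_of_not_adj (hS : HasOddCliqueMatchings G S) (hx : x ∉ S)
    (hy : y ∉ S) (hxy : G.Adj x y) {n : α} (hn : n ∈ S) (hxn : G.Adj x n) (hyn : ¬ G.Adj y n) :
    IsPathPartitionable G (S ∪ {x, y}) := by
  have hny : n ≠ y := ne_of_mem_of_not_mem hn hy
  refine .of_sdiff_triple (Or.inl hn) (Or.inr (Or.inl rfl)) (Or.inr (Or.inr rfl)) hxn.symm hxy hny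
    (fun h => hyn h.symm) ?_
  convert (hS.isMatchable_sdiff_singleton hn).isPathPartitionable using 1
  grind

lemma isPathPartitionable_of_not_adj (hS : HasOddCliqueMatchings G S) (hx : x ∉ S) (hy : y ∉ S)
    (hxy : x ≠ y) (htwin : ∀ n ∈ S, G.Adj x n ↔ G.Adj y n) {u v : α} (hu : u ∈ S) (hv : v ∈ S)
    (huv : u ≠ v) (huv' : ¬ G.Adj u v) (hxu : G.Adj x u) (hxv : G.Adj x v) :
    IsPathPartitionable G (S ∪ {x, y}) := by
  obtain ⟨w, ⟨hw, hwv⟩, huw, hmatch⟩ :=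
    (hS.isMatchable_sdiff_singleton hv).exists_adj ⟨hu, huv⟩
  have hwv : w ≠ v := hwv
  have huw' := huw.ne
  have hxS : ∀ n ∈ S, n ≠ x := fun n hn => ne_of_mem_of_not_mem hn hx
  have hyS : ∀ n ∈ S, n ≠ y := fun n hn => ne_of_mem_of_not_mem hn hy
  by_cases hxw : G.Adj x w
  · have hyw := ((htwin w hw).1 hxw).symm
    refine .of_sdiff_pair (a := w) (b := y) (Or.inl hw) (by simp) hyw ?_
    refine .of_sdiff_triple (a := u) (b := x) (c := v) (by grind) (by grind) (by grind)
      hxu.symm hxv huv huv' ?_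
    convert hmatch.isPathPartitionable using 1
    grind
  · have hyv := ((htwin v hv).1 hxv).symm
    refine .of_sdiff_pair (a := v) (b := y) (Or.inl hv) (by simp) hyv ?_
    refine .of_sdiff_triple (a := w) (b := u) (c := x) (by grind) (by grind) (by grind)
      huw.symm hxu.symm (hxS w hw) (fun h => hxw h.symm) ?_
    convert hmatch.isPathPartitionable using 1
    grind

lemma isPathPartitionable_of_triangle (hS : HasOddCliqueMatchings G S) (hx : x ∉ S) (hy : y ∉ S)
    (hxy : x ≠ y) {u v w : α} (hu : u ∈ S) (hv : v ∈ S) (hw : w ∈ S) (huv : G.Adj u v)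
    (hwu : G.Adj w u) (hwv : G.Adj w v) (hxu : G.Adj x u) (hyv : G.Adj y v) (hxw : ¬ G.Adj x w) :
    IsPathPartitionable G (S ∪ {x, y}) := by
  have hxS : ∀ n ∈ S, n ≠ x := fun n hn => ne_of_mem_of_not_mem hn hx
  have hyS : ∀ n ∈ S, n ≠ y := fun n hn => ne_of_mem_of_not_mem hn hy
  have huv' := huv.ne
  have hwu' := hwu.ne
  have hwv' := hwv.ne
  have htriangle : IsOddComplete G {u, v, w} := by
    refine isOddComplete_iff.2 ⟨?_, ?_⟩
    · rw [Set.ncard_eq_three.2 ⟨u, v, w, huv', hwu'.symm, hwv'.symm, rfl⟩]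
      decide
    · simp [isClique_insert, huv, hwu.symm, hwv.symm]
  refine .of_sdiff_pair (a := v) (b := y) (Or.inl hv) (by simp) hyv.symm ?_
  refine .of_sdiff_triple (a := w) (b := u) (c := x) (by grind) (by grind) (by grind) hwu
    hxu.symm (hxS w hw) (fun h => hxw h.symm) ?_
  convert (hS _ (by grind) htriangle).isPathPartitionable using 1
  grind

theorem isPathPartitionable_or_isTwinExtension (hS : HasOddCliqueMatchings G S) (hx : x ∉ S)
    (hy : y ∉ S) (hxy : G.Adj x y) (hne : ∃ n ∈ S, G.Adj x n ∨ G.Adj y n) :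
    IsPathPartitionable G (S ∪ {x, y}) ∨ ∃ N, IsTwinExtension G S N x y := by
  refine or_iff_not_imp_left.2 fun hpart => ⟨{n ∈ S | G.Adj x n}, ?_⟩
  have htwin : ∀ n ∈ S, G.Adj x n ↔ G.Adj y n := by
    refine fun n hn => ⟨fun hxn => ?_, fun hyn => ?_⟩ <;> by_contra h
    · exact hpart (hS.isPathPartitionable_of_adj_of_not_adj hx hy hxy hn hxn h)
    · rw [Set.pair_comm] at hpart
      exact hpart (hS.isPathPartitionable_of_adj_of_not_adj hy hx hxy.symm hn hyn h)
  have hclique : G.IsClique {n ∈ S | G.Adj x n} := by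
    rintro u ⟨hu, hxu⟩ v ⟨hv, hxv⟩ huv
    by_contra huv'
    exact hpart (hS.isPathPartitionable_of_not_adj hx hy hxy.ne htwin hu hv huv huv' hxu hxv)
  obtain ⟨n, hn, hadj⟩ := hne
  exact {
    left_notMem := hx
    right_notMem := hy
    adj := hxy
    subset := Set.sep_subset _ _
    nonempty := ⟨n, hn, hadj.elim id (htwin n hn).2⟩
    isClique := hclique
    adj_left_iff := fun n hn => by simp [hn]
    adj_right_iff := fun n hn => by simp [hn, htwin n hn]
    mem_of_adj_of_adj := fun u hu v hv huv w hw hwu hwv => by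
      refine ⟨hw, by_contra fun hxw => hpart ?_⟩
      exact hS.isPathPartitionable_of_triangle hx hy hxy.ne hu.1 hv.1 hw (hclique hu hv huv) hwu hwv
        hu.2 ((htwin v hv.1).1 hv.2) hxw }

end HasOddCliqueMatchings

end TwinExtensionDichotomy

section Sumner

variable {α : Type*} {G : SimpleGraph α}

lemma ClawFree.exists_isPath_length_lt (hcf : ClawFree G) {u v z w c : α} {huv : G.Adj u v}
    {hvz : G.Adj v z} {q : G.Walk z w} (hp : (Walk.cons huv (Walk.cons hvz q)).IsPath)
    (hcv : G.Adj c v) (hcz : ¬ G.Adj c z) (hc : c ∉ (Walk.cons huv (Walk.cons hvz q)).support) :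
    ∃ (a : α) (r : G.Walk a w),
      r.IsPath ∧ (Walk.cons huv (Walk.cons hvz q)).length < r.length := by
  by_cases hcu : G.Adj c u
  · exact ⟨c, .cons hcu (.cons huv (.cons hvz q)), hp.cons hc, by simp⟩
  simp only [Walk.cons_isPath_iff, Walk.support_cons, List.mem_cons, not_or] at hp hc
  obtain ⟨⟨hq, hvq⟩, -, huq⟩ := hp
  obtain ⟨hcu', hcv', hcq⟩ := hc
  have hzu : z ≠ u := ne_of_mem_of_not_mem q.start_mem_support huq
  have hzc : z ≠ c := ne_of_mem_of_not_mem q.start_mem_support hcq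
  have huz : G.Adj u z := by
    have := hcf.adj_or_adj_or_adj huv.symm hvz hcv.symm hzu.symm (Ne.symm hcu') hzc
    simp_all [adj_comm]
  have huv' := huv.ne
  refine ⟨c, .cons hcv (.cons huv.symm (.cons huz q)), ?_, by simp⟩
  simp_all [Walk.cons_isPath_iff, eq_comm]

lemma ClawFree.exists_adj_of_forall_isPath_length_le (hcf : ClawFree G) (hG : G.Preconnected)
    {u v w : α} {h : G.Adj u v} {q : G.Walk v w} (hp : (Walk.cons h q).IsPath)
    (hmax : ∀ a b (r : G.Walk a b), r.IsPath → r.length ≤ (Walk.cons h q).length)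
    {C : Set α} (hC : C.Nonempty) (hdisj : ∀ c ∈ C, c ∉ (Walk.cons h q).support) :
    ∃ c ∈ C, ∃ b, b ∉ C ∧ b ≠ u ∧ b ≠ v ∧ G.Adj c b := by
  obtain ⟨c₀, hc₀⟩ := hC
  obtain ⟨r⟩ := hG c₀ u
  obtain ⟨⟨⟨c, b⟩, hcb⟩, -, hc, hb⟩ :=
    r.exists_boundary_dart C hc₀ fun hu => hdisj u hu (Walk.start_mem_support _)
  obtain rfl | hbu := eq_or_ne b u
  · have := hmax _ _ (.cons hcb (.cons h q)) (hp.cons (hdisj c hc))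
    simp at this
  obtain rfl | hbv := eq_or_ne b v
  swap
  · exact ⟨c, hc, b, hb, hbu, hbv, hcb⟩
  cases q with
  | nil =>
    have hpath : (Walk.cons hcb (Walk.cons h.symm Walk.nil)).IsPath := by
      simpa [Walk.cons_isPath_iff, h.ne', and_comm] using hdisj c hc
    have := hmax _ _ _ hpath
    simp at this
  | @cons _ z _ hbz q =>
    have hpq := (Walk.cons_isPath_iff h _).1 hp
    refine ⟨c, hc, z, fun hz => hdisj z hz (by simp),
      ne_of_mem_of_not_mem (by simp) hpq.2, hbz.ne', ?_⟩
    by_contra hcz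
    obtain ⟨a, r, hr, hlt⟩ := hcf.exists_isPath_length_lt hp hcb hcz (hdisj c hc)
    exact (hmax a w r hr).not_gt hlt

lemma ClawFree.preconnected_induce_compl_pair_of_forall_isPath_length_le (hcf : ClawFree G)
    (hG : G.Preconnected) {u v w : α} {h : G.Adj u v} {q : G.Walk v w}
    (hp : (Walk.cons h q).IsPath)
    (hmax : ∀ a b (r : G.Walk a b), r.IsPath → r.length ≤ (Walk.cons h q).length) :
    (G.induce {u, v}ᶜ).Preconnected := by
  refine preconnected_induce_iff_exists_adj.2 fun A hA hne hne' => ?_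
  have hpq := (Walk.cons_isPath_iff h q).1 hp
  by_cases hdisj : ∀ a ∈ A, a ∉ (Walk.cons h q).support
  · obtain ⟨a, ha, b, hb, hbu, hbv, hab⟩ :=
      hcf.exists_adj_of_forall_isPath_length_le hG hp hmax hne hdisj
    exact ⟨a, ha, b, ⟨by simp [hbu, hbv], hb⟩, hab⟩
  by_cases hdisj' : ∀ b ∈ {u, v}ᶜ \ A, b ∉ (Walk.cons h q).support
  · obtain ⟨b, hb, a, ha, hau, hav, hba⟩ :=
      hcf.exists_adj_of_forall_isPath_length_le hG hp hmax hne' hdisj'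
    refine ⟨a, ?_, b, hb, hba.symm⟩
    by_contra haA
    exact ha ⟨by simp [hau, hav], haA⟩
  push Not at hdisj hdisj'
  obtain ⟨a, ha, hap⟩ := hdisj
  obtain ⟨b, ⟨hb, hbA⟩, hbp⟩ := hdisj'
  have hmem : ∀ c ∈ ({u, v}ᶜ : Set α), c ∈ (Walk.cons h q).support →
      c ∈ {w | w ∈ q.support} \ {v} := by
    intro c hc hcp
    simp only [Set.mem_compl_iff, Set.mem_insert_iff, Set.mem_singleton_iff, not_or] at hc
    exact ⟨(List.mem_cons.1 hcp).resolve_left hc.1, hc.2⟩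
  obtain ⟨a', ⟨ha'A, -⟩, b', ⟨⟨hb'q, hb'v⟩, hb'⟩, hab⟩ := preconnected_induce_iff_exists_adj.1
    (preconnected_induce_support_sdiff_start hpq.1) (A ∩ _) Set.inter_subset_right
    ⟨a, ha, hmem a (hA ha) hap⟩ ⟨b, hmem b hb hbp, fun h => hbA h.1⟩
  have hb'u : b' ≠ u := fun h => hpq.2 (h ▸ hb'q)
  exact ⟨a', ha'A, b', ⟨by simpa [hb'u] using hb'v, fun h => hb' ⟨h, hb'q, hb'v⟩⟩, hab⟩

lemma ClawFree.exists_adj_preconnected_induce_compl [Finite α] [Nontrivial α]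
    (hcf : ClawFree G) (hG : G.Preconnected) :
    ∃ x y, G.Adj x y ∧ (G.induce {x, y}ᶜ).Preconnected := by
  obtain ⟨x, w, p, hp, hmax⟩ := Walk.exists_isPath_forall_isPath_length_le_length G
  cases p with
  | nil =>
    obtain ⟨y, hxy⟩ := hG.exists_adj_of_nontrivial x
    exact absurd (hmax x y hxy.toWalk (Walk.IsPath.of_adj hxy)) (by simp)
  | @cons _ y _ h q =>
    exact ⟨x, y, h, hcf.preconnected_induce_compl_pair_of_forall_isPath_length_le hG hp hmax⟩

theorem ClawFree.exists_adj_preconnected_induce_sdiff [Finite α] (hcf : ClawFree G) {S : Set α}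
    (hS : (G.induce S).Preconnected) (hS' : S.Nontrivial) :
    ∃ x ∈ S, ∃ y ∈ S, G.Adj x y ∧ (G.induce (S \ {x, y})).Preconnected := by
  have := hS'.coe_sort
  obtain ⟨⟨x, hx⟩, ⟨y, hy⟩, hxy, hpre⟩ :=
    (hcf.induce S).exists_adj_preconnected_induce_compl hS
  let f : (G.induce S).induce {⟨x, hx⟩, ⟨y, hy⟩}ᶜ →g G.induce (S \ {x, y}) :=
    { toFun := fun v => ⟨v.1, v.1.2, fun h => v.2 (h.imp Subtype.ext Subtype.ext)⟩
      map_rel' := id }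
  refine ⟨x, hx, y, hy, hxy, hpre.map f fun v => ?_⟩
  exact ⟨⟨⟨v, v.2.1⟩, by simpa [Subtype.ext_iff] using v.2.2⟩, rfl⟩

end Sumner

section Main

variable {α : Type*} [Finite α] {G : SimpleGraph α}

theorem ClawFree.isPathPartitionable_or_hasOddCompleteBlocks (hcf : ClawFree G) {S : Set α}
    (hS : (G.induce S).Preconnected) :
    IsPathPartitionable G S ∨ HasOddCompleteBlocks G S ∧ HasOddCliqueMatchings G S := by
  induction S using WellFoundedLT.induction with | _ S ih
  obtain hsub | hnt := S.subsingleton_or_nontrivial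
  · obtain rfl | ⟨v, rfl⟩ := hsub.eq_empty_or_singleton
    · exact .inl .empty
    · exact .inr ⟨.singleton v, .singleton v⟩
  obtain ⟨x, hx, y, hy, hxy, hT⟩ := hcf.exists_adj_preconnected_induce_sdiff hS hnt
  obtain hpart | ⟨hblocks, hmatch⟩ := ih (S \ {x, y}) (by grind) hT
  · exact .inl (.of_sdiff_pair hx hy hxy hpart)
  obtain hempty | hne := (S \ {x, y}).eq_empty_or_nonempty
  · exact .inl (.of_sdiff_pair hx hy hxy (hempty ▸ .empty))
  obtain ⟨a, ha, n, hn, han⟩ := preconnected_induce_iff_exists_adj.1 hS {x, y}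
    (Set.pair_subset hx hy) (Set.insert_nonempty x {y}) hne
  have hadj : ∃ n ∈ S \ {x, y}, G.Adj x n ∨ G.Adj y n := by
    obtain rfl | rfl := ha
    exacts [⟨n, hn, .inl han⟩, ⟨n, hn, .inr han⟩]
  rw [← Set.sdiff_union_of_subset (Set.pair_subset hx hy)]
  exact (hmatch.isPathPartitionable_or_isTwinExtension (by simp) (by simp) hxy hadj).imp_right
    fun ⟨N, hN⟩ => ⟨hN.hasOddCompleteBlocks hblocks,
      hN.hasOddCliqueMatchings (hN.isOddComplete hblocks).1 hmatch⟩

end Main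

/-- a connected claw-free graph has an IPD iff it has at least one block
that is not a complete graph of odd order. -/
theorem clawfree_IPD_iff_block (G : SimpleGraph V)
    (hconn : G.Connected) (hcf : ClawFree G) :
    HasIPD G ↔ ∃ B : Set V, IsBlock G B ∧ ¬ IsOddComplete G B := by
  refine ⟨fun hIPD => ?_, fun ⟨B, hB, hodd⟩ => ?_⟩
  · by_contra! hodd
    exact not_hasIPD_of_forall_isBlock_isOddComplete hconn hodd hIPD
  · have huniv : (G.induce Set.univ).Preconnected :=
      (induceUnivIso G).preconnected_iff.2 hconn.preconnected
    obtain hpart | ⟨hblocks, -⟩ := hcf.isPathPartitionable_or_hasOddCompleteBlocks huniv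
    · exact hpart.hasIPD
    · exact absurd (hblocks B hB) hodd
end

section
/- Let G be a connected bipartite cubic graph of order n. Then G admits an IPD consisting of at most n/3 induced paths, i.e., ρ(G) ≤ n/3. -/
open SimpleGraph

variable {V : Type*} [Fintype V]

/-!
A two-factor of a cubic graph is the complement of a perfect matching, and its cycles have length
at least six, in a bipartite graph, once the matching meets every four-cycle. Call a four-cycle
isolated if it meets no other one. Contracting opposite vertices of the isolated four-cycles turns
the graph into a weighted regular bipartite graph, and a perfect matching there lifts to a perfect
matching `m` meeting all of them. If `m` misses a four-cycle `abcd` that meets another four-cycle,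
the degrees force the partners of two consecutive vertices, say `a` and `b`, to be adjacent.
Replacing the edges `{a, m a}` and `{b, m b}` of `m` by `{a, b}` and `{m a, m b}` then creates no
new unmatched four-cycle and removes `abcd`. Repeating this yields the theorem of Kano et al.

Now let `f 0, f 1, …` run through a cycle of the two-factor, of length `M`. Among five consecutive
vertices only those at distance three can be joined by a chord, and the edges `f i – f (i + 3)` and
`f (i + 3) – f (i + 6)` cannot both be present, since `f (i + 3)` has degree three. Starting at a
vertex with `f 0` and `f 3` non-adjacent, the cycle is cut into induced paths of orders
`3 + 3 + ⋯`, `4 + 3 + ⋯`, or one of `4 + 4 + 3 + ⋯` and `5 + 3 + ⋯`, according to `M` modulo `3`.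
-/

section Preliminaries

variable {α : Type*} {G : SimpleGraph α}

theorem coloring_eq_of_adj_of_adj (C : G.Coloring Bool) {u v w : α} (huv : G.Adj u v)
    (hvw : G.Adj v w) : C u = C w := by
  rw [Bool.eq_not_of_ne (C.valid huv), Bool.eq_not_of_ne (C.valid hvw), Bool.not_not]

theorem not_adj_of_adj_of_adj (C : G.Coloring Bool) {u v w : α} (huv : G.Adj u v)
    (hvw : G.Adj v w) : ¬ G.Adj u w :=
  fun huw => C.valid huw (coloring_eq_of_adj_of_adj C huv hvw)

theorem eq_or_eq_or_eq_of_degree_le_three {v x y z w : α} [Fintype (G.neighborSet v)]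
    (hdeg : G.degree v ≤ 3) (hx : G.Adj v x) (hy : G.Adj v y) (hz : G.Adj v z)
    (hxy : x ≠ y) (hxz : x ≠ z) (hyz : y ≠ z) (hw : G.Adj v w) : w = x ∨ w = y ∨ w = z := by
  classical
  by_contra! hne
  have hsub : ({w, x, y, z} : Finset α) ⊆ G.neighborFinset v := by
    simp [Finset.insert_subset_iff, hx, hy, hz, hw]
  have hcard : ({w, x, y, z} : Finset α).card = 4 := by simp [*]
  have hle := Finset.card_le_card hsub
  rw [hcard, card_neighborFinset_eq_degree] at hle
  lia

theorem exists_involutive_of_existsUnique {R : α → α → Prop}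
    (hsymm : ∀ u v, R u v → R v u) (huniq : ∀ v, ∃! w, R v w) :
    ∃ m : α → α, Function.Involutive m ∧ ∀ v, R v (m v) := by
  choose m hm hunique using huniq
  exact ⟨m, fun v => (hunique (m v) v (hsymm _ _ (hm v))).symm, hm⟩

end Preliminaries

section WeightedMatching

theorem exists_perm_forall_pos_of_sum_eq {ι : Type*} [Fintype ι] {W : ι → ι → ℕ} {d : ℕ}
    (hd : 0 < d) (hrow : ∀ i, ∑ j, W i j = d) (hcol : ∀ j, ∑ i, W i j = d) :
    ∃ σ : Equiv.Perm ι, ∀ i, 0 < W i (σ i) := by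
  classical
  let M : Matrix ι ι ℚ := .of fun i j => (W i j : ℚ) / d
  have hd' : (d : ℚ) ≠ 0 := by positivity
  have hM : M ∈ doublyStochastic ℚ ι := by
    refine mem_doublyStochastic_iff_sum.2 ⟨fun i j => ?_, fun i => ?_, fun j => ?_⟩
    · simp only [M, Matrix.of_apply]; positivity
    · simp only [M, Matrix.of_apply, ← Finset.sum_div]
      rw [← Nat.cast_sum, hrow, div_self hd']
    · simp only [M, Matrix.of_apply, ← Finset.sum_div]
      rw [← Nat.cast_sum, hcol, div_self hd']
  obtain ⟨w, hw_nonneg, hw_sum, hwM⟩ := exists_eq_sum_perm_of_mem_doublyStochastic hM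
  obtain ⟨σ, -, hσ⟩ : ∃ σ ∈ Finset.univ, 0 < w σ :=
    Finset.exists_lt_of_sum_lt (by simp [hw_sum])
  refine ⟨σ, fun i => Nat.pos_of_ne_zero fun hzero => ?_⟩
  have hle : w σ ≤ M i (σ i) := by
    rw [← hwM, Matrix.sum_apply]
    refine le_trans (by simp [Equiv.toPEquiv_apply]) (Finset.single_le_sum
      (f := fun τ => (w τ • τ.permMatrix ℚ) i (σ i)) (fun τ _ => ?_) (Finset.mem_univ σ))
    simp only [Matrix.smul_apply, smul_eq_mul, Equiv.Perm.permMatrix, PEquiv.toMatrix_apply]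
    split_ifs <;> simp [hw_nonneg]
  have hM_zero : M i (σ i) = 0 := by simp [M, hzero]
  exact hσ.not_ge (hle.trans_eq hM_zero)

theorem exists_involutive_forall_pos {ι : Type*} [Fintype ι] {W : ι → ι → ℕ} {d : ℕ}
    (hd : 0 < d) (hsymm : ∀ i j, W i j = W j i) (hrow : ∀ i, ∑ j, W i j = d) (c : ι → Bool)
    (hc : ∀ i j, 0 < W i j → c i ≠ c j) :
    ∃ m : ι → ι, Function.Involutive m ∧ ∀ i, 0 < W i (m i) := by
  obtain ⟨σ, hσ⟩ := exists_perm_forall_pos_of_sum_eq hd hrow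
    (fun j => by simpa only [hsymm j] using hrow j)
  have hσ' : ∀ i, 0 < W i (σ.symm i) := fun i => by
    simpa [hsymm i] using hσ (σ.symm i)
  refine ⟨fun i => if c i then σ i else σ.symm i, fun i => ?_, fun i => ?_⟩
  · have := hc _ _ (hσ i)
    have := hc _ _ (hσ' i)
    by_cases hi : c i <;> simp_all
  · by_cases hi : c i <;> simp [hi, hσ, hσ']

theorem exists_section_of_involutive {α β : Type*} {π : α → β} {μ : β → β}
    (hμ : Function.Involutive μ) {R : α → α → Prop} (hR : ∀ u v, R u v → R v u) (c : β → Bool)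
    (hc : ∀ p, c (μ p) ≠ c p) (hlift : ∀ p, ∃ u v, π u = p ∧ π v = μ p ∧ R u v) :
    ∃ t : β → α, (∀ p, π (t p) = p) ∧ ∀ p, R (t p) (t (μ p)) := by
  choose x y hx hy hxy using hlift
  refine ⟨fun p => if c p then x p else y (μ p), fun p => ?_, fun p => ?_⟩
  · by_cases hp : c p <;> simp [hp, hx, hy, hμ p]
  · have hcp := hc p
    by_cases hp : c p
    · have : c (μ p) = false := by simpa [hp] using hcp
      simpa [hp, this, hμ p] using hxy p
    · have : c (μ p) = true := by simpa [hp] using hcp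
      simpa [hp, this] using hR _ _ (hxy (μ p))

theorem exists_transversal_involution {α : Type*} [Fintype α] (r : Setoid α) [DecidableRel r]
    {W : α → α → ℕ} {d : ℕ} (hd : 0 < d) (hsymm : ∀ u v, W u v = W v u)
    (hsum : ∀ u, ∑ v with r u v, ∑ w, W v w = d) (c : α → Bool)
    (hcr : ∀ u v, r u v → c u = c v) (hc : ∀ u v, 0 < W u v → c u ≠ c v) :
    ∃ (T : Set α) (m : α → α), (∀ v, ∃! u, u ∈ T ∧ r v u) ∧
      ∀ v ∈ T, m v ∈ T ∧ m (m v) = v ∧ 0 < W v (m v) := by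
  let W' : Quotient r → Quotient r → ℕ := fun p q => ∑ u with ⟦u⟧ = p, ∑ v with ⟦v⟧ = q, W u v
  have hW' : ∀ p q, 0 < W' p q → ∃ u v, (⟦u⟧ : Quotient r) = p ∧ ⟦v⟧ = q ∧ 0 < W u v := by
    intro p q hpq
    obtain ⟨u, hu, hpos⟩ := Finset.exists_ne_zero_of_sum_ne_zero hpq.ne'
    obtain ⟨v, hv, hpos⟩ := Finset.exists_ne_zero_of_sum_ne_zero hpos
    exact ⟨u, v, by simpa using hu, by simpa using hv, Nat.pos_of_ne_zero hpos⟩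
  have hrow : ∀ p, ∑ q, W' p q = d := by
    refine Quotient.ind fun u => ?_
    simp only [W', ← hsum u]
    rw [Finset.sum_comm]
    refine Finset.sum_congr (by ext v; simp [Quotient.eq, r.comm']) fun v _ => ?_
    exact Finset.sum_fiberwise _ _ _
  let c' : Quotient r → Bool := Quotient.lift c hcr
  have hc' : ∀ p q, 0 < W' p q → c' p ≠ c' q := by
    intro p q hpq
    obtain ⟨u, v, rfl, rfl, huv⟩ := hW' p q hpq
    exact hc u v huv
  obtain ⟨μ, hμ, hμW⟩ := exists_involutive_forall_pos hd (W := W')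
    (fun p q => by
      simp only [W']
      rw [Finset.sum_comm]
      simp only [hsymm]) hrow c' hc'
  obtain ⟨t, ht, htW⟩ := exists_section_of_involutive hμ (R := fun u v => 0 < W u v)
    (fun u v huv => by simpa only [hsymm v u] using huv) c' (fun p => (hc' _ _ (hμW p)).symm)
    (fun p => hW' _ _ (hμW p))
  refine ⟨Set.range t, fun v => t (μ ⟦v⟧), fun v => ⟨t ⟦v⟧, ⟨⟨_, rfl⟩, ?_⟩, ?_⟩, ?_⟩
  · exact Quotient.exact (ht _).symm
  · rintro _ ⟨⟨p, rfl⟩, hp⟩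
    rw [Quotient.sound hp, ht]
  · rintro _ ⟨p, rfl⟩
    simp only [ht, hμ p, htW, Set.mem_range, exists_apply_eq_apply, and_self]

end WeightedMatching

section Matchings

variable {α : Type*} {G : SimpleGraph α}

/-- A perfect matching of `G`, encoded as the involution sending each vertex to its partner. -/
structure IsMatchingMap (G : SimpleGraph α) (m : α → α) : Prop where
  involutive : Function.Involutive m
  adj (v : α) : G.Adj v (m v)

theorem IsMatchingMap.ne_iff {m : α → α} (hm : IsMatchingMap G m) {u v : α} :
    m u ≠ v ↔ m v ≠ u :=
  ⟨fun h h' => h (by rw [← h', hm.involutive]), fun h h' => h (by rw [← h', hm.involutive])⟩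

theorem exists_isMatchingMap_of_isRegularOfDegree [Finite α] [G.LocallyFinite]
    (C : G.Coloring Bool) {d : ℕ} (hd : 0 < d) (hreg : G.IsRegularOfDegree d) :
    ∃ m, IsMatchingMap G m := by
  classical
  have := Fintype.ofFinite α
  obtain ⟨m, hm, hadj⟩ := exists_involutive_forall_pos hd
    (W := fun u v => if G.Adj u v then 1 else 0) (fun u v => by simp only [G.adj_comm])
    (fun v => by
      rw [← hreg v, ← card_neighborFinset_eq_degree, Finset.sum_boole, Nat.cast_id]
      congr 1
      ext w
      simp) C
    (fun u v huv => C.valid (by simpa [Nat.pos_iff_ne_zero] using huv))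
  exact ⟨m, hm, fun v => by simpa [Nat.pos_iff_ne_zero] using hadj v⟩

/-- The graph left after deleting from `G` the edges `{v, m v}`. -/
def unmatchedGraph (G : SimpleGraph α) (m : α → α) : SimpleGraph α where
  Adj u v := G.Adj u v ∧ m u ≠ v ∧ m v ≠ u
  symm := ⟨fun _ _ h => ⟨h.1.symm, h.2.2, h.2.1⟩⟩

theorem unmatchedGraph_adj {m : α → α} {u v : α} :
    (unmatchedGraph G m).Adj u v ↔ G.Adj u v ∧ m u ≠ v ∧ m v ≠ u :=
  Iff.rfl

theorem unmatchedGraph_le (G : SimpleGraph α) (m : α → α) : unmatchedGraph G m ≤ G :=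
  fun _ _ h => h.1

theorem IsMatchingMap.isRegularOfDegree_unmatchedGraph {m : α → α} (hm : IsMatchingMap G m)
    [G.LocallyFinite] [(unmatchedGraph G m).LocallyFinite] {d : ℕ}
    (hreg : G.IsRegularOfDegree (d + 1)) : (unmatchedGraph G m).IsRegularOfDegree d := by
  classical
  intro v
  have hnbr : (unmatchedGraph G m).neighborFinset v = (G.neighborFinset v).erase (m v) := by
    ext w
    have hne : m v ≠ w ↔ m w ≠ v := hm.ne_iff
    simp only [mem_neighborFinset, Finset.mem_erase, ne_comm (a := w), unmatchedGraph_adj]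
    tauto
  rw [← card_neighborFinset_eq_degree, hnbr, Finset.card_erase_of_mem (by simp [hm.adj]),
    card_neighborFinset_eq_degree, hreg v, Nat.add_sub_cancel]

end Matchings

section FourCycles

variable {α : Type*} {G H : SimpleGraph α} {a b c d : α}

/-- The vertices `a, b, c, d`, in this order, form a four-cycle of `G`. Adjacent vertices being
distinct, only opposite ones have to be declared so. -/
structure IsFourCycle (G : SimpleGraph α) (a b c d : α) : Prop where
  adj_ab : G.Adj a b
  adj_bc : G.Adj b c
  adj_cd : G.Adj c d
  adj_da : G.Adj d a
  ne_ac : a ≠ c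
  ne_bd : b ≠ d

theorem IsFourCycle.rotate (h : IsFourCycle G a b c d) : IsFourCycle G b c d a :=
  ⟨h.adj_bc, h.adj_cd, h.adj_da, h.adj_ab, h.ne_bd, h.ne_ac.symm⟩

theorem IsFourCycle.reverse (h : IsFourCycle G a b c d) : IsFourCycle G a d c b :=
  ⟨h.adj_da.symm, h.adj_cd.symm, h.adj_bc.symm, h.adj_ab.symm, h.ne_ac, h.ne_bd.symm⟩

theorem IsFourCycle.mono (hGH : G ≤ H) (h : IsFourCycle G a b c d) : IsFourCycle H a b c d :=
  ⟨hGH h.adj_ab, hGH h.adj_bc, hGH h.adj_cd, hGH h.adj_da, h.ne_ac, h.ne_bd⟩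

/-- The set `s` is the vertex set of a four-cycle of `G`. -/
def IsFourCycleSet (G : SimpleGraph α) (s : Set α) : Prop :=
  ∃ a b c d, s = {a, b, c, d} ∧ IsFourCycle G a b c d

theorem IsFourCycleSet.mono (hGH : G ≤ H) {s : Set α} :
    IsFourCycleSet G s → IsFourCycleSet H s :=
  fun ⟨a, b, c, d, hs, h⟩ => ⟨a, b, c, d, hs, h.mono hGH⟩

theorem IsFourCycleSet.exists_isFourCycle_of_mem {s : Set α} (hs : IsFourCycleSet G s) {v : α}
    (hv : v ∈ s) : ∃ b c d, s = {v, b, c, d} ∧ IsFourCycle G v b c d := by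
  have hrot : ∀ w x y z : α, ({w, x, y, z} : Set α) = {x, y, z, w} := by grind
  obtain ⟨a, b, c, d, rfl, h⟩ := hs
  rcases hv with rfl | rfl | rfl | rfl
  · exact ⟨b, c, d, rfl, h⟩
  · exact ⟨c, d, a, hrot _ _ _ _, h.rotate⟩
  · exact ⟨d, a, b, by rw [hrot, hrot], h.rotate.rotate⟩
  · exact ⟨a, b, c, by rw [hrot, hrot, hrot], h.rotate.rotate.rotate⟩

end FourCycles

section DisjointFourCycles

variable {α : Type*} {G : SimpleGraph α} {𝓢 : Set (Set α)} {a b c d : α}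

/-- Some member of the family `𝓢` contains both `u` and `v`. -/
def InCommonMember (𝓢 : Set (Set α)) (u v : α) : Prop :=
  ∃ s ∈ 𝓢, u ∈ s ∧ v ∈ s

theorem InCommonMember.symm {u v : α} : InCommonMember 𝓢 u v → InCommonMember 𝓢 v u :=
  fun ⟨s, hs, hu, hv⟩ => ⟨s, hs, hv, hu⟩

theorem inCommonMember_comm {u v : α} : InCommonMember 𝓢 u v ↔ InCommonMember 𝓢 v u :=
  ⟨.symm, .symm⟩

theorem inCommonMember_iff_mem (hdisj : 𝓢.PairwiseDisjoint id) {s : Set α} (hs : s ∈ 𝓢) {u v : α}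
    (hu : u ∈ s) : InCommonMember 𝓢 u v ↔ v ∈ s :=
  ⟨fun ⟨_, ht, hut, hvt⟩ => hdisj.elim_set hs ht u hu hut ▸ hvt, fun hv => ⟨s, hs, hu, hv⟩⟩

theorem IsFourCycle.adj_and_inCommonMember_iff (h : IsFourCycle G a b c d) (C : G.Coloring Bool)
    (hdisj : 𝓢.PairwiseDisjoint id) (hs : {a, b, c, d} ∈ 𝓢) {w : α} :
    G.Adj a w ∧ InCommonMember 𝓢 a w ↔ w = b ∨ w = d := by
  rw [inCommonMember_iff_mem hdisj hs (by simp)]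
  constructor
  · rintro ⟨haw, rfl | rfl | rfl | rfl⟩
    · exact absurd haw (G.loopless.irrefl _)
    · exact .inl rfl
    · exact absurd haw (not_adj_of_adj_of_adj C h.adj_ab h.adj_bc)
    · exact .inr rfl
  · rintro (rfl | rfl)
    · exact ⟨h.adj_ab, by simp⟩
    · exact ⟨h.adj_da.symm, by simp⟩

/-- Two vertices are identified when they are equal or opposite on one of the disjoint four-cycles
of `𝓢`; the latter is expressed by `C`, in which opposite vertices are those of equal colour. -/
def oppositeSetoid (C : G.Coloring Bool) (hdisj : 𝓢.PairwiseDisjoint id) : Setoid α where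
  r u v := u = v ∨ C u = C v ∧ InCommonMember 𝓢 u v
  iseqv :=
    { refl := fun _ => .inl rfl
      symm := by
        rintro u v (rfl | ⟨hC, huv⟩)
        exacts [.inl rfl, .inr ⟨hC.symm, huv.symm⟩]
      trans := by
        rintro u v w (rfl | ⟨hC, s, hs, hu, hv⟩) (rfl | ⟨hC', hvw⟩)
        · exact .inl rfl
        · exact .inr ⟨hC', hvw⟩
        · exact .inr ⟨hC, s, hs, hu, hv⟩
        · exact .inr ⟨hC.trans hC', s, hs, hu, (inCommonMember_iff_mem hdisj hs hv).1 hvw⟩ }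

theorem IsFourCycle.oppositeSetoid_iff (h : IsFourCycle G a b c d) (C : G.Coloring Bool)
    (hdisj : 𝓢.PairwiseDisjoint id) (hs : {a, b, c, d} ∈ 𝓢) {w : α} :
    oppositeSetoid C hdisj a w ↔ w = a ∨ w = c := by
  have hac := coloring_eq_of_adj_of_adj C h.adj_ab h.adj_bc
  have hab := C.valid h.adj_ab
  have hda := C.valid h.adj_da
  change a = w ∨ C a = C w ∧ InCommonMember 𝓢 a w ↔ _
  rw [inCommonMember_iff_mem hdisj hs (by simp)]
  constructor
  · rintro (rfl | ⟨hC, rfl | rfl | rfl | rfl⟩) <;> simp_all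
  · rintro (rfl | rfl) <;> simp [hac]

theorem oppositeSetoid_iff_eq (C : G.Coloring Bool) (hdisj : 𝓢.PairwiseDisjoint id) {v w : α}
    (hv : ∀ s ∈ 𝓢, v ∉ s) : oppositeSetoid C hdisj v w ↔ w = v :=
  ⟨fun h => h.elim Eq.symm fun ⟨_, s, hs, hvs, _⟩ => absurd hvs (hv s hs), fun h => .inl h.symm⟩

open Classical in
/-- The edges of `G` inside members of `𝓢` get weight `1`, the other ones weight `4`. For a
disjoint family of four-cycles in a cubic graph, every class of `oppositeSetoid` then has total
weight `12`. -/
noncomputable def edgeWeight (G : SimpleGraph α) (𝓢 : Set (Set α)) (u v : α) : ℕ :=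
  if G.Adj u v then if InCommonMember 𝓢 u v then 1 else 4 else 0

theorem edgeWeight_comm (u v : α) : edgeWeight G 𝓢 u v = edgeWeight G 𝓢 v u := by
  classical exact if_congr (G.adj_comm u v) (if_congr inCommonMember_comm rfl rfl) rfl

theorem adj_of_edgeWeight_pos {u v : α} (h : 0 < edgeWeight G 𝓢 u v) : G.Adj u v := by
  by_contra huv
  simp [edgeWeight, huv] at h

open Classical in
theorem sum_edgeWeight_add [Fintype α] (v : α) [Fintype (G.neighborSet v)] :
    ∑ w, edgeWeight G 𝓢 v w + 3 * ({w | G.Adj v w ∧ InCommonMember 𝓢 v w} : Finset α).card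
      = 4 * G.degree v := by
  have hsplit (w : α) : edgeWeight G 𝓢 v w + 3 * (if G.Adj v w ∧ InCommonMember 𝓢 v w then 1 else 0)
      = 4 * if G.Adj v w then 1 else 0 := by
    unfold edgeWeight
    split_ifs <;> simp_all
  have hnbr : G.neighborFinset v = ({w | G.Adj v w} : Finset α) := by ext; simp
  simp only [← card_neighborFinset_eq_degree, hnbr, Finset.card_filter, Finset.mul_sum,
    ← Finset.sum_add_distrib, hsplit]

theorem sum_edgeWeight_of_forall_notMem [Fintype α] [G.LocallyFinite]
    (hreg : G.IsRegularOfDegree 3) {v : α} (hv : ∀ s ∈ 𝓢, v ∉ s) :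
    ∑ w, edgeWeight G 𝓢 v w = 12 := by
  classical
  have hnone : ({w | G.Adj v w ∧ InCommonMember 𝓢 v w} : Finset α) = ∅ :=
    Finset.filter_eq_empty_iff.2 fun w _ ⟨_, s, hs, hvs, _⟩ => hv s hs hvs
  simpa [hnone, hreg v] using sum_edgeWeight_add (G := G) (𝓢 := 𝓢) v

theorem IsFourCycle.sum_edgeWeight [Fintype α] [G.LocallyFinite] (h : IsFourCycle G a b c d)
    (C : G.Coloring Bool) (hreg : G.IsRegularOfDegree 3) (hdisj : 𝓢.PairwiseDisjoint id)
    (hs : {a, b, c, d} ∈ 𝓢) : ∑ w, edgeWeight G 𝓢 a w = 6 := by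
  classical
  have htwo : ({w | G.Adj a w ∧ InCommonMember 𝓢 a w} : Finset α) = {b, d} := by
    ext w
    simp [h.adj_and_inCommonMember_iff C hdisj hs]
  have hsum := sum_edgeWeight_add (G := G) (𝓢 := 𝓢) a
  rw [htwo, Finset.card_pair h.ne_bd, hreg a] at hsum
  lia

theorem sum_edgeWeight_oppositeSetoid [Fintype α] [G.LocallyFinite] (C : G.Coloring Bool)
    (hreg : G.IsRegularOfDegree 3) (h𝓢 : ∀ s ∈ 𝓢, IsFourCycleSet G s)
    (hdisj : 𝓢.PairwiseDisjoint id) [DecidableRel (oppositeSetoid C hdisj)] (v : α) :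
    ∑ u with oppositeSetoid C hdisj v u, ∑ w, edgeWeight G 𝓢 u w = 12 := by
  classical
  by_cases hv : ∃ s ∈ 𝓢, v ∈ s
  · obtain ⟨s, hs, hvs⟩ := hv
    obtain ⟨b, c, d, rfl, h⟩ := (h𝓢 s hs).exists_isFourCycle_of_mem hvs
    have hclass : ({u | oppositeSetoid C hdisj v u} : Finset α) = {v, c} := by
      ext u
      simp [h.oppositeSetoid_iff C hdisj hs]
    have hs' : {c, d, v, b} ∈ 𝓢 := by
      convert hs using 1
      grind
    rw [hclass, Finset.sum_pair h.ne_ac, h.sum_edgeWeight C hreg hdisj hs,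
      h.rotate.rotate.sum_edgeWeight C hreg hdisj hs']
  · push Not at hv
    have hclass : ({u | oppositeSetoid C hdisj v u} : Finset α) = {v} := by
      ext u
      simp [oppositeSetoid_iff_eq C hdisj hv]
    rw [hclass, Finset.sum_singleton, sum_edgeWeight_of_forall_notMem hreg hv]

theorem IsFourCycle.mem_iff_notMem_of_existsUnique (h : IsFourCycle G a b c d)
    (C : G.Coloring Bool) (hdisj : 𝓢.PairwiseDisjoint id) (hs : {a, b, c, d} ∈ 𝓢) {T : Set α}
    (hT : ∀ v, ∃! u, u ∈ T ∧ oppositeSetoid C hdisj v u) : a ∈ T ↔ c ∉ T := by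
  obtain ⟨u, ⟨huT, hu⟩, huniq⟩ := hT a
  simp only [h.oppositeSetoid_iff C hdisj hs] at hu huniq
  have := h.ne_ac
  grind

theorem existsUnique_adj_inCommonMember_of_notMem (C : G.Coloring Bool)
    (h𝓢 : ∀ s ∈ 𝓢, IsFourCycleSet G s) (hdisj : 𝓢.PairwiseDisjoint id) {T : Set α}
    (hT : ∀ v, ∃! u, u ∈ T ∧ oppositeSetoid C hdisj v u) {v : α} (hv : v ∉ T) :
    ∃! w, w ∉ T ∧ G.Adj v w ∧ InCommonMember 𝓢 v w := by
  obtain ⟨s, hs, hvs⟩ : ∃ s ∈ 𝓢, v ∈ s := by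
    obtain ⟨u, ⟨huT, rfl | ⟨-, s, hs, hvs, -⟩⟩, -⟩ := hT v
    exacts [absurd huT hv, ⟨s, hs, hvs⟩]
  obtain ⟨b, c, d, rfl, h⟩ := (h𝓢 s hs).exists_isFourCycle_of_mem hvs
  have hbd := h.rotate.mem_iff_notMem_of_existsUnique C hdisj (by convert hs using 1; grind) hT
  simp only [h.adj_and_inCommonMember_iff C hdisj hs]
  by_cases hb : b ∈ T
  · exact ⟨d, by grind, by grind⟩
  · exact ⟨b, by grind, by grind⟩

/-- Contracting each pair of opposite vertices turns the four-cycles of `𝓢` into (multiple) edges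
of a weighted regular bipartite graph. A perfect matching there lifts to a matching of one vertex
of each class, and on every four-cycle the two vertices left over are adjacent. -/
theorem exists_isMatchingMap_forall_not_isFourCycleSet [Finite α] [G.LocallyFinite]
    (C : G.Coloring Bool) (hreg : G.IsRegularOfDegree 3) (h𝓢 : ∀ s ∈ 𝓢, IsFourCycleSet G s)
    (hdisj : 𝓢.PairwiseDisjoint id) :
    ∃ m, IsMatchingMap G m ∧ ∀ s ∈ 𝓢, ¬ IsFourCycleSet (unmatchedGraph G m) s := by
  classical
  have := Fintype.ofFinite α
  obtain ⟨T, μ, hT, hμ⟩ := exists_transversal_involution (oppositeSetoid C hdisj)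
    (by norm_num) edgeWeight_comm (sum_edgeWeight_oppositeSetoid C hreg h𝓢 hdisj) C
    (fun u v huv => huv.elim (congrArg C) And.left)
    (fun u v huv => C.valid (adj_of_edgeWeight_pos huv))
  let R v w := v ∈ T ∧ w = μ v ∨ v ∉ T ∧ w ∉ T ∧ G.Adj v w ∧ InCommonMember 𝓢 v w
  have hR_symm : ∀ v w, R v w → R w v := by
    rintro v w (⟨hv, rfl⟩ | ⟨hv, hw, hadj, hcom⟩)
    · exact .inl ⟨(hμ v hv).1, (hμ v hv).2.1.symm⟩
    · exact .inr ⟨hw, hv, hadj.symm, hcom.symm⟩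
  have hR_unique : ∀ v, ∃! w, R v w := fun v => by
    by_cases hv : v ∈ T
    · simp [R, hv]
    · simpa [R, hv] using existsUnique_adj_inCommonMember_of_notMem C h𝓢 hdisj hT hv
  obtain ⟨m, hm, hmR⟩ := exists_involutive_of_existsUnique hR_symm hR_unique
  refine ⟨m, ⟨hm, fun v => ?_⟩, fun s hs hsm => ?_⟩
  · obtain ⟨hv, hvm⟩ | ⟨-, -, hadj, -⟩ := hmR v
    exacts [hvm ▸ adj_of_edgeWeight_pos (hμ v hv).2.2, hadj]
  · obtain ⟨v, hvs, hv⟩ : ∃ v ∈ s, v ∉ T := by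
      obtain ⟨a, b, c, d, rfl, h⟩ := h𝓢 s hs
      have hac := h.mem_iff_notMem_of_existsUnique C hdisj hs hT
      by_cases ha : a ∈ T
      exacts [⟨c, by simp, hac.1 ha⟩, ⟨a, by simp, ha⟩]
    obtain ⟨b, c, d, rfl, h⟩ := hsm.exists_isFourCycle_of_mem hvs
    obtain ⟨hv', -⟩ | ⟨-, -, hcom⟩ := hmR v
    · exact hv hv'
    · obtain hmv | hmv := ((h.mono (unmatchedGraph_le G m)).adj_and_inCommonMember_iff C hdisj hs).1
        hcom
      exacts [h.adj_ab.2.1 hmv, h.adj_da.2.2 hmv]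

end DisjointFourCycles

section Flip

variable {α : Type*} {G : SimpleGraph α} {m m' : α → α} {a b c d : α}

theorem IsFourCycle.eq_or_eq_or_eq_partner_of_adj [Fintype (G.neighborSet a)]
    (h : IsFourCycle (unmatchedGraph G m) a b c d) (hm : IsMatchingMap G m)
    (hdeg : G.degree a ≤ 3) {x : α} (hx : G.Adj a x) : x = b ∨ x = d ∨ x = m a :=
  eq_or_eq_or_eq_of_degree_le_three hdeg h.adj_ab.1 h.adj_da.1.symm (hm.adj a) h.ne_bd
    h.adj_ab.2.1.symm h.adj_da.2.2.symm hx

theorem IsFourCycle.not_adj_partner [Fintype (G.neighborSet c)]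
    (h : IsFourCycle (unmatchedGraph G m) a b c d) (hm : IsMatchingMap G m)
    (hdeg : G.degree c ≤ 3) : ¬ G.Adj c (m a) := by
  intro hadj
  rcases h.rotate.rotate.eq_or_eq_or_eq_partner_of_adj hm hdeg hadj with hd | hb | hc
  · exact h.adj_da.2.2 hd
  · exact h.adj_ab.2.1 hb
  · exact h.ne_ac (hm.involutive.injective hc)

/-- The matching `m'` arises from `m` by replacing the edges `{a, m a}` and `{b, m b}` by
`{a, b}` and `{m a, m b}`. -/
structure IsFlip (m m' : α → α) (a b : α) : Prop where
  map_left : m' a = b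
  map_right : m' b = a
  map_partner_left : m' (m a) = m b
  map_partner_right : m' (m b) = m a
  map_of_ne {v : α} : v ≠ a → v ≠ b → v ≠ m a → v ≠ m b → m' v = m v

theorem IsFlip.symm (h : IsFlip m m' a b) : IsFlip m m' b a :=
  ⟨h.map_right, h.map_left, h.map_partner_right, h.map_partner_left,
    fun hb ha hb' ha' => h.map_of_ne ha hb ha' hb'⟩

theorem IsMatchingMap.exists_isFlip (hm : IsMatchingMap G m) (hab : G.Adj a b)
    (hmab : G.Adj (m a) (m b)) (hne : m a ≠ b) : ∃ m', IsMatchingMap G m' ∧ IsFlip m m' a b := by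
  classical
  let s := Equiv.swap b (m a)
  have ha : a ≠ m a := (hm.adj a).ne
  have hb : b ≠ m b := (hm.adj b).ne
  have hinv := hm.involutive
  have hflip : IsFlip m (s ∘ m ∘ s) a b := by
    refine ⟨?_, ?_, ?_, ?_, ?_⟩ <;> grind [Function.Involutive, hab.ne, hmab.ne]
  refine ⟨_, ⟨fun v => by simp [s, hinv _], fun v => ?_⟩, hflip⟩
  by_cases hva : v = a
  · rw [hva, hflip.map_left]; exact hab
  by_cases hvb : v = b
  · rw [hvb, hflip.map_right]; exact hab.symm
  by_cases hvma : v = m a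
  · rw [hvma, hflip.map_partner_left]; exact hmab
  by_cases hvmb : v = m b
  · rw [hvmb, hflip.map_partner_right]; exact hmab.symm
  rw [hflip.map_of_ne hva hvb hvma hvmb]
  exact hm.adj v

theorem IsFlip.not_isFourCycle_partner [G.LocallyFinite] (hf : IsFlip m m' a b)
    (hm : IsMatchingMap G m) (C : G.Coloring Bool) (hdeg : ∀ v, G.degree v ≤ 3)
    (h : IsFourCycle (unmatchedGraph G m) a b c d) (y z : α) :
    ¬ IsFourCycle (unmatchedGraph G m') a (m a) y z := by
  intro h'
  have hz : z = d := by
    rcases h.eq_or_eq_or_eq_partner_of_adj hm (hdeg a) h'.adj_da.1.symm with rfl | rfl | rfl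
    exacts [absurd hf.map_left h'.adj_da.2.2, rfl, absurd rfl h'.ne_bd]
  subst hz
  have hzb : z ≠ m b := fun hzb =>
    C.valid (hm.adj b) (hzb ▸ coloring_eq_of_adj_of_adj C h.adj_bc.1 h.adj_cd.1)
  have hmz : m' z = m z := hf.map_of_ne h.adj_da.1.ne h.ne_bd.symm h.adj_da.2.2.symm hzb
  have hy : y = c := by
    rcases h.rotate.rotate.rotate.eq_or_eq_or_eq_partner_of_adj hm (hdeg z) h'.adj_cd.1.symm
      with rfl | rfl | rfl
    exacts [absurd rfl h'.ne_ac, rfl, absurd hmz h'.adj_cd.2.2]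
  exact h.not_adj_partner hm (hdeg c) (hy ▸ h'.adj_bc.1.symm)

theorem IsFlip.isFourCycle_unmatchedGraph [G.LocallyFinite] (hf : IsFlip m m' a b)
    (hm : IsMatchingMap G m) (C : G.Coloring Bool) (hdeg : ∀ v, G.degree v ≤ 3)
    (h : IsFourCycle (unmatchedGraph G m) a b c d) {w x y z : α}
    (h' : IsFourCycle (unmatchedGraph G m') w x y z) :
    IsFourCycle (unmatchedGraph G m) w x y z := by
  have hedge {w x y z : α} (h' : IsFourCycle (unmatchedGraph G m') w x y z) :
      (unmatchedGraph G m).Adj w x := by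
    suffices hwx : m w ≠ x from ⟨h'.adj_ab.1, hwx, hm.ne_iff.1 hwx⟩
    rintro rfl
    have hkept : m' w ≠ m w := h'.adj_ab.2.1
    have hinv := hm.involutive
    by_cases hwa : w = a
    · exact hf.not_isFourCycle_partner hm C hdeg h y z (hwa ▸ h')
    by_cases hwb : w = b
    · exact hf.symm.not_isFourCycle_partner hm C hdeg h.rotate.reverse y z (hwb ▸ h')
    by_cases hwma : w = m a
    · refine hf.not_isFourCycle_partner hm C hdeg h z y ?_
      simpa only [hwma, hinv a] using h'.rotate.reverse
    by_cases hwmb : w = m b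
    · refine hf.symm.not_isFourCycle_partner hm C hdeg h.rotate.reverse z y ?_
      simpa only [hwmb, hinv b] using h'.rotate.reverse
    exact hkept (hf.map_of_ne hwa hwb hwma hwmb)
  exact ⟨hedge h', hedge h'.rotate, hedge h'.rotate.rotate, hedge h'.rotate.rotate.rotate,
    h'.ne_ac, h'.ne_bd⟩

theorem IsFlip.not_isFourCycle_left [G.LocallyFinite] (hf : IsFlip m m' a b)
    (hm : IsMatchingMap G m) (C : G.Coloring Bool) (hdeg : ∀ v, G.degree v ≤ 3)
    (h : IsFourCycle (unmatchedGraph G m) a b c d) (x y z : α) :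
    ¬ IsFourCycle (unmatchedGraph G m') a x y z := by
  intro h'
  have hH := hf.isFourCycle_unmatchedGraph hm C hdeg h h'
  have hx : x = d := by
    rcases h.eq_or_eq_or_eq_partner_of_adj hm (hdeg a) h'.adj_ab.1 with rfl | rfl | rfl
    exacts [absurd hf.map_left h'.adj_ab.2.1, rfl, absurd rfl hH.adj_ab.2.1]
  have hz : z = d := by
    rcases h.eq_or_eq_or_eq_partner_of_adj hm (hdeg a) h'.adj_da.1.symm with rfl | rfl | rfl
    exacts [absurd hf.map_left h'.adj_da.2.2, rfl, absurd rfl hH.adj_da.2.2]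
  exact h'.ne_bd (hx.trans hz.symm)

theorem IsFourCycle.adj_partner_or_adj_partner [G.LocallyFinite]
    (h : IsFourCycle (unmatchedGraph G m) a b c d) (hm : IsMatchingMap G m)
    (hdeg : ∀ v, G.degree v ≤ 3) {x y z : α} (h' : IsFourCycle G a x y z)
    (hne : ({a, x, y, z} : Set α) ≠ {a, b, c, d}) :
    G.Adj (m a) (m b) ∨ G.Adj (m a) (m d) := by
  have hpartner {b d y : α} (h : IsFourCycle (unmatchedGraph G m) a b c d)
      (h' : IsFourCycle G a b y (m a)) : G.Adj (m a) (m b) := by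
    rcases h.rotate.eq_or_eq_or_eq_partner_of_adj hm (hdeg b) h'.adj_bc with rfl | rfl | rfl
    exacts [absurd h'.adj_cd (h.not_adj_partner hm (hdeg _)), absurd rfl h'.ne_ac, h'.adj_cd.symm]
  have hopposite {b d y : α} (h : IsFourCycle (unmatchedGraph G m) a b c d)
      (h' : IsFourCycle G a b y d) : y = c := by
    rcases h.rotate.eq_or_eq_or_eq_partner_of_adj hm (hdeg b) h'.adj_bc with rfl | rfl | hyb
    · rfl
    · exact absurd rfl h'.ne_ac
    rcases h.rotate.rotate.rotate.eq_or_eq_or_eq_partner_of_adj hm (hdeg d) h'.adj_cd.symm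
      with rfl | rfl | hyd
    · exact absurd rfl h'.ne_ac
    · rfl
    · exact absurd (hm.involutive.injective (hyb.symm.trans hyd)) h.ne_bd
  rcases h.eq_or_eq_or_eq_partner_of_adj hm (hdeg a) h'.adj_ab with rfl | rfl | rfl <;>
  rcases h.eq_or_eq_or_eq_partner_of_adj hm (hdeg a) h'.adj_da.symm with rfl | rfl | rfl
  · exact absurd rfl h'.ne_bd
  · exact absurd (by rw [hopposite h h']) hne
  · exact .inl (hpartner h h')
  · refine absurd ?_ hne
    rw [hopposite h.reverse h']
    grind
  · exact absurd rfl h'.ne_bd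
  · exact .inr (hpartner h.reverse h')
  · exact .inl (hpartner h h'.reverse)
  · exact .inr (hpartner h.reverse h'.reverse)
  · exact absurd rfl h'.ne_bd

end Flip

section SquareFreeTwoFactor

variable {α : Type*} {G : SimpleGraph α}

/-- A four-cycle of `G` meeting no other four-cycle of `G`. -/
def IsIsolatedFourCycleSet (G : SimpleGraph α) (s : Set α) : Prop :=
  IsFourCycleSet G s ∧ ∀ r, IsFourCycleSet G r → (r ∩ s).Nonempty → r = s

theorem pairwiseDisjoint_setOf_isIsolatedFourCycleSet (G : SimpleGraph α) :
    {s | IsIsolatedFourCycleSet G s}.PairwiseDisjoint id := by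
  intro s hs t ht hst
  by_contra hmeet
  exact hst (ht.2 s hs.1 (Set.not_disjoint_iff_nonempty_inter.1 hmeet))

/-- The vertices lying on a four-cycle of `G`. -/
def fourCycleVertices (G : SimpleGraph α) : Set α :=
  {v | ∃ b c d, IsFourCycle G v b c d}

theorem IsFlip.fourCycleVertices_ssubset [G.LocallyFinite] {m m' : α → α} {a b c d : α}
    (hf : IsFlip m m' a b) (hm : IsMatchingMap G m) (C : G.Coloring Bool)
    (hdeg : ∀ v, G.degree v ≤ 3) (h : IsFourCycle (unmatchedGraph G m) a b c d) :
    fourCycleVertices (unmatchedGraph G m') ⊂ fourCycleVertices (unmatchedGraph G m) := by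
  refine (Set.ssubset_iff_of_subset ?_).2 ⟨a, ⟨b, c, d, h⟩, ?_⟩
  · rintro v ⟨x, y, z, hv⟩
    exact ⟨x, y, z, hf.isFourCycle_unmatchedGraph hm C hdeg h hv⟩
  · rintro ⟨x, y, z, ha⟩
    exact hf.not_isFourCycle_left hm C hdeg h x y z ha

theorem exists_isFlip_of_not_isIsolatedFourCycleSet [G.LocallyFinite] {m : α → α}
    (hm : IsMatchingMap G m) (hdeg : ∀ v, G.degree v ≤ 3) {s : Set α}
    (hs : IsFourCycleSet (unmatchedGraph G m) s) (hiso : ¬ IsIsolatedFourCycleSet G s) :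
    ∃ m' a b c d, IsMatchingMap G m' ∧ IsFlip m m' a b ∧
      IsFourCycle (unmatchedGraph G m) a b c d := by
  obtain ⟨r, hr, ⟨a, har, has⟩, hrs⟩ :
      ∃ r, IsFourCycleSet G r ∧ (r ∩ s).Nonempty ∧ r ≠ s := by
    simpa [IsIsolatedFourCycleSet, hs.mono (unmatchedGraph_le G m)] using hiso
  obtain ⟨b, c, d, rfl, h⟩ := hs.exists_isFourCycle_of_mem has
  obtain ⟨x, y, z, rfl, h'⟩ := hr.exists_isFourCycle_of_mem har
  rcases h.adj_partner_or_adj_partner hm hdeg h' hrs with hadj | hadj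
  · obtain ⟨m', hm', hf⟩ := hm.exists_isFlip h.adj_ab.1 hadj h.adj_ab.2.1
    exact ⟨m', a, b, c, d, hm', hf, h⟩
  · obtain ⟨m', hm', hf⟩ := hm.exists_isFlip h.adj_da.1.symm hadj h.adj_da.2.2
    exact ⟨m', a, d, c, b, hm', hf, h.reverse⟩

theorem exists_isMatchingMap_fourCycleVertices_eq_empty [Finite α] [G.LocallyFinite]
    (C : G.Coloring Bool) (hreg : G.IsRegularOfDegree 3) :
    ∃ m, IsMatchingMap G m ∧ fourCycleVertices (unmatchedGraph G m) = ∅ := by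
  have hdeg v : G.degree v ≤ 3 := (hreg v).le
  obtain ⟨m, ⟨hm, hm_hit⟩, hmin⟩ := exists_minimalFor_of_wellFoundedLT
    (fun m => IsMatchingMap G m ∧
      ∀ s, IsIsolatedFourCycleSet G s → ¬ IsFourCycleSet (unmatchedGraph G m) s)
    (fun m => fourCycleVertices (unmatchedGraph G m))
    (exists_isMatchingMap_forall_not_isFourCycleSet C hreg (fun s hs => hs.1)
      (pairwiseDisjoint_setOf_isIsolatedFourCycleSet G))
  refine ⟨m, hm, Set.eq_empty_of_forall_notMem fun v ⟨x, y, z, hv⟩ => ?_⟩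
  have hs : IsFourCycleSet (unmatchedGraph G m) {v, x, y, z} := ⟨v, x, y, z, rfl, hv⟩
  obtain ⟨m', a, b, c, d, hm', hf, h⟩ :=
    exists_isFlip_of_not_isIsolatedFourCycleSet hm hdeg hs fun hiso => hm_hit _ hiso hs
  have hlt := hf.fourCycleVertices_ssubset hm C hdeg h
  refine hlt.not_ge (hmin ⟨hm', fun s hs hsm => hm_hit s hs ?_⟩ hlt.le)
  obtain ⟨w, x, y, z, rfl, hw⟩ := hsm
  exact ⟨w, x, y, z, rfl, hf.isFourCycle_unmatchedGraph hm C hdeg h hw⟩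

end SquareFreeTwoFactor

section TwoFactors

variable {α : Type*} {G H : SimpleGraph α}

/-- The cycles of `σ` are the cycles, each traversed in a chosen direction, of a two-factor
of `G`. -/
structure IsTwoFactorPerm (G : SimpleGraph α) (σ : Equiv.Perm α) : Prop where
  adj (v : α) : G.Adj v (σ v)
  apply_apply_ne (v : α) : σ (σ v) ≠ v

theorem IsTwoFactorPerm.mono (hGH : G ≤ H) {σ : Equiv.Perm α} (h : IsTwoFactorPerm G σ) :
    IsTwoFactorPerm H σ :=
  ⟨fun v => hGH (h.adj v), h.apply_apply_ne⟩

theorem IsTwoFactorPerm.isFourCycle_of_iterate_eq {σ : Equiv.Perm α} (h : IsTwoFactorPerm G σ)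
    {v : α} (hv : σ^[4] v = v) : IsFourCycle G v (σ v) (σ (σ v)) (σ (σ (σ v))) where
  adj_ab := h.adj v
  adj_bc := h.adj (σ v)
  adj_cd := h.adj (σ (σ v))
  adj_da := by
    have hlast := h.adj (σ (σ (σ v)))
    rwa [show σ (σ (σ (σ v))) = v from hv] at hlast
  ne_ac := (h.apply_apply_ne v).symm
  ne_bd := (h.apply_apply_ne (σ v)).symm

/-- Traverse the edges of a perfect matching from `true` to `false` and those of the complementary
one from `false` to `true`. -/
theorem exists_isTwoFactorPerm_of_isRegularOfDegree_two [Finite α] [G.LocallyFinite]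
    (C : G.Coloring Bool) (hreg : G.IsRegularOfDegree 2) : ∃ σ, IsTwoFactorPerm G σ := by
  classical
  have := Fintype.ofFinite α
  obtain ⟨m, hm⟩ := exists_isMatchingMap_of_isRegularOfDegree C two_pos hreg
  let K := unmatchedGraph G m
  have hK : K.IsRegularOfDegree 1 := hm.isRegularOfDegree_unmatchedGraph hreg
  have hKG : K ≤ G := unmatchedGraph_le G m
  obtain ⟨m', hm'⟩ := exists_isMatchingMap_of_isRegularOfDegree
    (C.comp (Hom.ofLE hKG)) one_pos hK
  have hC v : C (m v) = !C v := Bool.eq_not_of_ne (C.valid (hm.adj v)).symm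
  have hC' v : C (m' v) = !C v := Bool.eq_not_of_ne (C.valid (hKG (hm'.adj v))).symm
  have hne v : m (m' v) ≠ v := (hm'.adj v).2.2
  have hne' v : m' (m v) ≠ v := fun h => (hm'.adj (m v)).2.1 (by rw [hm.involutive, h])
  let σ : Equiv.Perm α :=
    { toFun v := if C v then m v else m' v
      invFun v := if C v then m' v else m v
      left_inv v := by cases hv : C v <;> simp [hv, hC, hC', hm.involutive v, hm'.involutive v]
      right_inv v := by cases hv : C v <;> simp [hv, hC, hC', hm.involutive v, hm'.involutive v] }
  refine ⟨σ, fun v => ?_, fun v => ?_⟩ <;>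
    cases hv : C v <;> simp [σ, hv, hC, hC', hne, hne', hm.adj, hKG (hm'.adj v)]

theorem exists_isTwoFactorPerm_forall_iterate_four_ne [Finite α] [G.LocallyFinite]
    (C : G.Coloring Bool) (hreg : G.IsRegularOfDegree 3) :
    ∃ σ : Equiv.Perm α, IsTwoFactorPerm G σ ∧ ∀ v, σ^[4] v ≠ v := by
  classical
  have := Fintype.ofFinite α
  obtain ⟨m, hm, hempty⟩ := exists_isMatchingMap_fourCycleVertices_eq_empty C hreg
  have hle := unmatchedGraph_le G m
  obtain ⟨σ, hσ⟩ := exists_isTwoFactorPerm_of_isRegularOfDegree_two (C.comp (Hom.ofLE hle))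
    (hm.isRegularOfDegree_unmatchedGraph hreg)
  exact ⟨σ, hσ.mono hle, fun v hv =>
    Set.eq_empty_iff_forall_notMem.1 hempty v ⟨_, _, _, hσ.isFourCycle_of_iterate_eq hv⟩⟩

end TwoFactors

section InducedPaths

variable {α : Type*} {G : SimpleGraph α}

theorem isInducedPathOn_range_s13 {n : ℕ} (e : pathGraph n ↪g G) : IsInducedPathOn G (Set.range e) n :=
  ⟨e.isoInduceRange.symm⟩

theorem IsInducedPathOn.ncard_eq {P : Set α} {n : ℕ} (h : IsInducedPathOn G P n) :
    P.ncard = n := by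
  obtain ⟨e⟩ := h
  rw [← Nat.card_coe_set_eq, Nat.card_congr e.toEquiv, Nat.card_fin]

/-- The set `U` splits into induced paths of orders `3`, `4` and `5`. -/
def HasShortPathPartition (G : SimpleGraph α) (U : Set α) : Prop :=
  ∃ F : Finpartition U, ∀ P ∈ F.parts, ∃ n ∈ Set.Icc 3 5, IsInducedPathOn G P n

theorem hasShortPathPartition_empty (G : SimpleGraph α) : HasShortPathPartition G ∅ :=
  ⟨Finpartition.empty _, by simp⟩

theorem HasShortPathPartition.union {U P : Set α} {n : ℕ} (hU : HasShortPathPartition G U)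
    (hP : IsInducedPathOn G P n) (hn : n ∈ Set.Icc 3 5) (hdisj : Disjoint U P) :
    HasShortPathPartition G (U ∪ P) := by
  classical
  obtain ⟨F, hF⟩ := hU
  have hne : P ≠ ∅ := by
    rintro rfl
    have hn0 : 0 = n := by simpa using hP.ncard_eq
    simp [← hn0] at hn
  refine ⟨F.extend hne hdisj rfl, ?_⟩
  simpa using ⟨⟨n, hn, hP⟩, hF⟩

theorem hasShortPathPartition_univ_of_setoid [Finite α] (r : Setoid α)
    (h : ∀ v, HasShortPathPartition G {w | r v w}) : HasShortPathPartition G Set.univ := by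
  classical
  have hclasses : Setoid.IsPartition ((Set.toFinite r.classes).toFinset : Set (Set α)) := by
    simpa using Setoid.isPartition_classes r
  have hpart : ∀ U ∈ hclasses.finpartition.parts, HasShortPathPartition G U := by
    intro U hU
    obtain ⟨v, rfl⟩ : U ∈ r.classes := by simpa using hU
    have hv : {w | r v w} = {w | r w v} := Set.ext fun w => r.comm'
    exact hv ▸ h v
  choose F hF using hpart
  refine ⟨hclasses.finpartition.bind F, fun P hP => ?_⟩
  obtain ⟨U, hU, hPU⟩ := Finpartition.mem_bind.1 hP
  exact hF U hU P hPU

theorem ncard_mul_le_card_of_isPartition [Fintype α] {D : Set (Set α)}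
    (hD : Setoid.IsPartition D) {k : ℕ} (hk : ∀ P ∈ D, k ≤ P.ncard) :
    D.ncard * k ≤ Fintype.card α := by
  classical
  calc D.ncard * k = ∑ _P : D, k := by
        rw [Finset.sum_const, Finset.card_univ, smul_eq_mul, Set.ncard_eq_toFinset_card',
          Set.toFinset_card]
    _ ≤ ∑ P : D, (P : Set α).ncard := Finset.sum_le_sum fun P _ => hk P P.2
    _ = (Set.univ : Set α).ncard := by
        simp only [hD.ncard_eq_finsum Set.univ, Set.univ_inter, finsum_eq_sum_of_fintype]
    _ = Fintype.card α := by rw [Set.ncard_univ, Nat.card_eq_fintype_card]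

end InducedPaths

section Segments

variable {α : Type*} {G : SimpleGraph α} {f : ℕ → α} {s t l M : ℕ}

theorem adj_iff_of_forall_adj_succ (C : G.Coloring Bool) (hadj : ∀ i, G.Adj (f i) (f (i + 1)))
    {i k : ℕ} (hk : k ∈ Set.Icc 1 4) (hchord : k = 3 → ¬ G.Adj (f i) (f (i + 3))) :
    G.Adj (f i) (f (i + k)) ↔ k = 1 := by
  have htwo j : C (f j) = C (f (j + 2)) := coloring_eq_of_adj_of_adj C (hadj j) (hadj (j + 1))
  obtain rfl | rfl | rfl | rfl : k = 1 ∨ k = 2 ∨ k = 3 ∨ k = 4 := by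
    simp only [Set.mem_Icc] at hk; lia
  · simp [hadj i]
  · simpa using fun h => C.valid h (htwo i)
  · simpa using hchord rfl
  · simpa using fun h => C.valid h ((htwo i).trans (htwo (i + 2)))

theorem isInducedPathOn_image_Ico (C : G.Coloring Bool)
    (hadj : ∀ i, G.Adj (f i) (f (i + 1))) (hinj : Set.InjOn f (Set.Ico s (s + l))) (hl : l ≤ 5)
    (hchord : ∀ i, s ≤ i → i + 3 < s + l → ¬ G.Adj (f i) (f (i + 3))) :
    IsInducedPathOn G (f '' Set.Ico s (s + l)) l := by
  have hlt (i j : Fin l) (hij : i < j) : G.Adj (f (s + i)) (f (s + j)) ↔ (i : ℕ) + 1 = j := by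
    have hj : s + j = s + i + (j - i : ℕ) := by lia
    rw [hj, adj_iff_of_forall_adj_succ C hadj (by simp only [Set.mem_Icc]; lia)
      (fun hk => hchord _ (by lia) (by lia))]
    lia
  let e : pathGraph l ↪g G :=
    { toFun i := f (s + i)
      inj' i j hij := by
        have := hinj (by simp) (by simp) hij
        lia
      map_rel_iff' := by
        intro i j
        change G.Adj (f (s + i)) (f (s + j)) ↔ (pathGraph l).Adj i j
        rw [pathGraph_adj]
        rcases lt_trichotomy i j with hij | rfl | hij
        · rw [hlt i j hij]
          lia
        · simp
        · rw [G.adj_comm, hlt j i hij]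
          lia }
  convert isInducedPathOn_range_s13 e using 1
  ext v
  constructor
  · rintro ⟨i, ⟨hsi, hil⟩, rfl⟩
    exact ⟨⟨i - s, by lia⟩, congrArg f (show s + (i - s) = i by lia)⟩
  · rintro ⟨i, rfl⟩
    exact ⟨s + i, by simp, rfl⟩

theorem HasShortPathPartition.image_Ico_add (C : G.Coloring Bool)
    (hadj : ∀ i, G.Adj (f i) (f (i + 1))) (hinj : Set.InjOn f (Set.Ico s t))
    (hl : l ∈ Set.Icc 3 5) (hlt : s + l ≤ t)
    (hchord : ∀ i, s ≤ i → i + 3 < s + l → ¬ G.Adj (f i) (f (i + 3)))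
    (h : HasShortPathPartition G (f '' Set.Ico (s + l) t)) :
    HasShortPathPartition G (f '' Set.Ico s t) := by
  have hsplit : Set.Ico s t = Set.Ico (s + l) t ∪ Set.Ico s (s + l) := by
    rw [Set.union_comm, Set.Ico_union_Ico_eq_Ico (by lia) hlt]
  have hpath := isInducedPathOn_image_Ico C hadj (hinj.mono (Set.Ico_subset_Ico_right hlt)) hl.2
    hchord
  rw [hsplit] at hinj ⊢
  rw [Set.image_union]
  refine h.union hpath hl (Set.disjoint_image_image fun i hi j hj hij => ?_)
  exact (hi.1.trans_eq (hinj (.inl hi) (.inr hj) hij)).not_gt hj.2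

theorem hasShortPathPartition_image_Ico_of_three_dvd (C : G.Coloring Bool)
    (hadj : ∀ i, G.Adj (f i) (f (i + 1))) (hinj : Set.InjOn f (Set.Ico s t)) (h3 : 3 ∣ t - s) :
    HasShortPathPartition G (f '' Set.Ico s t) := by
  obtain ⟨k, hk⟩ := h3
  induction k generalizing s with
  | zero => simpa [Set.Ico_eq_empty_of_le (show t ≤ s by lia)] using hasShortPathPartition_empty G
  | succ k ih =>
    refine .image_Ico_add C hadj hinj (by simp) (show s + 3 ≤ t by lia) (by lia) (ih ?_ (by lia))
    exact hinj.mono (Set.Ico_subset_Ico_left (by lia))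

theorem not_adj_add_three_of_adj_add_three [G.LocallyFinite] (hdeg : ∀ v, G.degree v ≤ 3)
    (hadj : ∀ i, G.Adj (f i) (f (i + 1))) (hinj : Set.InjOn f (Set.Ico 0 M)) {i : ℕ}
    (hi : i + 6 < M) (h : G.Adj (f i) (f (i + 3))) : ¬ G.Adj (f (i + 3)) (f (i + 6)) := by
  have hne {j k : ℕ} (hjk : j < k) (hk : k < M) : f j ≠ f k := fun heq =>
    hjk.ne (hinj ⟨Nat.zero_le _, hjk.trans hk⟩ ⟨Nat.zero_le _, hk⟩ heq)
  intro h'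
  rcases eq_or_eq_or_eq_of_degree_le_three (hdeg (f (i + 3))) h.symm (hadj (i + 2)).symm
    (hadj (i + 3)) (hne (by lia) (by lia)) (hne (by lia) (by lia)) (hne (by lia) (by lia)) h'
    with h6 | h6 | h6
  all_goals exact hne (by lia) hi h6.symm

theorem hasShortPathPartition_image_Ico_of_not_adj [G.LocallyFinite]
    (C : G.Coloring Bool) (hdeg : ∀ v, G.degree v ≤ 3) (hadj : ∀ i, G.Adj (f i) (f (i + 1)))
    (hinj : Set.InjOn f (Set.Ico 0 M)) (hM : 8 ≤ M) (h0 : ¬ G.Adj (f 0) (f 3)) :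
    HasShortPathPartition G (f '' Set.Ico 0 M) := by
  have hinj' i : Set.InjOn f (Set.Ico i M) := hinj.mono (Set.Ico_subset_Ico_left (Nat.zero_le i))
  have hthrees i (hi : 3 ∣ M - i) : HasShortPathPartition G (f '' Set.Ico i M) :=
    hasShortPathPartition_image_Ico_of_three_dvd C hadj (hinj' i) hi
  have hchord4 {i j : ℕ} (h : ¬ G.Adj (f i) (f (i + 3))) (hij : i ≤ j) (hj : j + 3 < i + 4) :
      ¬ G.Adj (f j) (f (j + 3)) := by
    rwa [show j = i by lia]
  obtain hM3 | hM3 | hM3 : M % 3 = 0 ∨ M % 3 = 1 ∨ M % 3 = 2 := by lia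
  · exact hthrees 0 (by lia)
  · exact .image_Ico_add (l := 4) C hadj hinj (by simp) (by lia) (fun _ => hchord4 h0)
      (hthrees _ (by lia))
  by_cases h4 : G.Adj (f 4) (f 7)
  · have h1 : ¬ G.Adj (f 1) (f 4) := fun h1 =>
      not_adj_add_three_of_adj_add_three hdeg hadj hinj (by lia) h1 h4
    refine .image_Ico_add (l := 5) C hadj hinj (by simp) (by lia) (fun i _ hi => ?_)
      (hthrees _ (by lia))
    obtain rfl | rfl : i = 0 ∨ i = 1 := by lia
    exacts [h0, h1]
  · exact .image_Ico_add (l := 4) C hadj hinj (by simp) (by lia) (fun _ => hchord4 h0)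
      (.image_Ico_add (l := 4) C hadj (hinj' _) (by simp) (by lia) (fun _ => hchord4 h4)
        (hthrees _ (by lia)))

end Segments

section Cycles

variable {α : Type*} {G : SimpleGraph α} {σ : Equiv.Perm α}

theorem setOf_sameCycle_eq_image_Ico [Finite α] (σ : Equiv.Perm α) (v : α) :
    {w | σ.SameCycle v w} = (fun i => σ^[i] v) '' Set.Ico 0 (Function.minimalPeriod σ v) := by
  ext w
  constructor
  · intro h
    obtain ⟨i, rfl⟩ := h.exists_nat_pow_eq
    refine ⟨i % Function.minimalPeriod σ v, ⟨Nat.zero_le _, Nat.mod_lt _ ?_⟩, ?_⟩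
    · exact Function.minimalPeriod_pos_of_mem_periodicPts (σ.injective.mem_periodicPts v)
    · exact Function.iterate_mod_minimalPeriod_eq
  · rintro ⟨i, -, rfl⟩
    exact ⟨i, by rw [zpow_natCast, ← Equiv.Perm.iterate_eq_pow]⟩

theorem injOn_Ico_minimalPeriod {f : α → α} (v : α) :
    Set.InjOn (fun i => f^[i] v) (Set.Ico 0 (Function.minimalPeriod f v)) :=
  Function.iterate_injOn_Iio_minimalPeriod.mono Set.Ico_subset_Iio_self

theorem IsTwoFactorPerm.even_minimalPeriod (hσ : IsTwoFactorPerm G σ) (C : G.Coloring Bool)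
    (v : α) : Even (Function.minimalPeriod σ v) := by
  have hsemi : Function.Semiconj C σ not := fun w => Bool.eq_not_of_ne (C.valid (hσ.adj w)).symm
  by_contra hodd
  have hper := hsemi.iterate_right (Function.minimalPeriod σ v) v
  rw [Function.iterate_minimalPeriod,
    Bool.involutive_not.iterate_odd (Nat.not_even_iff_odd.1 hodd)] at hper
  exact Bool.not_ne_self _ hper.symm

theorem IsTwoFactorPerm.minimalPeriod_eq_six_or_eight_le [Finite α]
    (hσ : IsTwoFactorPerm G σ) (C : G.Coloring Bool) (h4 : ∀ v, σ^[4] v ≠ v) (v : α) :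
    Function.minimalPeriod σ v = 6 ∨ 8 ≤ Function.minimalPeriod σ v := by
  obtain ⟨k, hk⟩ := hσ.even_minimalPeriod C v
  have hpos := Function.minimalPeriod_pos_of_mem_periodicPts (σ.injective.mem_periodicPts v)
  have hiter : σ^[Function.minimalPeriod σ v] v = v := Function.iterate_minimalPeriod
  have h2 : Function.minimalPeriod σ v ≠ 2 := fun h => hσ.apply_apply_ne v (by rwa [h] at hiter)
  have h4 : Function.minimalPeriod σ v ≠ 4 := fun h => h4 v (by rwa [h] at hiter)
  lia

theorem IsTwoFactorPerm.hasShortPathPartition_sameCycle [Finite α] [G.LocallyFinite]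
    (hσ : IsTwoFactorPerm G σ) (C : G.Coloring Bool) (hdeg : ∀ v, G.degree v ≤ 3)
    (h4 : ∀ v, σ^[4] v ≠ v) (v : α) : HasShortPathPartition G {w | σ.SameCycle v w} := by
  have hadj u i : G.Adj (σ^[i] u) (σ^[i + 1] u) := by
    rw [Function.iterate_succ_apply']
    exact hσ.adj _
  rcases hσ.minimalPeriod_eq_six_or_eight_le C h4 v with h6 | h8
  · rw [setOf_sameCycle_eq_image_Ico]
    exact hasShortPathPartition_image_Ico_of_three_dvd C (hadj v) (injOn_Ico_minimalPeriod v)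
      (by simp [h6])
  obtain ⟨u, hvu, h8, hu⟩ : ∃ u, σ.SameCycle v u ∧ 8 ≤ Function.minimalPeriod σ u ∧
      ¬ G.Adj u (σ^[3] u) := by
    by_cases hv : G.Adj v (σ^[3] v)
    · have hper : Function.minimalPeriod σ (σ^[3] v) = Function.minimalPeriod σ v :=
        Function.minimalPeriod_apply_iterate (σ.injective.mem_periodicPts v) 3
      exact ⟨σ^[3] v, ⟨3, rfl⟩, h8.trans_eq hper.symm,
        not_adj_add_three_of_adj_add_three (i := 0) hdeg (hadj v) (injOn_Ico_minimalPeriod v)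
          (by lia) hv⟩
    · exact ⟨v, .refl _ _, h8, hv⟩
  have hcycle : {w | σ.SameCycle v w} = {w | σ.SameCycle u w} :=
    Set.ext fun w => ⟨hvu.symm.trans, hvu.trans⟩
  rw [hcycle, setOf_sameCycle_eq_image_Ico]
  exact hasShortPathPartition_image_Ico_of_not_adj C hdeg (hadj u) (injOn_Ico_minimalPeriod u) h8 hu

end Cycles

theorem bipartite_cubic_IPD_bound_general (G : SimpleGraph V) [G.LocallyFinite]
    (hbip : G.Colorable 2) (hcubic : G.IsRegularOfDegree 3) :
    ∃ D : Set (Set V), Setoid.IsPartition D ∧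
      (∀ P ∈ D, ∃ n ∈ Set.Icc 3 5, IsInducedPathOn G P n) ∧
      D.ncard ≤ Fintype.card V / 3 := by
  let C : G.Coloring Bool := hbip.toColoring (by simp)
  obtain ⟨σ, hσ, h4⟩ := exists_isTwoFactorPerm_forall_iterate_four_ne C hcubic
  obtain ⟨F, hF⟩ := hasShortPathPartition_univ_of_setoid (Equiv.Perm.SameCycle.setoid σ)
    (hσ.hasShortPathPartition_sameCycle C (fun v => (hcubic v).le) h4)
  refine ⟨F.parts, F.isPartition_parts, hF, ?_⟩
  refine (Nat.le_div_iff_mul_le three_pos).2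
    (ncard_mul_le_card_of_isPartition F.isPartition_parts fun P hP => ?_)
  obtain ⟨n, hn, hPn⟩ := hF P hP
  exact hn.1.trans_eq hPn.ncard_eq.symm

/-- every connected bipartite cubic graph of order n admits an IPD of at
most n/3 induced paths, i.e. ρ(G) ≤ n/3. -/
theorem bipartite_cubic_IPD_bound (G : SimpleGraph V) [DecidableRel G.Adj]
    (hconn : G.Connected) (hbip : G.Colorable 2)
    (hcubic : G.IsRegularOfDegree 3) :
    ∃ D : Set (Set V), Setoid.IsPartition D ∧
      (∀ P ∈ D, ∃ n, 2 ≤ n ∧ IsInducedPathOn G P n) ∧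
      D.ncard ≤ Fintype.card V / 3 := by
  obtain ⟨D, hD, hpaths, hcard⟩ := bipartite_cubic_IPD_bound_general G hbip hcubic
  exact ⟨D, hD, fun P hP => (hpaths P hP).imp fun n hn => ⟨by grind, hn.2⟩, hcard⟩
end
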